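/- arXiv:2206.05611 — 2 statements merged into one kernel-verified Lean document; each statement's English description precedes it below -/
import Mathlib

section
/- Let k be a field of characteristic zero, and let C = ⟨K ∪ H⟩ be the subgroup of the group of k-algebra automorphisms of k[x1,x2,x3] generated by K and H. Then C satisfies the strong Tits alternative: every subgroup of C either contains a nonabelian free subgroup or contains a solvable subgroup of finite index. -/
open MvPolynomial

/-- A group contains a nonabelian free subgroup if it has a subgroup isomorphic to the
free group on two generators. -/
def ContainsNonabelianFree (G : Type*) [Group G] : Prop :=
  ∃ K : Subgroup G, Nonempty (↥K ≃* FreeGroup (Fin 2))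

/-- A group is virtually solvable if it contains a solvable subgroup of finite index. -/
def IsVirtuallySolvable (G : Type*) [Group G] : Prop :=
  ∃ K : Subgroup G, K.FiniteIndex ∧ IsSolvable ↥K

/-- A group satisfies the strong Tits alternative if every subgroup contains a nonabelian
free subgroup or is virtually solvable. -/
def StrongTitsAlternative (G : Type*) [Group G] : Prop :=
  ∀ H : Subgroup G, ContainsNonabelianFree ↥H ∨ IsVirtuallySolvable ↥H

/-- Membership in the subgroup `K`: automorphisms of the form
`(a x₁ + b x₂ + P₁(x₃), a' x₁ + b' x₂ + P₂(x₃), c x₃ + d)` with `ab' - a'b ≠ 0`, `c ≠ 0`. -/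
def IsK (k : Type*) [Field k]
    (f : MvPolynomial (Fin 3) k ≃ₐ[k] MvPolynomial (Fin 3) k) : Prop :=
  ∃ (a b a' b' c d : k) (P₁ P₂ : MvPolynomial (Fin 3) k),
    a * b' - a' * b ≠ 0 ∧ c ≠ 0 ∧
    P₁ ∈ supported k ({2} : Set (Fin 3)) ∧ P₂ ∈ supported k ({2} : Set (Fin 3)) ∧
    f (X 0) = C a * X 0 + C b * X 1 + P₁ ∧
    f (X 1) = C a' * X 0 + C b' * X 1 + P₂ ∧
    f (X 2) = C c * X 2 + C d

/-- Membership in the subgroup `H`: automorphisms of the form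
`(a x₁ + P₁(x₂,x₃), b x₂ + P₂(x₃), c x₃ + d)` with `a, b, c ≠ 0`. -/
def IsH (k : Type*) [Field k]
    (f : MvPolynomial (Fin 3) k ≃ₐ[k] MvPolynomial (Fin 3) k) : Prop :=
  ∃ (a b c d : k) (P₁ P₂ : MvPolynomial (Fin 3) k),
    a ≠ 0 ∧ b ≠ 0 ∧ c ≠ 0 ∧
    P₁ ∈ supported k ({1, 2} : Set (Fin 3)) ∧ P₂ ∈ supported k ({2} : Set (Fin 3)) ∧
    f (X 0) = C a * X 0 + P₁ ∧
    f (X 1) = C b * X 1 + P₂ ∧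
    f (X 2) = C c * X 2 + C d

/-- The subgroup `C = ⟨K ∪ H⟩`. -/
noncomputable def Cgroup (k : Type*) [Field k] :
    Subgroup (MvPolynomial (Fin 3) k ≃ₐ[k] MvPolynomial (Fin 3) k) :=
  Subgroup.closure {f | IsK k f ∨ IsH k f}

/-! ### Groups with a free subgroup and virtually solvable groups -/

/-- A group contains a nonabelian free subgroup or is virtually solvable. -/
def TitsDichotomy (G : Type*) [Group G] : Prop :=
  ContainsNonabelianFree G ∨ IsVirtuallySolvable G

theorem containsNonabelianFree_iff {G : Type*} [Group G] :
    ContainsNonabelianFree G ↔ ∃ f : FreeGroup (Fin 2) →* G, Function.Injective f := by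
  constructor
  · rintro ⟨K, ⟨e⟩⟩
    exact ⟨K.subtype.comp e.symm.toMonoidHom, K.subtype_injective.comp e.symm.injective⟩
  · rintro ⟨f, hf⟩
    exact ⟨f.range, ⟨(MonoidHom.ofInjective hf).symm⟩⟩

theorem ContainsNonabelianFree.of_injective {G Q : Type*} [Group G] [Group Q] (f : G →* Q)
    (hf : Function.Injective f) (h : ContainsNonabelianFree G) : ContainsNonabelianFree Q := by
  obtain ⟨u, hu⟩ := containsNonabelianFree_iff.1 h
  exact containsNonabelianFree_iff.2 ⟨f.comp u, hf.comp hu⟩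

theorem ContainsNonabelianFree.of_surjective {G Q : Type*} [Group G] [Group Q] (f : G →* Q)
    (hf : Function.Surjective f) (h : ContainsNonabelianFree Q) : ContainsNonabelianFree G := by
  obtain ⟨u, hu⟩ := containsNonabelianFree_iff.1 h
  choose s hs using hf
  refine containsNonabelianFree_iff.2 ⟨FreeGroup.lift fun i => s (u (FreeGroup.of i)), ?_⟩
  have : f.comp (FreeGroup.lift fun i => s (u (FreeGroup.of i))) = u := by
    ext i
    simp [hs]
  refine Function.Injective.of_comp (f := f) ?_
  rw [← MonoidHom.coe_comp, this]
  exact hu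

theorem isSolvable_of_isSolvable_ker {G Q : Type*} [Group G] [Group Q] (f : G →* Q)
    (hk : Group.IsSolvable f.ker) (hQ : Group.IsSolvable Q) : Group.IsSolvable G :=
  Group.isSolvable_of_ker_le_range f.ker.subtype f (by simp)

theorem isSolvable_ker_of_injective {A B G Q : Type*} [Group A] [Group B] [Group G] [Group Q]
    {g : A →* B} {f : G →* Q} (u : A →* G) (hu : Function.Injective u)
    (h : ∀ x, g x = 1 → f (u x) = 1) (hf : Group.IsSolvable f.ker) : Group.IsSolvable g.ker := by
  have hmem : ∀ x, (u.comp g.ker.subtype) x ∈ f.ker := fun x => h x (g.mem_ker.1 x.2)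
  exact Group.isSolvable_of_isSolvable_injective (f := (u.comp g.ker.subtype).codRestrict f.ker hmem)
    ((MonoidHom.injective_codRestrict _ _ hmem).2 (hu.comp g.ker.subtype_injective))

theorem IsVirtuallySolvable.of_surjective {G Q : Type*} [Group G] [Group Q] (f : G →* Q)
    (hf : Function.Surjective f) (h : IsVirtuallySolvable G) : IsVirtuallySolvable Q := by
  obtain ⟨K, hK, hs⟩ := h
  refine ⟨K.map f, ⟨?_⟩, ?_⟩
  · exact ne_zero_of_dvd_ne_zero hK.index_ne_zero (K.index_map_dvd hf)
  · have : Group.IsSolvable K := hs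
    exact Group.isSolvable_of_surjective (f.subgroupMap_surjective K)

theorem IsVirtuallySolvable.of_isSolvable_ker {G Q : Type*} [Group G] [Group Q] (f : G →* Q)
    (hf : Function.Surjective f) (hk : Group.IsSolvable f.ker) (h : IsVirtuallySolvable Q) :
    IsVirtuallySolvable G := by
  obtain ⟨K, hK, hs⟩ := h
  refine ⟨K.comap f, ⟨?_⟩, ?_⟩
  · rw [K.index_comap_of_surjective hf]
    exact hK.index_ne_zero
  · refine isSolvable_of_isSolvable_ker (f.subgroupComap K) ?_ hs
    exact isSolvable_ker_of_injective (K.comap f).subtype (Subgroup.subtype_injective _)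
      (fun x hx => congrArg Subtype.val hx) hk

theorem IsVirtuallySolvable.of_isSolvable {G : Type*} [Group G] (h : Group.IsSolvable G) :
    IsVirtuallySolvable G :=
  ⟨⊤, inferInstance, Group.isSolvable_of_isSolvable_injective (Subgroup.subtype_injective ⊤)⟩

theorem IsVirtuallySolvable.of_finite {G : Type*} [Group G] [Finite G] :
    IsVirtuallySolvable G :=
  ⟨⊥, inferInstance, (inferInstance : Group.IsSolvable (⊥ : Subgroup G))⟩

theorem TitsDichotomy.of_isSolvable_ker {G Q : Type*} [Group G] [Group Q] (f : G →* Q)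
    (hk : Group.IsSolvable f.ker) (h : TitsDichotomy f.range) : TitsDichotomy G := by
  refine h.imp (.of_surjective _ f.rangeRestrict_surjective)
    (.of_isSolvable_ker _ f.rangeRestrict_surjective ?_)
  rwa [MonoidHom.ker_rangeRestrict]

theorem TitsDichotomy.of_mulEquiv {G Q : Type*} [Group G] [Group Q] (e : G ≃* Q)
    (h : TitsDichotomy G) : TitsDichotomy Q :=
  h.imp (.of_injective e.toMonoidHom e.injective) (.of_surjective e.toMonoidHom e.surjective)

theorem TitsDichotomy.of_map_conj {G : Type*} [Group G] {S : Subgroup G} (g : G)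
    (h : TitsDichotomy (S.map (MulAut.conj g).toMonoidHom)) : TitsDichotomy S :=
  h.of_mulEquiv (S.equivMapOfInjective _ (MulAut.conj g).injective).symm

theorem StrongTitsAlternative.of_isSolvable_ker {G Q : Type*} [Group G] [Group Q] (f : G →* Q)
    (hk : Group.IsSolvable f.ker) (h : StrongTitsAlternative Q) : StrongTitsAlternative G := by
  intro S
  exact TitsDichotomy.of_isSolvable_ker (f.comp S.subtype)
    (isSolvable_ker_of_injective S.subtype S.subtype_injective (fun _ hx => hx) hk) (h _)

/-- The strong Tits alternative passes to quotients by torsion subgroups. -/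
theorem StrongTitsAlternative.of_surjective {G Q : Type*} [Group G] [Group Q] (f : G →* Q)
    (hf : Function.Surjective f) (hk : ∀ x, f x = 1 → ∃ n ≠ 0, x ^ n = 1)
    (h : StrongTitsAlternative G) : StrongTitsAlternative Q := by
  intro S
  have hs : Function.Surjective (f.subgroupComap S) := fun y => by
    obtain ⟨x, hx⟩ := hf y
    exact ⟨⟨x, by simp [Subgroup.mem_comap, hx]⟩, Subtype.ext hx⟩
  refine (h (S.comap f)).imp (fun h => ?_) (.of_surjective _ hs)
  obtain ⟨u, hu⟩ := containsNonabelianFree_iff.1 h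
  refine containsNonabelianFree_iff.2 ⟨(f.subgroupComap S).comp u, ?_⟩
  rw [injective_iff_map_eq_one]
  intro w hw
  obtain ⟨n, hn, hwn⟩ := hk (u w) (congrArg Subtype.val hw)
  have : u (w ^ n) = u 1 := Subtype.ext (by simpa using hwn)
  exact (pow_eq_one_iff_left hn).1 (hu this)

theorem exists_finset_mem_map_derivedSeries {G : Type*} [Group G] (n : ℕ) {x : G}
    (hx : x ∈ derivedSeries G n) : ∃ F : Finset G,
      x ∈ (derivedSeries (Subgroup.closure (F : Set G)) n).map (Subgroup.subtype _) := by
  classical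
  have mono : ∀ {F F' : Finset G} {n : ℕ}, F ⊆ F' →
      (derivedSeries (Subgroup.closure (F : Set G)) n).map (Subgroup.subtype _) ≤
        (derivedSeries (Subgroup.closure (F' : Set G)) n).map (Subgroup.subtype _) := by
    intro F F' n h
    have hle : Subgroup.closure (F : Set G) ≤ Subgroup.closure (F' : Set G) :=
      Subgroup.closure_mono (by exact_mod_cast h)
    have := map_derivedSeries_le_derivedSeries (Subgroup.inclusion hle) n
    rw [← Subgroup.subtype_comp_inclusion hle, ← Subgroup.map_map]
    exact Subgroup.map_mono this
  induction n generalizing x with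
  | zero => exact ⟨{x}, ⟨⟨x, Subgroup.subset_closure (by simp)⟩, by simp, rfl⟩⟩
  | succ n ih =>
    rw [derivedSeries_succ, Subgroup.commutator_def] at hx
    induction hx using Subgroup.closure_induction with
    | mem x hx =>
      obtain ⟨a, ha, b, hb, rfl⟩ := hx
      obtain ⟨F, hF⟩ := ih ha
      obtain ⟨F', hF'⟩ := ih hb
      refine ⟨F ∪ F', ?_⟩
      rw [derivedSeries_succ, Subgroup.map_commutator]
      exact Subgroup.commutator_mem_commutator (mono Finset.subset_union_left hF)
        (mono Finset.subset_union_right hF')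
    | one => exact ⟨∅, one_mem _⟩
    | mul x y _ _ hx hy =>
      obtain ⟨F, hF⟩ := hx
      obtain ⟨F', hF'⟩ := hy
      exact ⟨F ∪ F', mul_mem (mono Finset.subset_union_left hF)
        (mono Finset.subset_union_right hF')⟩
    | inv x _ hx =>
      obtain ⟨F, hF⟩ := hx
      exact ⟨F, inv_mem hF⟩

theorem isSolvable_of_finitely_generated {G : Type*} [Group G] (n : ℕ)
    (h : ∀ F : Finset G, derivedSeries (Subgroup.closure (F : Set G)) n = ⊥) :
    Group.IsSolvable G := by
  refine ⟨⟨n, ?_⟩⟩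
  rw [eq_bot_iff]
  intro x hx
  obtain ⟨F, hF⟩ := exists_finset_mem_map_derivedSeries n hx
  simpa [h F] using hF

theorem derivedSeries_eq_bot_of_injective {G Q : Type*} [Group G] [Group Q] {f : G →* Q}
    (hf : Function.Injective f) {n : ℕ} (h : derivedSeries Q n = ⊥) : derivedSeries G n = ⊥ := by
  have := map_derivedSeries_le_derivedSeries f n
  rwa [h, le_bot_iff, (Subgroup.map_eq_bot_iff_of_injective _ hf)] at this


open scoped Pointwise in
theorem containsNonabelianFree_of_ping_pong {G α : Type*} [Group G] [MulAction G α]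
    (a : Fin 2 → G) (X Y : Fin 2 → Set α) (hne : ∀ i, (X i).Nonempty)
    (hXX : Pairwise (Function.onFun Disjoint X)) (hYY : Pairwise (Function.onFun Disjoint Y))
    (hXY : ∀ i j, Disjoint (X i) (Y j)) (hX : ∀ i, ∀ y ∉ Y i, a i • y ∈ X i)
    (hY : ∀ i, ∀ y ∉ X i, (a i)⁻¹ • y ∈ Y i) : ContainsNonabelianFree G := by
  have hinj := FreeGroup.injective_lift_of_ping_pong (fun i : ULift (Fin 2) => a i.down)
    (fun i => X i.down) (fun i => Y i.down) (fun i => hne _)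
    (fun i j hij => hXX fun h => hij (ULift.ext _ _ h))
    (fun i j hij => hYY fun h => hij (ULift.ext _ _ h)) (fun i j => hXY _ _)
    (by rintro i _ ⟨y, hy, rfl⟩; exact hX _ _ hy) (by rintro i _ ⟨y, hy, rfl⟩; exact hY _ _ hy)
  exact containsNonabelianFree_iff.2
    ⟨(FreeGroup.lift _).comp (FreeGroup.freeGroupCongr Equiv.ulift.symm).toMonoidHom,
      hinj.comp (MulEquiv.injective _)⟩

/-! ### Groups acting on trees, through the metric of the tree -/

/-- `d` is the path metric of a bipartite tree whose two classes of vertices are told apart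
by `τ`. -/
structure IsTreeMetric {V : Type*} (d : V → V → ℕ) (τ : V → ℕ) : Prop where
  self : ∀ x, d x x = 0
  eq_of_dist : ∀ {x y}, d x y = 0 → x = y
  comm : ∀ x y, d x y = d y x
  triangle : ∀ x y z, d x z ≤ d x y + d y z
  parity : ∀ x y, d x y % 2 = (τ x + τ y) % 2
  type_lt : ∀ x, τ x < 2
  step : ∀ {x y}, x ≠ y → ∃ z, d x z = 1 ∧ d z y + 1 = d x y
  four_point : ∀ x y z w, d x y + d z w ≤ max (d x z + d y w) (d x w + d y z)

namespace IsTreeMetric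

open Filter

variable {V : Type*} {d : V → V → ℕ} {τ : V → ℕ} (T : IsTreeMetric d τ)

include T

theorem dist_add_le_of_dist_lt {u v : ℕ → V} {t : ℕ} (hu : ∀ i j, d (u i) (u (i + j)) = j * t)
    (hv : ∀ i j, d (v i) (v (i + j)) = j * t) {n : ℕ} (hn : d (u 0) (v 0) < d (u n) (v n))
    (j : ℕ) : d (u n) (v n) + 2 * (j * t) ≤ d (u (n + j)) (v (n + j)) := by
  have e : (n + j) * t = n * t + j * t := by ring
  have u1 := hu 0 n
  have u2 := hu n j
  have u3 := hu 0 (n + j)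
  have v1 := hv 0 n
  have v2 := hv n j
  have v3 := hv 0 (n + j)
  rw [zero_add] at u1 u3 v1 v3
  rw [e] at u3 v3
  have a1 := T.triangle (u 0) (v 0) (v n)
  have a2 := T.triangle (u n) (u 0) (v 0)
  have a3 := T.four_point (u n) (v n) (u 0) (u (n + j))
  have a4 := T.four_point (u n) (v n) (v 0) (v (n + j))
  have a5 := T.four_point (u (n + j)) (v n) (u n) (v (n + j))
  simp only [T.comm (u n) (u 0), T.comm (v n) (u 0), T.comm (v n) (v 0),
    T.comm (v n) (u (n + j)), T.comm (u (n + j)) (u n), T.comm (v n) (u n)] at *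
  omega

variable {Γ : Type*} [Group Γ] [MulAction Γ V]

theorem containsNonabelianFree_of_dist (hd : ∀ (g : Γ) x y, d (g • x) (g • y) = d x y)
    {a b : Γ} {x : V}
    (h : ∀ p q, (p = a • x ∧ q = a⁻¹ • x) ∨ (p = b • x ∧ q = b⁻¹ • x) ∨
      ((p = a • x ∨ p = a⁻¹ • x) ∧ (q = b • x ∨ q = b⁻¹ • x)) →
      d x p < d p q ∧ d x q < d p q) : ContainsNonabelianFree Γ := by
  have key : ∀ p q y, (d x p < d p q ∧ d x q < d p q) → d y p ≤ d y x → d y q ≤ d y x → False := by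
    intro p q y hpq hp hq
    have := T.four_point p q y x
    have := T.comm p y
    have := T.comm q y
    have := T.comm p x
    have := T.comm q x
    omega
  refine containsNonabelianFree_of_ping_pong ![a, b] (fun i => {y | d y (![a, b] i • x) ≤ d y x})
    (fun i => {y | d y ((![a, b] i)⁻¹ • x) < d y x}) ?_ ?_ ?_ ?_ ?_ ?_
  · intro i
    refine ⟨![a, b] i • x, ?_⟩
    simp [T.self]
  · intro i j hij
    rw [Function.onFun, Set.disjoint_left]
    intro y h1 h2
    have := key (a • x) (b • x) y (h _ _ (by simp))
    fin_cases i <;> fin_cases j <;> simp at hij h1 h2 <;> tauto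
  · intro i j hij
    rw [Function.onFun, Set.disjoint_left]
    intro y h1 h2
    have := key (a⁻¹ • x) (b⁻¹ • x) y (h _ _ (by simp))
    fin_cases i <;> fin_cases j <;> simp at hij h1 h2 <;>
      exact this (by omega) (by omega)
  · intro i j
    rw [Set.disjoint_left]
    intro y h1 h2
    have k1 := key (a • x) (a⁻¹ • x) y (h _ _ (by simp))
    have k2 := key (b • x) (b⁻¹ • x) y (h _ _ (by simp))
    have k3 := key (a • x) (b⁻¹ • x) y (h _ _ (by simp))
    have k4 := key (a⁻¹ • x) (b • x) y (h _ _ (by simp))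
    fin_cases i <;> fin_cases j <;> simp at h1 h2
    · exact k1 h1 h2.le
    · exact k3 h1 h2.le
    · exact k4 h2.le h1
    · exact k2 h1 h2.le
  · intro i y hy
    simp only [Set.mem_ofPred_eq, not_lt] at hy ⊢
    have e := hd (![a, b] i) y ((![a, b] i)⁻¹ • x)
    rw [smul_inv_smul] at e
    rw [hd, e]
    exact hy
  · intro i y hy
    simp only [Set.mem_ofPred_eq, not_le] at hy ⊢
    have e := hd (![a, b] i)⁻¹ y (![a, b] i • x)
    rw [inv_smul_smul] at e
    rw [hd, e]
    exact hy

theorem eq_of_adj_of_dist {x y z w : V} (hz : d x z = 1) (hz' : d z y + 1 = d x y)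
    (hw : d x w = 1) (hw' : d w y + 1 = d x y) : z = w := by
  apply T.eq_of_dist
  have := T.four_point z w x y
  have := T.comm z x
  have := T.comm w x
  omega

theorem dist_eq_add_of_ne {x y z w w' : V} (hw : d x w = 1) (hw' : d w y + 1 = d x y)
    (hv : d x w' = 1) (hv' : d w' z + 1 = d x z) (hne : w ≠ w') : d y z = d x y + d x z := by
  have h0 : d w w' ≠ 0 := fun h => hne (T.eq_of_dist h)
  have := T.four_point w w' x y
  have := T.four_point w y w' z
  have := T.four_point w z w' y
  have := T.four_point w' y w z
  have := T.four_point w w' y z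
  have := T.four_point x y w z
  have := T.four_point x z w' y
  have := T.triangle y x z
  have := T.comm w x
  have := T.comm w' x
  have := T.comm y x
  have := T.comm w' y
  have := T.comm w y
  have := T.comm w' w
  have := T.comm w z
  have := T.comm w' z
  have := T.comm z x
  have := T.comm z y
  have := T.parity y z
  have := T.parity x y
  have := T.parity x z
  have := T.parity w w'
  have := T.parity w x
  have := T.parity w' x
  omega

/-- A group element without fixed vertex translates along an axis. -/
theorem exists_axis (hd : ∀ (g : Γ) x y, d (g • x) (g • y) = d x y)
    (hτ : ∀ (g : Γ) x, τ (g • x) = τ x) [Nonempty V] {g : Γ} (hg : ∀ x : V, g • x ≠ x) :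
    ∃ (x : V) (t : ℕ), 0 < t ∧ ∀ n : ℕ, d x (g ^ n • x) = n * t := by
  obtain ⟨x, hx⟩ : ∃ x : V, ∀ y, d x (g • x) ≤ d y (g • y) := by
    obtain ⟨_, ⟨x, rfl⟩, hx⟩ := WellFounded.has_min (wellFounded_lt (α := ℕ))
      (Set.range fun x : V => d x (g • x)) (Set.range_nonempty _)
    exact ⟨x, fun y => not_lt.1 (hx _ ⟨y, rfl⟩)⟩
  obtain ⟨t, ht⟩ : ∃ t, d x (g • x) = t := ⟨_, rfl⟩
  have ht0 : t ≠ 0 := fun h => hg x (T.eq_of_dist (ht.trans h)).symm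
  have htt : d x (g • g • x) = 2 * t := by
    obtain ⟨z, hz, hz'⟩ := T.step (hg x).symm
    have h0 := hx z
    have h1 := T.four_point x (g • z) (g • x) (g • g • x)
    have h2 := T.four_point z (g • z) x (g • x)
    have h3 := T.triangle x (g • x) (g • g • x)
    have p1 := T.parity x (g • x)
    have p2 := T.parity x (g • g • x)
    have := T.comm z x
    have := T.comm (g • z) (g • x)
    have := T.comm (g • z) x
    simp only [hτ, hd] at *
    omega
  have hmul : ∀ m : ℕ, d x (g ^ (m + 1) • x) = (m + 1) * t ∧
      d x (g ^ (m + 2) • x) = (m + 2) * t := by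
    intro m
    induction m with
    | zero => simp [ht, pow_two, mul_smul, htt]
    | succ m ih =>
      refine ⟨ih.2, ?_⟩
      have e1 : d (g • x) (g ^ (m + 2) • x) = (m + 1) * t := by
        rw [pow_succ', mul_smul, hd, ih.1]
      have e2 : d (g • x) (g ^ (m + 1 + 2) • x) = (m + 2) * t := by
        rw [pow_succ', mul_smul, hd, ih.2]
      have e3 : d (g ^ (m + 2) • x) (g ^ (m + 1 + 2) • x) = t := by
        rw [show m + 1 + 2 = (m + 2) + 1 by ring, pow_succ g (m + 2), mul_smul, hd, ht]
      have h1 := T.four_point x (g ^ (m + 2) • x) (g • x) (g ^ (m + 1 + 2) • x)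
      have h2 := T.triangle x (g • x) (g ^ (m + 1 + 2) • x)
      have e4 := T.comm (g ^ (m + 2) • x) (g • x)
      rw [ih.2, e2, e3, ht] at h1
      rw [show (m + 1 + 2) * t = m * t + 3 * t by ring]
      rw [show (m + 2) * t = m * t + 2 * t by ring] at *
      rw [show (m + 1) * t = m * t + t by ring] at *
      omega
  refine ⟨x, t, Nat.pos_of_ne_zero ht0, fun n => ?_⟩
  rcases n with _ | n
  · simp [T.self]
  · exact (hmul n).1

end IsTreeMetric

namespace IsTreeMetric

open Filter
open scoped Pointwise commutatorElement

variable {V : Type*} {d : V → V → ℕ} {τ : V → ℕ} (T : IsTreeMetric d τ)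
  {Γ : Type*} [Group Γ] [MulAction Γ V]

include T

theorem derivedSeries_eq_bot_of_fixed (hd : ∀ (g : Γ) x y, d (g • x) (g • y) = d x y) {ℓ : ℕ}
    (hB : ∀ y : V, τ y = 1 → derivedSeries (MulAction.stabilizer Γ y) ℓ = ⊥)
    {S : Type*} [Group S] {u : S →* Γ} (hu : Function.Injective u) {x y : V} (hxy : x ≠ y)
    (hx : ∀ s, u s • x = x) (hy : ∀ s, u s • y = y) : derivedSeries S ℓ = ⊥ := by
  obtain ⟨z, hz, hz'⟩ := T.step hxy
  have hfz : ∀ s, u s • z = z := by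
    intro s
    have h1 := hd (u s) x z
    have h2 := hd (u s) z y
    rw [hx s] at h1
    rw [hy s] at h2
    exact T.eq_of_adj_of_dist (h1.trans hz) (by rw [h2]; exact hz') hz hz'
  have key : ∀ w, τ w = 1 → (∀ s, u s • w = w) → derivedSeries S ℓ = ⊥ := fun w hw hf =>
    derivedSeries_eq_bot_of_injective (f := u.codRestrict (MulAction.stabilizer Γ w) hf)
      ((MonoidHom.injective_codRestrict _ _ hf).2 hu) (hB w hw)
  have hp := T.parity x z
  have h1 := T.type_lt x
  have h2 := T.type_lt z
  obtain h | h : τ x = 1 ∨ τ z = 1 := by omega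
  · exact key x h hx
  · exact key z h hfz

/-- A group all of whose elements move a geodesic ray at bounded distance from itself is
solvable. -/
theorem isSolvable_of_ray (hd : ∀ (g : Γ) x y, d (g • x) (g • y) = d x y) {ℓ : ℕ}
    (hB : ∀ y : V, τ y = 1 → derivedSeries (MulAction.stabilizer Γ y) ℓ = ⊥)
    {x : ℕ → V} {t : ℕ} (ht : 0 < t) (hx : ∀ i j, d (x i) (x (i + j)) = j * t)
    (hbd : ∀ h : Γ, ∃ C, ∀ n, d (h • x n) (x n) ≤ C) : Group.IsSolvable Γ := by
  let F : Subgroup Γ :=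
    { carrier := {h | ∀ᶠ n in atTop, h • x n = x n}
      one_mem' := by simp
      mul_mem' := by
        intro a b ha hb
        change ∀ᶠ n in atTop, a • x n = x n at ha
        change ∀ᶠ n in atTop, b • x n = x n at hb
        change ∀ᶠ n in atTop, (a * b) • x n = x n
        filter_upwards [ha, hb] with n h1 h2
        rw [mul_smul, h2, h1]
      inv_mem' := by
        intro a ha
        change ∀ᶠ n in atTop, a • x n = x n at ha
        change ∀ᶠ n in atTop, a⁻¹ • x n = x n
        filter_upwards [ha] with n h1
        rw [inv_smul_eq_iff, h1] }
  have hF : Group.IsSolvable F := by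
    refine isSolvable_of_finitely_generated ℓ fun S => ?_
    have h1 : ∀ᶠ n in atTop, ∀ s ∈ S, (s : Γ) • x n = x n :=
      (Filter.eventually_all_finset S).2 fun s _ => s.2
    have h2 : ∀ᶠ n in atTop, ∀ s ∈ S, (s : Γ) • x (n + 1) = x (n + 1) :=
      (tendsto_add_atTop_nat 1).eventually h1
    obtain ⟨n, h1, h2⟩ := (h1.and h2).exists
    have hcl : ∀ y : V, (∀ s ∈ S, (s : Γ) • y = y) →
        ∀ s : Subgroup.closure (S : Set F), ((s : F) : Γ) • y = y := by
      intro y hy s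
      have : Subgroup.closure (S : Set F) ≤ MulAction.stabilizer F y :=
        (Subgroup.closure_le _).2 fun s hs => hy s hs
      exact this s.2
    refine T.derivedSeries_eq_bot_of_fixed hd hB
      (u := F.subtype.comp (Subgroup.closure (S : Set F)).subtype)
      (F.subtype_injective.comp (Subgroup.subtype_injective _)) (x := x n) (y := x (n + 1)) ?_
      (hcl _ h1) (hcl _ h2)
    intro h
    have := hx n 1
    rw [← h, T.self] at this
    omega
  have hstar : ∀ (h : Γ) (y z : V), ∀ᶠ m in atTop,
      d (h • y) (x m) + d z (x m) = d (h • z) (x m) + d y (x m) := by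
    intro h y z
    obtain ⟨C, hC⟩ := hbd h
    filter_upwards [eventually_ge_atTop (C + d (h • y) (h • z) + d (h • y) (x 0) +
      d (h • z) (x 0) + d y (x 0) + d z (x 0) + 1)] with m hm
    have hm' : m ≤ m * t := Nat.le_mul_of_pos_right m ht
    have e := hx 0 m
    rw [zero_add] at e
    have c := hC m
    have a1 := T.four_point (h • y) (x m) (h • z) (h • x m)
    have a2 := T.four_point (h • y) (h • x m) (h • z) (x m)
    have b1 := T.triangle (x 0) y (x m)
    have b2 := T.triangle (x 0) z (x m)
    have b3 := T.triangle (x 0) (h • y) (x m)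
    have b4 := T.triangle (x 0) (h • z) (x m)
    have c1 := hd h y (x m)
    have c2 := hd h z (x m)
    have c3 := T.comm (x m) (h • x m)
    have c4 := T.comm (x m) (h • z)
    have c5 := T.comm (h • x m) (h • z)
    have c6 := T.comm (x 0) y
    have c7 := T.comm (x 0) z
    have c8 := T.comm (x 0) (h • y)
    have c9 := T.comm (x 0) (h • z)
    omega
  have hcomm : ∀ (h k : Γ) (y : V), ∀ᶠ m in atTop, d (⁅h, k⁆ • y) (x m) = d y (x m) := by
    intro h k y
    filter_upwards [hstar h (k • h⁻¹ • k⁻¹ • y) (h⁻¹ • k⁻¹ • y),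
      hstar k (h⁻¹ • k⁻¹ • y) (k⁻¹ • y)] with m h1 h2
    rw [smul_inv_smul] at h1 h2
    rw [commutatorElement_def, mul_smul, mul_smul, mul_smul]
    omega
  have hle : commutator Γ ≤ F := by
    rw [commutator_def, Subgroup.commutator_le]
    intro h _ k _
    change ∀ᶠ n in atTop, ⁅h, k⁆ • x n = x n
    filter_upwards [hcomm h k (⁅h, k⁆⁻¹ • x 0)] with n hn
    rw [smul_inv_smul] at hn
    obtain ⟨m, h1, h2⟩ := ((hcomm h k (x n)).and (eventually_ge_atTop n)).exists
    obtain ⟨j, rfl⟩ := Nat.exists_eq_add_of_le h2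
    apply T.eq_of_dist
    have e1 := hx 0 n
    have e2 := hx 0 (n + j)
    rw [zero_add] at e1 e2
    rw [hx] at h1
    have e3 := hd ⁅h, k⁆ (⁅h, k⁆⁻¹ • x 0) (x n)
    rw [smul_inv_smul] at e3
    have := T.four_point (⁅h, k⁆ • x n) (x n) (x 0) (x (n + j))
    rw [hx, h1, T.comm _ (x 0), T.comm (x n) (x 0), e2, e3, ← hn, e1] at this
    rw [add_mul] at this
    omega
  refine isSolvable_of_isSolvable_ker (Abelianization.of (G := Γ)) ?_
    (Group.isSolvable_of_comm mul_comm)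
  rw [Abelianization.ker_of]
  exact Group.isSolvable_of_isSolvable_injective (Subgroup.inclusion_injective hle)

/-- A group with an element that fixes no vertex contains a free subgroup or is virtually
solvable. -/
theorem titsDichotomy_of_forall_ne (hd : ∀ (g : Γ) x y, d (g • x) (g • y) = d x y)
    (hτ : ∀ (g : Γ) x, τ (g • x) = τ x) {ℓ : ℕ}
    (hB : ∀ y : V, τ y = 1 → derivedSeries (MulAction.stabilizer Γ y) ℓ = ⊥) [Nonempty V]
    {g : Γ} (hg : ∀ x : V, g • x ≠ x) : TitsDichotomy Γ := by
  obtain ⟨x, t, ht, hx⟩ := T.exists_axis hd hτ hg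
  let s : Bool → Γ := fun i => bif i then g else g⁻¹
  have hs : ∀ i n, d x (s i ^ n • x) = n * t := by
    intro i n
    cases i
    · have := hd (g ^ n) x (g⁻¹ ^ n • x)
      rw [smul_smul (g ^ n), inv_pow, mul_inv_cancel, one_smul, T.comm, hx] at this
      simpa [s] using this.symm
    · exact hx n
  have hs' : ∀ i m n, d (s i ^ m • x) (s i ^ (m + n) • x) = n * t := by
    intro i m n
    rw [pow_add, mul_smul, hd, hs]
  let E : Bool → Subgroup Γ := fun i =>
    { carrier := {h | ∃ C, ∀ n, d (h • s i ^ n • x) (s i ^ n • x) ≤ C}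
      one_mem' := ⟨0, by simp [T.self]⟩
      mul_mem' := by
        rintro a b ⟨C, hC⟩ ⟨D, hD⟩
        refine ⟨D + C, fun n => ?_⟩
        have := T.triangle ((a * b) • s i ^ n • x) (a • s i ^ n • x) (s i ^ n • x)
        rw [mul_smul a b, hd a] at this
        rw [mul_smul a b]
        exact this.trans (add_le_add (hD n) (hC n))
      inv_mem' := by
        rintro a ⟨C, hC⟩
        refine ⟨C, fun n => ?_⟩
        rw [← hd a, smul_inv_smul, T.comm]
        exact hC n }
  by_cases hcov : ∃ h : Γ, ∀ i j C, ∃ n, C < d (h • s j ^ n • x) (s i ^ n • x)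
  · left
    obtain ⟨h, hh⟩ := hcov
    have h1 : ∀ i j, ∃ n₀, ∀ m ≥ n₀,
        2 * (m * t) ≤ d (h • s j ^ m • x) (s i ^ m • x) + 2 * (n₀ * t) := by
      intro i j
      obtain ⟨n, hn⟩ := hh i j (d (h • s j ^ 0 • x) (s i ^ 0 • x))
      refine ⟨n, fun m hm => ?_⟩
      obtain ⟨k, rfl⟩ := Nat.exists_eq_add_of_le hm
      have := T.dist_add_le_of_dist_lt (u := fun n => h • s j ^ n • x) (v := fun n => s i ^ n • x)
        (fun a b => by rw [hd, hs']) (hs' i) hn k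
      rw [add_mul]
      omega
    choose n hn using h1
    have hfin : ∃ M, ∀ i j, n i j ≤ M :=
      ⟨n true true + n true false + n false true + n false false, by
        intro i j
        cases i <;> cases j <;> omega⟩
    obtain ⟨M, hM⟩ := hfin
    obtain ⟨c, hc⟩ : ∃ c, d x (h • x) = c := ⟨_, rfl⟩
    obtain ⟨N, hN⟩ : ∃ N, N = 2 * M + 4 * c + 1 := ⟨_, rfl⟩
    have hNt : 2 * (M * t) + 4 * c + 1 ≤ N * t := by
      have h4 : 4 * c ≤ (4 * c) * t := Nat.le_mul_of_pos_right _ ht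
      calc 2 * (M * t) + 4 * c + 1 ≤ 2 * (M * t) + (4 * c) * t + t := by omega
        _ = N * t := by rw [hN]; ring
    have hfar : ∀ i j, 2 * (N * t) ≤ d (h • s j ^ N • x) (s i ^ N • x) + 2 * (M * t) := by
      intro i j
      have := hn i j N (by have := hM i j; omega)
      have := Nat.mul_le_mul_right t (hM i j)
      omega
    have hconj : ∀ j, d (h • s j ^ N • x) (h • s j ^ N • h⁻¹ • x) = c := by
      intro j
      rw [hd, hd, ← hd h, smul_inv_smul, T.comm, hc]
    have hop : d (s true ^ N • x) (s false ^ N • x) = 2 * (N * t) := by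
      have := hs true (N + N)
      rw [T.comm, ← hd (s true ^ N), smul_smul, smul_smul, ← pow_add,
        show s true ^ N * s false ^ N = 1 by simp [s], one_smul, this]
      ring
    have near : ∀ j, d x (h • s j ^ N • h⁻¹ • x) ≤ N * t + 2 * c := by
      intro j
      have h1 := T.triangle x (h • x) (h • s j ^ N • h⁻¹ • x)
      have h2 := T.triangle (h • x) (h • s j ^ N • x) (h • s j ^ N • h⁻¹ • x)
      rw [hconj, hd h x (s j ^ N • x), hs] at h2
      omega
    have far : ∀ i j, 2 * (N * t) ≤ d (s i ^ N • x) (h • s j ^ N • h⁻¹ • x) + 2 * (M * t) + c := by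
      intro i j
      have h1 := T.triangle (h • s j ^ N • x) (h • s j ^ N • h⁻¹ • x) (s i ^ N • x)
      have h2 := hfar i j
      rw [hconj, T.comm (h • s j ^ N • h⁻¹ • x) (s i ^ N • x)] at h1
      omega
    have farr : 2 * (N * t) ≤
        d (h • s true ^ N • h⁻¹ • x) (h • s false ^ N • h⁻¹ • x) + 2 * c := by
      have h1 := T.triangle (h • s true ^ N • x) (h • s true ^ N • h⁻¹ • x) (h • s false ^ N • x)
      have h2 := T.triangle (h • s true ^ N • h⁻¹ • x) (h • s false ^ N • h⁻¹ • x)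
        (h • s false ^ N • x)
      rw [hconj, hd, hop] at h1
      rw [T.comm (h • s false ^ N • h⁻¹ • x), hconj] at h2
      omega
    have ea : (s true ^ N)⁻¹ = s false ^ N := by simp [s]
    refine T.containsNonabelianFree_of_dist hd (a := s true ^ N) (b := h * s true ^ N * h⁻¹)
      (x := x) ?_
    have eb : (h * s true ^ N * h⁻¹)⁻¹ • x = h • s false ^ N • h⁻¹ • x := by
      rw [← ea]
      simp [mul_smul]
    rw [eb, ea, mul_smul, mul_smul]
    have k1 := hs true N
    have k2 := hs false N
    have k3 := near true
    have k4 := near false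
    have k5 := far true true
    have k6 := far true false
    have k7 := far false true
    have k8 := far false false
    rintro p q (⟨rfl, rfl⟩ | ⟨rfl, rfl⟩ | ⟨rfl | rfl, rfl | rfl⟩) <;> omega
  · right
    push Not at hcov
    have hcos : ∀ i j, ∃ h₀ : Γ, ∀ h : Γ, (∃ C, ∀ n, d (h • s j ^ n • x) (s i ^ n • x) ≤ C) →
        h ∈ h₀ • (E j : Set Γ) := by
      intro i j
      by_cases hne : ∃ h : Γ, ∃ C, ∀ n, d (h • s j ^ n • x) (s i ^ n • x) ≤ C
      · obtain ⟨h₀, C₀, hC₀⟩ := hne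
        refine ⟨h₀, fun h ⟨C, hC⟩ => ?_⟩
        rw [Set.mem_smul_set_iff_inv_smul_mem]
        refine ⟨C + C₀, fun n => ?_⟩
        rw [smul_eq_mul, mul_smul, ← hd h₀, smul_inv_smul]
        have := T.triangle (h • s j ^ n • x) (s i ^ n • x) (h₀ • s j ^ n • x)
        rw [T.comm (s i ^ n • x)] at this
        exact this.trans (add_le_add (hC n) (hC₀ n))
      · exact ⟨1, fun h hh => (hne ⟨h, hh⟩).elim⟩
    choose h₀ hh₀ using hcos
    obtain ⟨⟨i, j⟩, -, hfin⟩ := Subgroup.exists_finiteIndex_of_leftCoset_cover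
      (s := (Finset.univ : Finset (Bool × Bool))) (g := fun p => h₀ p.1 p.2)
      (H := fun p => E p.2) (by
        refine Set.eq_univ_of_forall fun h => ?_
        obtain ⟨i, j, hC⟩ := hcov h
        exact Set.mem_biUnion (Finset.mem_coe.2 (Finset.mem_univ (i, j))) (hh₀ i j h hC))
    refine ⟨E j, hfin, ?_⟩
    refine T.isSolvable_of_ray (Γ := E j) (fun g => hd (g : Γ)) (ℓ := ℓ) (fun y hy => ?_) ht
      (x := fun n => s j ^ n • x) (hs' j) (fun h => h.2)
    let u : MulAction.stabilizer (E j) y →* Γ := (E j).subtype.comp (Subgroup.subtype _)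
    have hu : ∀ z, u z ∈ MulAction.stabilizer Γ y := fun z => z.2
    exact derivedSeries_eq_bot_of_injective (f := u.codRestrict _ hu)
      ((MonoidHom.injective_codRestrict _ _ hu).2
        ((E j).subtype_injective.comp (Subgroup.subtype_injective _))) (hB y hy)

end IsTreeMetric

namespace IsTreeMetric

variable {V : Type*} {d : V → V → ℕ} {τ : V → ℕ} (T : IsTreeMetric d τ)
  {Γ : Type*} [Group Γ] [MulAction Γ V]

include T

/-- If every element of a group fixes a vertex, then so does every finite subset. -/
theorem exists_fixed_of_finset (hd : ∀ (g : Γ) x y, d (g • x) (g • y) = d x y) [Nonempty V]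
    (hell : ∀ g : Γ, ∃ x : V, g • x = x) (S : Finset Γ) : ∃ x : V, ∀ g ∈ S, g • x = x := by
  classical
  induction S using Finset.induction_on with
  | empty => exact ⟨Classical.arbitrary V, by simp⟩
  | insert γ S _ ih =>
    by_contra hno
    obtain ⟨p, hp⟩ := ih
    obtain ⟨q, hq⟩ := hell γ
    obtain ⟨r, ⟨x, y, hx, hy, hr⟩, hmin⟩ := WellFounded.has_min (wellFounded_lt (α := ℕ))
      {r | ∃ x y : V, (∀ g ∈ S, g • x = x) ∧ γ • y = y ∧ d x y = r} ⟨_, p, q, hp, hq, rfl⟩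
    have hmin' : ∀ x' y' : V, (∀ g ∈ S, g • x' = x') → γ • y' = y' → r ≤ d x' y' :=
      fun x' y' h h' => not_lt.1 (hmin _ ⟨x', y', h, h', rfl⟩)
    have hxy : x ≠ y := by
      rintro rfl
      exact hno ⟨x, by simpa [hy] using hx⟩
    obtain ⟨z, hz, hz'⟩ := T.step hxy
    obtain ⟨w, hw, hw'⟩ := T.step hxy.symm
    have hyx := T.comm y x
    obtain ⟨s, hs, hsz⟩ : ∃ s ∈ S, s • z ≠ z := by
      by_contra! hcon
      have := hmin' z y hcon hy
      omega
    have hγw : w ≠ γ • w := by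
      intro hcon
      have := hmin' x w hx hcon.symm
      have := T.comm x w
      omega
    have h1 := hd γ y w
    have h2 := hd γ w x
    have h3 := hd γ y x
    rw [hy] at h1 h3
    have h4 := T.dist_eq_add_of_ne hw hw' (h1.trans hw) (z := γ • x) (by omega) hγw
    have h5 := hd γ (γ⁻¹ • x) y
    rw [smul_inv_smul, hy] at h5
    have h6 := hd γ x (γ⁻¹ • x)
    rw [smul_inv_smul, T.comm] at h6
    have h7 := T.triangle z y (γ⁻¹ • x)
    have h8 := T.triangle x z (γ⁻¹ • x)
    have h9 := T.triangle z y (γ • x)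
    have h10 := T.triangle x z (γ • x)
    have h11 := T.comm y (γ⁻¹ • x)
    have h12 := hd s x z
    have h13 := hd s z (γ • x)
    have h14 := hd s x (γ • x)
    rw [hx s hs] at h12 h14
    have h15 := T.dist_eq_add_of_ne hz (y := γ⁻¹ • x) (by omega) (h12.trans hz)
      (z := s • γ • x) (by omega) hsz.symm
    obtain ⟨q, hq⟩ := hell (s * γ)
    have h16 := T.four_point x (s • γ • s • γ • x) q (s • γ • x)
    have h17 := hd (s * γ) q x
    have h18 := hd (s * γ) q (s • γ • x)
    have h19 := hd (s * γ) x (s • γ • x)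
    have h20 := hd (s * γ) (γ⁻¹ • x) (s • γ • x)
    rw [hq] at h17 h18
    rw [mul_smul] at h17 h18 h19 h20
    rw [smul_inv_smul, hx s hs, mul_smul] at h20
    rw [mul_smul] at h19
    rw [T.comm (s • γ • s • γ • x) (s • γ • x), T.comm (s • γ • s • γ • x) q, T.comm x q] at h16
    omega

/-- A group acting on a tree contains a free subgroup, or is virtually solvable, or fixes a
vertex, provided that the stabilizers of the vertices of one class are solvable. -/
theorem titsDichotomy_or_exists_fixed (hd : ∀ (g : Γ) x y, d (g • x) (g • y) = d x y)
    (hτ : ∀ (g : Γ) x, τ (g • x) = τ x) {ℓ : ℕ}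
    (hB : ∀ y : V, τ y = 1 → derivedSeries (MulAction.stabilizer Γ y) ℓ = ⊥) [Nonempty V] :
    TitsDichotomy Γ ∨ ∃ x : V, ∀ g : Γ, g • x = x := by
  classical
  by_cases hell : ∀ g : Γ, ∃ x : V, g • x = x
  · by_cases hsol : ∀ F : Finset Γ, derivedSeries (Subgroup.closure (F : Set Γ)) ℓ = ⊥
    · exact .inl (.inr (.of_isSolvable (isSolvable_of_finitely_generated ℓ hsol)))
    · right
      push Not at hsol
      obtain ⟨F, hF⟩ := hsol
      obtain ⟨x, hx⟩ := T.exists_fixed_of_finset hd hell F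
      refine ⟨x, fun g => ?_⟩
      obtain ⟨y, hy⟩ := T.exists_fixed_of_finset hd hell (insert g F)
      have hcl : ∀ y : V, (∀ s ∈ F, s • y = y) →
          ∀ s : Subgroup.closure (F : Set Γ), (s : Γ) • y = y := by
        intro y hy s
        have : Subgroup.closure (F : Set Γ) ≤ MulAction.stabilizer Γ y :=
          (Subgroup.closure_le _).2 fun s hs => hy s hs
        exact this s.2
      obtain rfl : x = y := by
        by_contra hne
        exact hF (T.derivedSeries_eq_bot_of_fixed hd hB (Subgroup.subtype_injective _) hne
          (hcl _ hx) (hcl _ fun s hs => hy s (Finset.mem_insert_of_mem hs)))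
      exact hy g (Finset.mem_insert_self _ _)
  · push Not at hell
    obtain ⟨g, hg⟩ := hell
    exact .inl (T.titsDichotomy_of_forall_ne hd hτ hB hg)

end IsTreeMetric

/-! ### The tree of a group generated by two subgroups -/

/-- The path metric of a bipartite tree. -/
theorem SimpleGraph.IsTree.isTreeMetric {V : Type*} {G : SimpleGraph V} (hG : G.IsTree)
    {τ : V → ℕ} (hτ : ∀ x, τ x < 2) (hadj : ∀ {x y}, G.Adj x y → τ x ≠ τ y) :
    IsTreeMetric G.dist τ := by
  have hc := hG.connected
  have hpar : ∀ {x y} (p : G.Walk x y), p.length % 2 = (τ x + τ y) % 2 := by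
    intro x y p
    induction p with
    | nil => simp [← two_mul]
    | @cons u v w h p ih =>
      have := hadj h
      have := hτ u
      have := hτ v
      rw [SimpleGraph.Walk.length_cons]
      omega
  have parity : ∀ x y, G.dist x y % 2 = (τ x + τ y) % 2 := by
    intro x y
    obtain ⟨p, hp⟩ := hc.exists_walk_length_eq_dist x y
    rw [← hp, hpar]
  have step : ∀ {x y}, x ≠ y → ∃ z, G.dist x z = 1 ∧ G.dist z y + 1 = G.dist x y := by
    intro x y hxy
    obtain ⟨p, hp⟩ := hc.exists_walk_length_eq_dist x y
    cases p with
    | nil => exact (hxy rfl).elim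
    | @cons _ v _ h p =>
      refine ⟨v, SimpleGraph.dist_eq_one_iff_adj.2 h, ?_⟩
      have h1 := hc.dist_triangle (u := x) (v := v) (w := y)
      have h2 := SimpleGraph.dist_le p
      rw [SimpleGraph.dist_eq_one_iff_adj.2 h] at h1
      rw [SimpleGraph.Walk.length_cons] at hp
      omega
  have uniq : ∀ {x y z w}, G.dist x z = 1 → G.dist z y + 1 = G.dist x y → G.dist x w = 1 →
      G.dist w y + 1 = G.dist x y → z = w := by
    intro x y z w hz hz' hw hw'
    have key : ∀ z, G.dist x z = 1 → G.dist z y + 1 = G.dist x y →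
        ∃ p : G.Walk x y, p.IsPath ∧ p.snd = z := by
      intro z hz hz'
      obtain ⟨p, hp⟩ := hc.exists_walk_length_eq_dist z y
      refine ⟨.cons (SimpleGraph.dist_eq_one_iff_adj.1 hz) p,
        SimpleGraph.Walk.isPath_of_length_eq_dist _ ?_, by simp⟩
      rw [SimpleGraph.Walk.length_cons]
      omega
    obtain ⟨p, hp, rfl⟩ := key z hz hz'
    obtain ⟨q, hq, rfl⟩ := key w hw hw'
    have := hG.isAcyclic.subsingleton_path x y
    have hpq : p = q := congrArg Subtype.val (Subsingleton.elim (⟨p, hp⟩ : G.Path x y) ⟨q, hq⟩)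
    rw [hpq]
  have sep : ∀ n : ℕ, ∀ {x x' y z}, G.dist x' y = n → G.dist x x' = 1 →
      G.dist x' y + 1 = G.dist x y → G.dist x' z = G.dist x z + 1 →
      G.dist y z = G.dist x y + G.dist x z := by
    intro n
    induction n with
    | zero =>
      intro x x' y z hn h1 h2 h3
      obtain rfl := hc.dist_eq_zero_iff.1 hn
      omega
    | succ n ih =>
      intro x x' y z hn h1 h2 h3
      obtain ⟨x'', h4, h5⟩ := step (x := x') (y := y) (by rintro rfl; simp at hn)
      have e : G.dist x' x = 1 := by rw [SimpleGraph.dist_comm, h1]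
      have h6 : G.dist x'' z = G.dist x' z + 1 := by
        by_contra hne
        have p1 := parity x'' z
        have p2 := parity x' z
        have p3 := parity x' x''
        have t1 := hc.dist_triangle (u := x') (v := x'') (w := z)
        have t2 := hc.dist_triangle (u := x'') (v := x') (w := z)
        have t3 : G.dist x'' x' = 1 := by rw [SimpleGraph.dist_comm, h4]
        obtain rfl := uniq h4 (y := z) (by omega) e (by omega)
        omega
      have := ih (by omega) h4 h5 h6
      omega
  refine ⟨fun x => SimpleGraph.dist_self, fun h => hc.dist_eq_zero_iff.1 h,
    fun x y => SimpleGraph.dist_comm, fun x y z => hc.dist_triangle, parity, hτ, step, ?_⟩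
  intro x y z w
  obtain ⟨n, hn⟩ : ∃ n, G.dist x y = n := ⟨_, rfl⟩
  induction n generalizing x with
  | zero =>
    obtain rfl := hc.dist_eq_zero_iff.1 hn
    have := hc.dist_triangle (u := z) (v := x) (w := w)
    rw [SimpleGraph.dist_comm (u := z) (v := x)] at this
    omega
  | succ n ih =>
    obtain ⟨x', h1, h2⟩ := step (x := x) (y := y) (by rintro rfl; simp at hn)
    have h3 := ih x' (by omega)
    have near : ∀ z, G.dist x' z ≠ G.dist x z + 1 → G.dist x' z + 1 = G.dist x z := by
      intro z hz
      have p1 := parity x' z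
      have p2 := parity x z
      have p3 := parity x x'
      have t1 := hc.dist_triangle (u := x') (v := x) (w := z)
      have t2 := hc.dist_triangle (u := x) (v := x') (w := z)
      have t3 : G.dist x' x = 1 := by rw [SimpleGraph.dist_comm, h1]
      omega
    have t4 := hc.dist_triangle (u := z) (v := x) (w := w)
    rw [SimpleGraph.dist_comm (u := z) (v := x)] at t4
    by_cases hz : G.dist x' z = G.dist x z + 1
    · have := sep n (by omega) h1 h2 hz
      omega
    by_cases hw : G.dist x' w = G.dist x w + 1
    · have := sep n (by omega) h1 h2 hw
      omega
    have := near z hz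
    have := near w hw
    omega

namespace Subgroup

variable {G : Type*} [Group G] (A B : Subgroup G)

/-- The graph whose vertices are the left cosets of `A` and of `B`, two of them being joined
when they are of the form `gA` and `gB`. -/
def cosetGraph : SimpleGraph ((G ⧸ A) ⊕ (G ⧸ B)) where
  Adj x y := ∃ g : G, (x = .inl g ∧ y = .inr g) ∨ (x = .inr g ∧ y = .inl g)
  symm := ⟨fun _ _ ⟨g, h⟩ => ⟨g, h.symm.imp And.symm And.symm⟩⟩
  loopless := ⟨fun x ⟨g, h⟩ => by rcases h with ⟨rfl, h⟩ | ⟨rfl, h⟩ <;> simp at h⟩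

variable {A B}

theorem cosetGraph_adj_smul (h : G) {x y : (G ⧸ A) ⊕ (G ⧸ B)} (hxy : (cosetGraph A B).Adj x y) :
    (cosetGraph A B).Adj (h • x) (h • y) := by
  obtain ⟨g, ⟨rfl, rfl⟩ | ⟨rfl, rfl⟩⟩ := hxy
  · exact ⟨h * g, .inl ⟨rfl, rfl⟩⟩
  · exact ⟨h * g, .inr ⟨rfl, rfl⟩⟩

theorem cosetGraph_dist_smul (hc : (cosetGraph A B).Connected) (h : G)
    (x y : (G ⧸ A) ⊕ (G ⧸ B)) :
    (cosetGraph A B).dist (h • x) (h • y) = (cosetGraph A B).dist x y := by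
  have key : ∀ (h : G) (x y : (G ⧸ A) ⊕ (G ⧸ B)),
      (cosetGraph A B).dist (h • x) (h • y) ≤ (cosetGraph A B).dist x y := by
    intro h x y
    obtain ⟨p, hp⟩ := hc.exists_walk_length_eq_dist x y
    rw [← hp, ← SimpleGraph.Walk.length_map ⟨fun x => h • x, cosetGraph_adj_smul h⟩ p]
    exact SimpleGraph.dist_le _
  refine le_antisymm (key h x y) ?_
  simpa using key h⁻¹ (h • x) (h • y)

theorem cosetGraph_connected (hAB : A ⊔ B = ⊤) : (cosetGraph A B).Connected := by
  have hedge : ∀ g : G, (cosetGraph A B).Reachable (.inl g) (.inr g) := fun g =>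
    SimpleGraph.Adj.reachable ⟨g, .inl ⟨rfl, rfl⟩⟩
  have hgen : ∀ g : G, (cosetGraph A B).Reachable (.inl (1 : G)) (.inl g) := by
    have hsmul : ∀ (h : G) {x y}, (cosetGraph A B).Reachable x y →
        (cosetGraph A B).Reachable (h • x) (h • y) := fun h x y ⟨p⟩ =>
      ⟨p.map ⟨fun x => h • x, cosetGraph_adj_smul h⟩⟩
    intro g
    have hg : g ∈ A ⊔ B := hAB ▸ mem_top g
    rw [Subgroup.sup_eq_closure] at hg
    have hbase : ∀ g : G, g ∈ (A : Set G) ∪ B →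
        (cosetGraph A B).Reachable (.inl (1 : G)) (.inl g) := by
      rintro g (h | h)
      · rw [show ((g : G) : G ⧸ A) = (1 : G) from (QuotientGroup.eq.2 (by simpa using h)).symm]
      · refine (hedge 1).trans ?_
        rw [show ((1 : G) : G ⧸ B) = g from QuotientGroup.eq.2 (by simpa using h)]
        exact (hedge g).symm
    induction hg using Subgroup.closure_induction with
    | mem g hg => exact hbase g hg
    | one => exact .refl _
    | mul g h _ _ ih1 ih2 =>
      have := hsmul g ih2
      simp only [Sum.smul_inl] at this
      rw [show g • ((1 : G) : G ⧸ A) = (g : G) from congrArg _ (mul_one g)] at this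
      exact ih1.trans this
    | inv g _ ih =>
      have := hsmul g⁻¹ ih
      simp only [Sum.smul_inl] at this
      rw [show g⁻¹ • ((1 : G) : G ⧸ A) = (g⁻¹ : G) from congrArg _ (mul_one _),
        show g⁻¹ • ((g : G) : G ⧸ A) = (1 : G) from congrArg _ (inv_mul_cancel g)] at this
      exact this.symm
  have hall : ∀ x, (cosetGraph A B).Reachable (.inl (1 : G)) x := by
    rintro (x | x)
    · obtain ⟨g, rfl⟩ := QuotientGroup.mk_surjective x
      exact hgen g
    · obtain ⟨g, rfl⟩ := QuotientGroup.mk_surjective x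
      exact (hgen g).trans (hedge g)
  exact { preconnected := fun x y => (hall x).symm.trans (hall y)
          nonempty := ⟨.inl (1 : G)⟩ }

/-- A criterion for the graph of cosets to have no cycles, in terms of two states between which
right multiplications by elements of `A` and `B` alternate. -/
theorem cosetGraph_isAcyclic {P Q : G → Prop} {s : G} (hs : s ∈ A) (hPs : P s)
    (hP : ∀ f η, P f → η ∈ B → η ∉ A → Q (f * η)) (hQ : ∀ f κ, Q f → κ ∈ A → κ ∉ B → P (f * κ))
    (hQA : ∀ f, Q f → f ∉ A) : (cosetGraph A B).IsAcyclic := by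
  have key : ∀ {v y} (p : (cosetGraph A B).Walk v y) (x : G ⧸ A), y = .inl x → p.IsTrail →
      ¬ p.Nil → ∃ g f : G, x = (g : G ⧸ A) ∧
        ((v = .inr (g * f : G) ∧ p.snd = .inl (g * f : G) ∧ P f) ∨
          (v = .inl (g * f : G) ∧ p.snd = .inr (g * f : G) ∧ Q f)) := by
    intro v y p x hyx
    induction p with
    | nil => simp
    | @cons u v w h p ih =>
      intro ht _
      rw [SimpleGraph.Walk.isTrail_cons] at ht
      rw [SimpleGraph.Walk.snd_cons]
      by_cases hnil : p.Nil
      · obtain rfl := hnil.eq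
        obtain ⟨g, ⟨rfl, h'⟩ | ⟨rfl, h'⟩⟩ := h
        · simp [hyx] at h'
        · subst hyx
          simp only [Sum.inl.injEq] at h'
          refine ⟨g * s⁻¹, s, ?_, .inl ⟨by simp, by simp [h'], hPs⟩⟩
          rw [h']
          exact QuotientGroup.eq.2 (by simpa using hs)
      · obtain ⟨g, f, hx, hor⟩ := ih hyx ht.1 hnil
        have hne : u ≠ p.snd := by
          intro hu
          apply ht.2
          rw [hu, Sym2.eq_swap]
          exact p.mk_start_snd_mem_edges hnil
        refine ⟨g, ?_⟩
        obtain ⟨k, ⟨rfl, h'⟩ | ⟨rfl, h'⟩⟩ := h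
        · obtain ⟨h1, h2, h3⟩ | ⟨h1, -, -⟩ := hor
          · rw [h1, Sum.inr.injEq, QuotientGroup.eq] at h'
            refine ⟨f * ((g * f)⁻¹ * k), hx, .inr ⟨?_, ?_, hP _ _ h3 h' ?_⟩⟩
            · rw [show g * (f * ((g * f)⁻¹ * k)) = k by group]
            · rw [h1, Sum.inr.injEq, QuotientGroup.eq]
              rw [show g * (f * ((g * f)⁻¹ * k)) = k by group]
              exact h'
            · intro hA
              apply hne
              rw [h2, Sum.inl.injEq]
              exact (QuotientGroup.eq.2 hA).symm
          · simp [h1] at h'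
        · obtain ⟨h1, -, -⟩ | ⟨h1, h2, h3⟩ := hor
          · simp [h1] at h'
          · rw [h1, Sum.inl.injEq, QuotientGroup.eq] at h'
            refine ⟨f * ((g * f)⁻¹ * k), hx, .inl ⟨?_, ?_, hQ _ _ h3 h' ?_⟩⟩
            · rw [show g * (f * ((g * f)⁻¹ * k)) = k by group]
            · rw [h1, Sum.inl.injEq, QuotientGroup.eq]
              rw [show g * (f * ((g * f)⁻¹ * k)) = k by group]
              exact h'
            · intro hB
              apply hne
              rw [h2, Sum.inr.injEq]
              exact (QuotientGroup.eq.2 hB).symm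
  have hclosed : ∀ (x : G ⧸ A) (p : (cosetGraph A B).Walk (.inl x) (.inl x)), p.IsTrail →
      p.Nil := by
    intro x p hp
    by_contra hnil
    obtain ⟨g, f, hx, ⟨h1, -, -⟩ | ⟨h1, -, h3⟩⟩ := key p x rfl hp hnil
    · simp at h1
    · rw [Sum.inl.injEq, hx, QuotientGroup.eq] at h1
      exact hQA f h3 (by simpa using h1)
  rintro (x | x) c hc
  · exact hc.ne_nil (SimpleGraph.Walk.eq_nil_iff_nil.2 (hclosed x c hc.isTrail))
  · cases c with
    | nil => exact hc.ne_nil rfl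
    | @cons _ v _ h p =>
      obtain ⟨g, ⟨h1, -⟩ | ⟨-, rfl⟩⟩ := id h
      · simp at h1
      · have ht := hc.isTrail
        rw [SimpleGraph.Walk.isTrail_cons, SimpleGraph.Walk.isTrail_def] at ht
        have := hclosed _ (p.concat h) (by
          rw [SimpleGraph.Walk.isTrail_def, SimpleGraph.Walk.edges_concat, List.nodup_concat]
          exact ⟨ht.2, ht.1⟩)
        rw [← SimpleGraph.Walk.length_eq_zero_iff, SimpleGraph.Walk.length_concat] at this
        omega

/-- The strong Tits alternative for a group acting on a tree of cosets. -/
theorem strongTitsAlternative_of_cosetGraph (hAB : A ⊔ B = ⊤)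
    (hac : (cosetGraph A B).IsAcyclic) {ℓ : ℕ} (hB : derivedSeries B ℓ = ⊥)
    (hA : StrongTitsAlternative A) : StrongTitsAlternative G := by
  intro S
  have hc := cosetGraph_connected hAB
  have T : IsTreeMetric (cosetGraph A B).dist (Sum.elim (fun _ => 0) (fun _ => 1)) :=
    SimpleGraph.IsTree.isTreeMetric ⟨hc, hac⟩ (by rintro (x | x) <;> simp) (by
      rintro _ _ ⟨g, ⟨rfl, rfl⟩ | ⟨rfl, rfl⟩⟩ <;> simp)
  have hconj : ∀ (C : Subgroup G) (S : Subgroup G) (g : G),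
      (∀ s ∈ S, s • (g : G ⧸ C) = g) → S.map (MulAut.conj g⁻¹).toMonoidHom ≤ C := by
    rintro C S g hS _ ⟨s, hs, rfl⟩
    have h1 := hS s hs
    have h2 : ((g : G) : G ⧸ C) = (s * g : G) := h1.symm
    simpa [mul_assoc] using QuotientGroup.eq.1 h2
  have hder : ∀ (S : Subgroup G) (x : G ⧸ B), (∀ s ∈ S, s • x = x) → derivedSeries S ℓ = ⊥ := by
    intro S x hS
    obtain ⟨g, rfl⟩ := QuotientGroup.mk_surjective x
    have hle := hconj B S g hS
    exact derivedSeries_eq_bot_of_injective (f := (Subgroup.inclusion hle).comp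
      (S.equivMapOfInjective _ (MulAut.conj g⁻¹).injective).toMonoidHom)
      ((Subgroup.inclusion_injective hle).comp (MulEquiv.injective _)) hB
  have : Nonempty ((G ⧸ A) ⊕ (G ⧸ B)) := hc.nonempty
  obtain h | ⟨x | x, hx⟩ := T.titsDichotomy_or_exists_fixed (Γ := S)
    (fun g => cosetGraph_dist_smul hc (g : G)) (by rintro g (x | x) <;> rfl) (ℓ := ℓ) (by
      rintro (y | y) hy
      · simp at hy
      · refine derivedSeries_eq_bot_of_injective
          (f := (S.subtype.comp (MulAction.stabilizer S _).subtype).rangeRestrict)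
          ((MonoidHom.rangeRestrict_injective_iff).2
            (S.subtype_injective.comp (Subgroup.subtype_injective _))) (hder _ y ?_)
        rintro _ ⟨s, rfl⟩
        exact Sum.inr.inj s.2)
  · exact h
  · obtain ⟨g, rfl⟩ := QuotientGroup.mk_surjective x
    have hle := hconj A S g (fun s hs => Sum.inl.inj (hx ⟨s, hs⟩))
    refine TitsDichotomy.of_map_conj g⁻¹ ?_
    exact TitsDichotomy.of_mulEquiv (Subgroup.subgroupOfEquivOfLe hle) (hA _)
  · right
    exact .of_isSolvable ⟨⟨ℓ, hder S x fun s hs => Sum.inr.inj (hx ⟨s, hs⟩)⟩⟩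

end Subgroup

/-! ### The subgroups `K` and `H` -/

section PolynomialAutomorphisms

open scoped commutatorElement

variable {k : Type*} [Field k]

theorem algEquiv_apply_mem_supported {σ : Type*} {s t : Set σ}
    (f : MvPolynomial σ k ≃ₐ[k] MvPolynomial σ k) (hf : ∀ i ∈ s, f (X i) ∈ supported k t)
    {p : MvPolynomial σ k} (hp : p ∈ supported k s) : f p ∈ supported k t := by
  have : supported k s ≤ (supported k t).comap f.toAlgHom := by
    rw [supported_eq_adjoin_X]
    refine Algebra.adjoin_le ?_
    rintro _ ⟨i, hi, rfl⟩
    exact hf i hi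
  exact this hp

theorem algEquiv_apply_eq_of_mem_supported {σ : Type*} {s : Set σ}
    (f : MvPolynomial σ k ≃ₐ[k] MvPolynomial σ k) (hf : ∀ i ∈ s, f (X i) = X i)
    {p : MvPolynomial σ k} (hp : p ∈ supported k s) : f p = p := by
  have : supported k s ≤ AlgHom.equalizer f.toAlgHom (AlgHom.id k _) := by
    rw [supported_eq_adjoin_X]
    refine Algebra.adjoin_le ?_
    rintro _ ⟨i, hi, rfl⟩
    exact hf i hi
  exact this hp

theorem algEquiv_apply_C {σ : Type*} (f : MvPolynomial σ k ≃ₐ[k] MvPolynomial σ k) (a : k) :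
    f (C a) = C a :=
  f.commutes a

theorem C_mem_supported {σ : Type*} (s : Set σ) (a : k) : C a ∈ supported k s :=
  (supported k s).algebraMap_mem a

theorem coeff_single_of_mem_supported {σ : Type*} {s : Set σ} {p : MvPolynomial σ k}
    (hp : p ∈ supported k s) {i : σ} (hi : i ∉ s) : coeff (Finsupp.single i 1) p = 0 := by
  by_contra h
  exact hi (mem_supported.1 hp ((mem_vars_iff_mem_support i).2 ⟨_, mem_support_iff.2 h, by simp⟩))

theorem symm_X_eq_of_X_two {f : MvPolynomial (Fin 3) k ≃ₐ[k] MvPolynomial (Fin 3) k} {c d : k}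
    (hc : c ≠ 0) (h : f (X 2) = C c * X 2 + C d) :
    f.symm (X 2) = C c⁻¹ * X 2 + C (-(c⁻¹ * d)) := by
  rw [AlgEquiv.symm_apply_eq, map_add, map_mul, algEquiv_apply_C, algEquiv_apply_C, h, mul_add,
    ← mul_assoc, ← C_mul, ← C_mul, inv_mul_cancel₀ hc, add_assoc, ← C_add]
  simp

theorem supported_two_of_X_two {f : MvPolynomial (Fin 3) k ≃ₐ[k] MvPolynomial (Fin 3) k}
    {c d : k} (h : f (X 2) = C c * X 2 + C d) {p : MvPolynomial (Fin 3) k}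
    (hp : p ∈ supported k ({2} : Set (Fin 3))) : f p ∈ supported k ({2} : Set (Fin 3)) := by
  refine algEquiv_apply_mem_supported f ?_ hp
  rintro _ rfl
  rw [h]
  exact add_mem (mul_mem (C_mem_supported _ _) (X_mem_supported.2 rfl)) (C_mem_supported _ _)

variable (k) in
/-- The subgroup `K`. -/
def subgroupK : Subgroup (MvPolynomial (Fin 3) k ≃ₐ[k] MvPolynomial (Fin 3) k) where
  carrier := {f | IsK k f}
  one_mem' := ⟨1, 0, 0, 1, 1, 0, 0, 0, by simp, by simp, zero_mem _, zero_mem _, by simp, by simp,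
    by simp⟩
  mul_mem' := by
    rintro f h ⟨a, b, a', b', c, d, P, Q, hD, hc, hP, hQ, h0, h1, h2⟩
      ⟨α, β, α', β', γ, δ, R, S, hE, hγ, hR, hS, e0, e1, e2⟩
    refine ⟨α * a + β * a', α * b + β * b', α' * a + β' * a', α' * b + β' * b', γ * c, γ * d + δ,
      C α * P + C β * Q + f R, C α' * P + C β' * Q + f S, ?_, mul_ne_zero hγ hc, ?_, ?_, ?_, ?_, ?_⟩
    · convert mul_ne_zero hD hE using 1
      ring
    · exact add_mem (add_mem (mul_mem (C_mem_supported _ _) hP) (mul_mem (C_mem_supported _ _) hQ))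
        (supported_two_of_X_two h2 hR)
    · exact add_mem (add_mem (mul_mem (C_mem_supported _ _) hP) (mul_mem (C_mem_supported _ _) hQ))
        (supported_two_of_X_two h2 hS)
    · simp only [AlgEquiv.mul_apply, e0, map_add, map_mul, algEquiv_apply_C, h0, h1]
      ring
    · simp only [AlgEquiv.mul_apply, e1, map_add, map_mul, algEquiv_apply_C, h0, h1]
      ring
    · simp only [AlgEquiv.mul_apply, e2, map_add, map_mul, algEquiv_apply_C, h2]
      ring
  inv_mem' := by
    rintro f ⟨a, b, a', b', c, d, P, Q, hD, hc, hP, hQ, h0, h1, h2⟩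
    have g2 := symm_X_eq_of_X_two hc h2
    have hCD : C (a * b' - a' * b)⁻¹ * (C a * C b' - C a' * C b) =
        (1 : MvPolynomial (Fin 3) k) := by
      rw [← C_mul, ← C_mul, ← C_sub, ← C_mul, inv_mul_cancel₀ hD, C_1]
    refine ⟨(a * b' - a' * b)⁻¹ * b', -((a * b' - a' * b)⁻¹ * b), -((a * b' - a' * b)⁻¹ * a'),
      (a * b' - a' * b)⁻¹ * a, c⁻¹, -(c⁻¹ * d),
      C (a * b' - a' * b)⁻¹ * (C b * f.symm Q - C b' * f.symm P),
      C (a * b' - a' * b)⁻¹ * (C a' * f.symm P - C a * f.symm Q), ?_, inv_ne_zero hc, ?_, ?_, ?_, ?_,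
      g2⟩
    · convert inv_ne_zero hD using 1
      field_simp
    · exact mul_mem (C_mem_supported _ _) (sub_mem (mul_mem (C_mem_supported _ _)
        (supported_two_of_X_two g2 hQ)) (mul_mem (C_mem_supported _ _)
        (supported_two_of_X_two g2 hP)))
    · exact mul_mem (C_mem_supported _ _) (sub_mem (mul_mem (C_mem_supported _ _)
        (supported_two_of_X_two g2 hP)) (mul_mem (C_mem_supported _ _)
        (supported_two_of_X_two g2 hQ)))
    · change f.symm (X 0) = _
      rw [AlgEquiv.symm_apply_eq]
      simp only [map_add, map_mul, map_sub, map_neg, algEquiv_apply_C, AlgEquiv.apply_symm_apply,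
        h0, h1]
      linear_combination -(X 0) * hCD
    · change f.symm (X 1) = _
      rw [AlgEquiv.symm_apply_eq]
      simp only [map_add, map_mul, map_sub, map_neg, algEquiv_apply_C, AlgEquiv.apply_symm_apply,
        h0, h1]
      linear_combination -(X 1) * hCD

theorem supported_one_two_of_X {f : MvPolynomial (Fin 3) k ≃ₐ[k] MvPolynomial (Fin 3) k}
    {b c d : k} {Q : MvPolynomial (Fin 3) k} (hQ : Q ∈ supported k ({2} : Set (Fin 3)))
    (h1 : f (X 1) = C b * X 1 + Q) (h2 : f (X 2) = C c * X 2 + C d)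
    {p : MvPolynomial (Fin 3) k} (hp : p ∈ supported k ({1, 2} : Set (Fin 3))) :
    f p ∈ supported k ({1, 2} : Set (Fin 3)) := by
  refine algEquiv_apply_mem_supported f ?_ hp
  rintro _ (rfl | rfl)
  · rw [h1]
    exact add_mem (mul_mem (C_mem_supported _ _) (X_mem_supported.2 (by simp)))
      (supported_mono (by simp) hQ)
  · rw [h2]
    exact add_mem (mul_mem (C_mem_supported _ _) (X_mem_supported.2 (by simp)))
      (C_mem_supported _ _)

variable (k) in
/-- The subgroup `H`. -/
def subgroupH : Subgroup (MvPolynomial (Fin 3) k ≃ₐ[k] MvPolynomial (Fin 3) k) where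
  carrier := {f | IsH k f}
  one_mem' := ⟨1, 1, 1, 0, 0, 0, by simp, by simp, by simp, zero_mem _, zero_mem _, by simp,
    by simp, by simp⟩
  mul_mem' := by
    rintro f h ⟨a, b, c, d, P, Q, ha, hb, hc, hP, hQ, h0, h1, h2⟩
      ⟨α, β, γ, δ, R, S, hα, hβ, hγ, hR, hS, e0, e1, e2⟩
    refine ⟨α * a, β * b, γ * c, γ * d + δ, C α * P + f R, C β * Q + f S, mul_ne_zero hα ha,
      mul_ne_zero hβ hb, mul_ne_zero hγ hc, ?_, ?_, ?_, ?_, ?_⟩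
    · exact add_mem (mul_mem (C_mem_supported _ _) hP) (supported_one_two_of_X hQ h1 h2 hR)
    · exact add_mem (mul_mem (C_mem_supported _ _) hQ) (supported_two_of_X_two h2 hS)
    · simp only [AlgEquiv.mul_apply, e0, map_add, map_mul, algEquiv_apply_C, h0]
      ring
    · simp only [AlgEquiv.mul_apply, e1, map_add, map_mul, algEquiv_apply_C, h1]
      ring
    · simp only [AlgEquiv.mul_apply, e2, map_add, map_mul, algEquiv_apply_C, h2]
      ring
  inv_mem' := by
    rintro f ⟨a, b, c, d, P, Q, ha, hb, hc, hP, hQ, h0, h1, h2⟩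
    have g2 := symm_X_eq_of_X_two hc h2
    have hinv : ∀ a : k, a ≠ 0 → C a⁻¹ * C a = (1 : MvPolynomial (Fin 3) k) := by
      intro a ha
      rw [← C_mul, inv_mul_cancel₀ ha, C_1]
    have hQ' : -(C b⁻¹ * f.symm Q) ∈ supported k ({2} : Set (Fin 3)) :=
      neg_mem (mul_mem (C_mem_supported _ _) (supported_two_of_X_two g2 hQ))
    have g1 : f.symm (X 1) = C b⁻¹ * X 1 + -(C b⁻¹ * f.symm Q) := by
      rw [AlgEquiv.symm_apply_eq]
      simp only [map_add, map_mul, map_neg, algEquiv_apply_C, AlgEquiv.apply_symm_apply, h1]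
      linear_combination -(X 1) * hinv b hb
    refine ⟨a⁻¹, b⁻¹, c⁻¹, -(c⁻¹ * d), -(C a⁻¹ * f.symm P), -(C b⁻¹ * f.symm Q), inv_ne_zero ha,
      inv_ne_zero hb, inv_ne_zero hc, ?_, hQ', ?_, g1, g2⟩
    · exact neg_mem (mul_mem (C_mem_supported _ _) (supported_one_two_of_X hQ' g1 g2 hP))
    · change f.symm (X 0) = _
      rw [AlgEquiv.symm_apply_eq]
      simp only [map_add, map_mul, map_neg, algEquiv_apply_C, AlgEquiv.apply_symm_apply, h0]
      linear_combination -(X 0) * hinv a ha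

theorem apply_eq_of_mem_commutator {σ Γ : Type*} [Group Γ]
    (φ : Γ →* (MvPolynomial σ k ≃ₐ[k] MvPolynomial σ k)) {S : Subgroup Γ} {x : MvPolynomial σ k}
    (h : ∀ f ∈ S, ∃ (a : k) (p : MvPolynomial σ k), a ≠ 0 ∧ φ f x = C a * x + p ∧
      ∀ g ∈ S, φ g p = p) : ∀ f ∈ ⁅⁅S, S⁆, ⁅S, S⁆⁆, φ f x = x := by
  have hcomm : ∀ f g, φ ⁅f, g⁆ (φ g (φ f x)) = φ f (φ g x) := by
    intro f g
    rw [← AlgEquiv.mul_apply, ← AlgEquiv.mul_apply, ← AlgEquiv.mul_apply, ← map_mul, ← map_mul,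
      ← map_mul, commutatorElement_def]
    congr 2
    group
  have hle : ⁅S, S⁆ ≤ S := Subgroup.commutator_le.2 fun f hf g hg =>
    mul_mem (mul_mem (mul_mem hf hg) (inv_mem hf)) (inv_mem hg)
  let N : Subgroup Γ :=
    { carrier := {f | f ∈ S ∧ ∃ r, φ f x = x + r ∧ ∀ g ∈ S, φ g r = r}
      one_mem' := ⟨one_mem _, 0, by simp, by simp⟩
      mul_mem' := by
        rintro f g ⟨hf, r, hr, hr'⟩ ⟨hg, s, hs, hs'⟩
        refine ⟨mul_mem hf hg, r + s, ?_, fun g hg => by rw [map_add, hr' g hg, hs' g hg]⟩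
        rw [map_mul, AlgEquiv.mul_apply, hs, map_add, hr, hs' f hf, add_assoc]
      inv_mem' := by
        rintro f ⟨hf, r, hr, hr'⟩
        refine ⟨inv_mem hf, -r, ?_, fun g hg => by rw [map_neg, hr' g hg]⟩
        rw [map_inv]
        change (φ f).symm x = _
        rw [AlgEquiv.symm_apply_eq, map_add, map_neg, hr, hr' f hf]
        ring }
  have h1 : ⁅S, S⁆ ≤ N := by
    refine Subgroup.commutator_le.2 fun f hf g hg => ?_
    have hmem := hle (Subgroup.commutator_mem_commutator hf hg)
    obtain ⟨a, p, ha, hp, hp'⟩ := h f hf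
    obtain ⟨b, q, hb, hq, hq'⟩ := h g hg
    refine ⟨hmem, C (a * b)⁻¹ * (C b * p + q - C a * q - p), ?_, fun e he => ?_⟩
    · have e1 := hcomm f g
      simp only [hp, hq, map_add, map_mul, algEquiv_apply_C, hp' g hg, hp' _ hmem, hq' _ hmem,
        hq' f hf] at e1
      have e2 : C (a * b)⁻¹ * (C a * C b) = (1 : MvPolynomial σ k) := by
        rw [← C_mul, ← C_mul, inv_mul_cancel₀ (mul_ne_zero ha hb), C_1]
      linear_combination (C (a * b)⁻¹) * e1 - (φ ⁅f, g⁆ x - x) * e2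
    · simp only [map_sub, map_add, map_mul, algEquiv_apply_C, hp' e he, hq' e he]
  let M : Subgroup Γ := (MulAction.stabilizer (MvPolynomial σ k ≃ₐ[k] MvPolynomial σ k) x).comap φ
  have h2 : ⁅⁅S, S⁆, ⁅S, S⁆⁆ ≤ M := by
    refine Subgroup.commutator_le.2 fun f hf g hg => ?_
    obtain ⟨hfS, r, hr, hr'⟩ := h1 hf
    obtain ⟨hgS, s, hs, hs'⟩ := h1 hg
    have hmem := hle (Subgroup.commutator_mem_commutator hfS hgS)
    have e1 := hcomm f g
    simp only [hr, hs, map_add, hs' f hfS, hr' g hgS, hr' _ hmem, hs' _ hmem] at e1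
    change φ ⁅f, g⁆ x = x
    linear_combination e1
  exact fun f hf => h2 hf

variable (k) in
theorem derivedSeries_subgroupH : derivedSeries (subgroupH k) 6 = ⊥ := by
  let φ := (subgroupH k).subtype
  have h2 : ∀ f ∈ derivedSeries (subgroupH k) 2, φ f (X 2) = X 2 := by
    refine apply_eq_of_mem_commutator φ fun f _ => ?_
    obtain ⟨a, b, c, d, P, Q, ha, hb, hc, hP, hQ, h0, h1, h2⟩ := f.2
    exact ⟨c, C d, hc, h2, fun g _ => algEquiv_apply_C _ _⟩
  have h1 : ∀ f ∈ derivedSeries (subgroupH k) 4, φ f (X 1) = X 1 := by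
    refine apply_eq_of_mem_commutator φ fun f _ => ?_
    obtain ⟨a, b, c, d, P, Q, ha, hb, hc, hP, hQ, h0, h1, -⟩ := f.2
    refine ⟨b, Q, hb, h1, fun g hg => algEquiv_apply_eq_of_mem_supported _ ?_ hQ⟩
    rintro _ rfl
    exact h2 g hg
  have h0 : ∀ f ∈ derivedSeries (subgroupH k) 6, φ f (X 0) = X 0 := by
    refine apply_eq_of_mem_commutator φ fun f _ => ?_
    obtain ⟨a, b, c, d, P, Q, ha, hb, hc, hP, hQ, h0, -, -⟩ := f.2
    refine ⟨a, P, ha, h0, fun g hg => algEquiv_apply_eq_of_mem_supported _ ?_ hP⟩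
    rintro _ (rfl | rfl)
    · exact h1 g hg
    · exact h2 g (derivedSeries_antitone _ (by norm_num) hg)
  rw [eq_bot_iff]
  intro f hf
  rw [Subgroup.mem_bot]
  apply (subgroupH k).subtype_injective
  apply AlgEquiv.coe_toAlgHom_injective
  apply MvPolynomial.algHom_ext
  intro i
  fin_cases i
  · exact h0 f hf
  · exact h1 f (derivedSeries_antitone _ (by norm_num) hf)
  · exact h2 f (derivedSeries_antitone _ (by norm_num) hf)

variable (k) in
/-- The matrix of the linear part of an element of `K`. -/
noncomputable def linearPart : subgroupK k →* Matrix (Fin 2) (Fin 2) k where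
  toFun f := Matrix.of fun i j => coeff (Finsupp.single i.castSucc 1) (f.1 (X j.castSucc))
  map_one' := by
    ext i j
    fin_cases i <;> fin_cases j <;> simp [Finsupp.single_left_inj, coeff_X]
  map_mul' := by
    rintro ⟨f, a, b, a', b', c, d, P, Q, hD, hc, hP, hQ, h0, h1, h2⟩
      ⟨h, α, β, α', β', γ, δ, R, S, hE, hγ, hR, hS, e0, e1, e2⟩
    have hP' := fun i hi => coeff_single_of_mem_supported hP (i := i) hi
    have hQ' := fun i hi => coeff_single_of_mem_supported hQ (i := i) hi
    have hR' := fun i hi => coeff_single_of_mem_supported hR (i := i) hi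
    have hS' := fun i hi => coeff_single_of_mem_supported hS (i := i) hi
    have hR'' := fun i hi => coeff_single_of_mem_supported (supported_two_of_X_two h2 hR) (i := i) hi
    have hS'' := fun i hi => coeff_single_of_mem_supported (supported_two_of_X_two h2 hS) (i := i) hi
    ext i j
    fin_cases i <;> fin_cases j <;>
      simp [Matrix.mul_apply, Fin.sum_univ_two, e0, e1, h0, h1, algEquiv_apply_C, coeff_C_mul,
        coeff_X, Finsupp.single_left_inj, hP', hQ', hR', hS', hR'', hS''] <;> ring

variable (k) in
theorem isSolvable_ker_linearPart : Group.IsSolvable (linearPart k).toHomUnits.ker := by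
  have hH : Group.IsSolvable (subgroupH k) := ⟨⟨6, derivedSeries_subgroupH k⟩⟩
  let u := (subgroupK k).subtype.comp (linearPart k).toHomUnits.ker.subtype
  have hu : ∀ f, u f ∈ subgroupH k := by
    rintro ⟨⟨f, a, b, a', b', c, d, P, Q, hD, hc, hP, hQ, h0, h1, h2⟩, hf⟩
    have hf' : linearPart k _ = 1 := congrArg Units.val ((MonoidHom.mem_ker).1 hf)
    have h01 := congrFun (congrFun hf' 0) 1
    have h11 := congrFun (congrFun hf' 1) 1
    have h00 := congrFun (congrFun hf' 0) 0
    have hQ' := fun i hi => coeff_single_of_mem_supported hQ (i := i) hi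
    have hP' := fun i hi => coeff_single_of_mem_supported hP (i := i) hi
    simp [linearPart, h0, h1, coeff_C_mul, coeff_X, Finsupp.single_left_inj, hP', hQ'] at h01 h11 h00
    refine ⟨1, 1, c, d, C b * X 1 + P, Q, one_ne_zero, one_ne_zero, hc, ?_, hQ, ?_, ?_, h2⟩
    · exact add_mem (mul_mem (C_mem_supported _ _) (X_mem_supported.2 (by simp)))
        (supported_mono (by simp) hP)
    · change f (X 0) = _
      rw [h0, h00, add_assoc]
    · change f (X 1) = _
      rw [h1, h01, h11]
      simp
  exact Group.isSolvable_of_isSolvable_injective (f := u.codRestrict _ hu)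
    ((MonoidHom.injective_codRestrict _ _ hu).2
      ((subgroupK k).subtype_injective.comp (Subgroup.subtype_injective _)))

end PolynomialAutomorphisms

/-! ### Lexicographic degrees and the action of `K` and `H` -/

section LexDegree

open scoped MonomialOrder

variable {k : Type*} [Field k]

theorem lex_lt_iff_fin_three {c d : Fin 3 →₀ ℕ} : c ≺[MonomialOrder.lex] d ↔
    c 0 < d 0 ∨ (c 0 = d 0 ∧ (c 1 < d 1 ∨ (c 1 = d 1 ∧ c 2 < d 2))) := by
  rw [MonomialOrder.lex_lt_iff, Finsupp.Lex.lt_iff]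
  simp only [Fin.exists_fin_succ, Fin.forall_fin_succ]
  simp
  omega

theorem lex_le_iff_fin_three {c d : Fin 3 →₀ ℕ} : c ≼[MonomialOrder.lex] d ↔
    c 0 < d 0 ∨ (c 0 = d 0 ∧ (c 1 < d 1 ∨ (c 1 = d 1 ∧ c 2 ≤ d 2))) := by
  rw [← not_lt, lex_lt_iff_fin_three]
  omega

theorem degree_C_mul_le {σ : Type*} (m : MonomialOrder σ) (a : k) (p : MvPolynomial σ k) :
    m.degree (C a * p) ≼[m] m.degree p := by
  refine m.degree_mul_le.trans ?_
  simp

theorem degree_C_mul_of_ne_zero {σ : Type*} (m : MonomialOrder σ) {a : k} (ha : a ≠ 0)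
    (p : MvPolynomial σ k) : m.degree (C a * p) = m.degree p := by
  rcases eq_or_ne p 0 with rfl | hp
  · simp
  · rw [m.degree_mul (C_ne_zero.2 ha) hp, m.degree_C, zero_add]

theorem degree_add_le_of_le {σ : Type*} {m : MonomialOrder σ} {p q : MvPolynomial σ k}
    {d : σ →₀ ℕ} (hp : m.degree p ≼[m] d) (hq : m.degree q ≼[m] d) : m.degree (p + q) ≼[m] d :=
  m.degree_add_le.trans (sup_le hp hq)

theorem apply_eq_zero_of_mem_supported {σ : Type*} {s : Set σ} {p : MvPolynomial σ k}
    (hp : p ∈ supported k s) {c : σ →₀ ℕ} (hc : c ∈ p.support) {i : σ} (hi : i ∉ s) : c i = 0 := by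
  by_contra h
  exact hi (mem_supported.1 hp ((mem_vars_iff_mem_support i).2 ⟨c, hc, Finsupp.mem_support_iff.2 h⟩))

theorem mem_supported_of_apply_eq_zero {σ : Type*} {s : Set σ} {p : MvPolynomial σ k}
    (hp : ∀ c ∈ p.support, ∀ i ∉ s, c i = 0) : p ∈ supported k s := by
  refine mem_supported.2 fun i hi => ?_
  obtain ⟨c, hc, hci⟩ := (mem_vars_iff_mem_support i).1 hi
  by_contra h
  exact Finsupp.mem_support_iff.1 hci (hp c hc i h)

theorem degree_lt_of_mem_supported_two {p : MvPolynomial (Fin 3) k}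
    (hp : p ∈ supported k ({2} : Set (Fin 3))) {d : Fin 3 →₀ ℕ} (hd : 1 ≤ d 0) :
    MonomialOrder.lex.degree p ≺[MonomialOrder.lex] d := by
  refine (MonomialOrder.degree_lt_iff (lex_lt_iff_fin_three.2 (Or.inl hd))).2 fun c hc => ?_
  refine lex_lt_iff_fin_three.2 (Or.inl ?_)
  rw [apply_eq_zero_of_mem_supported hp hc (by simp)]
  exact hd

theorem algEquiv_monomial_of_apply_zero {f : MvPolynomial (Fin 3) k ≃ₐ[k] MvPolynomial (Fin 3) k}
    {c : Fin 3 →₀ ℕ} (hc : c 0 = 0) (a : k) :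
    f (monomial c a) = C a * (f (X 1) ^ c 1 * f (X 2) ^ c 2) := by
  rw [monomial_eq, map_mul, algEquiv_apply_C, Finsupp.prod_fintype _ _ (by simp),
    Fin.prod_univ_three, hc, pow_zero, one_mul, map_mul, map_pow, map_pow]

theorem degree_X_two {f : MvPolynomial (Fin 3) k ≃ₐ[k] MvPolynomial (Fin 3) k} {c d : k}
    (hc : c ≠ 0) (h : f (X 2) = C c * X 2 + C d) :
    MonomialOrder.lex.degree (f (X 2)) = Finsupp.single 2 1 := by
  have h1 : MonomialOrder.lex.degree (C c * X 2 : MvPolynomial (Fin 3) k) = Finsupp.single 2 1 := by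
    rw [degree_C_mul_of_ne_zero _ hc, MonomialOrder.degree_X]
  rw [h, MonomialOrder.degree_add_of_lt, h1]
  rw [h1, MonomialOrder.degree_C, lex_lt_iff_fin_three]
  simp

theorem le_degree_algEquiv_apply {f : MvPolynomial (Fin 3) k ≃ₐ[k] MvPolynomial (Fin 3) k}
    {v : Fin 3 →₀ ℕ} (hv : MonomialOrder.lex.degree (f (X 1)) = v) (hv0 : 1 ≤ v 0)
    (hw : MonomialOrder.lex.degree (f (X 2)) = Finsupp.single 2 1) {p : MvPolynomial (Fin 3) k}
    (hp : p ∈ supported k ({1, 2} : Set (Fin 3))) (hp0 : p ≠ 0) :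
    MonomialOrder.lex.degree p 1 • v + MonomialOrder.lex.degree p 2 • Finsupp.single 2 1
      ≼[MonomialOrder.lex] MonomialOrder.lex.degree (f p) := by
  have hf1 : f (X 1) ≠ 0 := fun h => X_ne_zero 1 ((map_eq_zero_iff f f.injective).1 h)
  have hf2 : f (X 2) ≠ 0 := fun h => X_ne_zero 2 ((map_eq_zero_iff f f.injective).1 h)
  have hdeg : ∀ i j : ℕ, MonomialOrder.lex.degree (f (X 1) ^ i * f (X 2) ^ j) =
      i • v + j • Finsupp.single 2 1 := by
    intro i j
    rw [MonomialOrder.degree_mul (pow_ne_zero _ hf1) (pow_ne_zero _ hf2), MonomialOrder.degree_pow,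
      MonomialOrder.degree_pow, hv, hw]
  set e := MonomialOrder.lex.degree p with he
  have hz : ∀ c ∈ p.support, c 0 = 0 := fun c hc =>
    apply_eq_zero_of_mem_supported hp hc (by simp)
  have hemem : e ∈ p.support := MonomialOrder.degree_mem_support hp0
  refine MonomialOrder.le_degree (mem_support_iff.2 ?_)
  conv_lhs => rw [p.as_sum, map_sum, coeff_sum]
  rw [Finset.sum_eq_single_of_mem e hemem, algEquiv_monomial_of_apply_zero (hz e hemem), coeff_C_mul,
    ← hdeg]
  · exact mul_ne_zero (mem_support_iff.1 hemem) (MonomialOrder.coeff_degree_ne_zero_iff.2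
      (mul_ne_zero (pow_ne_zero _ hf1) (pow_ne_zero _ hf2)))
  · intro c hc hce
    rw [algEquiv_monomial_of_apply_zero (hz c hc), coeff_C_mul]
    refine mul_eq_zero_of_right _ (MonomialOrder.coeff_eq_zero_of_lt (m := MonomialOrder.lex) ?_)
    rw [hdeg]
    have h1 := lex_le_iff_fin_three.1 (MonomialOrder.le_degree hc)
    rw [← he, hz c hc, hz e hemem] at h1
    have h2 : ¬ (c 1 = e 1 ∧ c 2 = e 2) := by
      rintro ⟨h, h'⟩
      refine hce (Finsupp.ext fun i => ?_)
      fin_cases i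
      exacts [(hz c hc).trans (hz e hemem).symm, h, h']
    rw [lex_lt_iff_fin_three]
    rcases (show c 1 < e 1 ∨ c 1 = e 1 ∧ c 2 < e 2 by omega) with h | ⟨h, h'⟩
    · left
      simpa using Nat.mul_lt_mul_of_pos_right h hv0
    · right
      simp [h, h']

theorem lt_degree_algEquiv_apply {f : MvPolynomial (Fin 3) k ≃ₐ[k] MvPolynomial (Fin 3) k}
    {v : Fin 3 →₀ ℕ} (hv : MonomialOrder.lex.degree (f (X 1)) = v) (hv0 : 1 ≤ v 0)
    (hw : MonomialOrder.lex.degree (f (X 2)) = Finsupp.single 2 1) {p : MvPolynomial (Fin 3) k}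
    (hp : p ∈ supported k ({1, 2} : Set (Fin 3)))
    (hlin : ∀ (b : k) (q : MvPolynomial (Fin 3) k), q ∈ supported k ({2} : Set (Fin 3)) →
      p ≠ C b * X 1 + q) :
    v ≺[MonomialOrder.lex] MonomialOrder.lex.degree (f p) := by
  have hp0 : p ≠ 0 := fun h => hlin 0 0 (zero_mem _) (by simp [h])
  refine lt_of_lt_of_le ?_ (le_degree_algEquiv_apply hv hv0 hw hp hp0)
  set e := MonomialOrder.lex.degree p with he
  have hz : ∀ c ∈ p.support, c 0 = 0 := fun c hc =>
    apply_eq_zero_of_mem_supported hp hc (by simp)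
  have hle : ∀ c ∈ p.support, c 1 < e 1 ∨ (c 1 = e 1 ∧ c 2 ≤ e 2) := by
    intro c hc
    have h1 := lex_le_iff_fin_three.1 (MonomialOrder.le_degree hc)
    rw [← he, hz c hc, hz e (MonomialOrder.degree_mem_support hp0)] at h1
    omega
  have key : 2 ≤ e 1 ∨ (e 1 = 1 ∧ 1 ≤ e 2) := by
    by_contra hcon
    refine hlin (coeff (Finsupp.single 1 1) p) (p - C (coeff (Finsupp.single 1 1) p) * X 1)
      (mem_supported_of_apply_eq_zero ?_) (by ring)
    intro c hc i hi
    rw [mem_support_iff, coeff_sub, coeff_C_mul, coeff_X] at hc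
    have hne : Finsupp.single 1 1 ≠ c := by
      rintro rfl
      simp at hc
    rw [if_neg hne, mul_zero, sub_zero] at hc
    have h1 := hle c (mem_support_iff.2 hc)
    have h0 := hz c (mem_support_iff.2 hc)
    fin_cases i
    · exact h0
    · by_contra h
      refine hne (Finsupp.ext fun i => ?_)
      fin_cases i <;> simp at h ⊢ <;> omega
    · simp at hi
  rw [lex_lt_iff_fin_three]
  rcases key with h | ⟨h, h'⟩
  · left
    simp only [Finsupp.add_apply, Finsupp.smul_apply, smul_eq_mul]
    nlinarith
  · right
    simp [h]
    omega

/-- The state of an element of `C` reached by a reduced word ending in `K`. -/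
def IsStateK (f : MvPolynomial (Fin 3) k ≃ₐ[k] MvPolynomial (Fin 3) k) : Prop :=
  (∃ c d : k, c ≠ 0 ∧ f (X 2) = C c * X 2 + C d) ∧ 1 ≤ MonomialOrder.lex.degree (f (X 1)) 0 ∧
    MonomialOrder.lex.degree (f (X 0)) ≼[MonomialOrder.lex] MonomialOrder.lex.degree (f (X 1))

/-- The state of an element of `C` reached by a reduced word ending in `H`. -/
def IsStateH (f : MvPolynomial (Fin 3) k ≃ₐ[k] MvPolynomial (Fin 3) k) : Prop :=
  (∃ c d : k, c ≠ 0 ∧ f (X 2) = C c * X 2 + C d) ∧ 1 ≤ MonomialOrder.lex.degree (f (X 1)) 0 ∧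
    MonomialOrder.lex.degree (f (X 1)) ≺[MonomialOrder.lex] MonomialOrder.lex.degree (f (X 0))

theorem IsStateK.mul {f h : MvPolynomial (Fin 3) k ≃ₐ[k] MvPolynomial (Fin 3) k}
    (hf : IsStateK f) (hH : IsH k h) (hK : ¬ IsK k h) : IsStateH (f * h) := by
  obtain ⟨⟨c, d, hc, h2⟩, hv0, huv⟩ := hf
  obtain ⟨a, b, γ, δ, P, Q, ha, hb, hγ, hP, hQ, e0, e1, e2⟩ := hH
  have hlin : ∀ (b : k) (q : MvPolynomial (Fin 3) k), q ∈ supported k ({2} : Set (Fin 3)) →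
      P ≠ C b * X 1 + q := by
    rintro β q hq rfl
    refine hK ⟨a, β, 0, b, γ, δ, q, Q, by simp [ha, hb], hγ, hq, hQ, ?_, ?_, e2⟩
    · rw [e0, add_assoc]
    · simp [e1]
  have hlt := lt_degree_algEquiv_apply rfl hv0 (degree_X_two hc h2) hP hlin
  have d1 : MonomialOrder.lex.degree ((f * h) (X 1)) = MonomialOrder.lex.degree (f (X 1)) := by
    rw [AlgEquiv.mul_apply, e1, map_add, map_mul, algEquiv_apply_C, MonomialOrder.degree_add_of_lt,
      degree_C_mul_of_ne_zero _ hb]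
    rw [degree_C_mul_of_ne_zero _ hb]
    exact degree_lt_of_mem_supported_two (supported_two_of_X_two h2 hQ) hv0
  have d0 : MonomialOrder.lex.degree ((f * h) (X 0)) = MonomialOrder.lex.degree (f P) := by
    rw [AlgEquiv.mul_apply, e0, map_add, map_mul, algEquiv_apply_C,
      MonomialOrder.degree_add_eq_right_of_lt]
    rw [degree_C_mul_of_ne_zero _ ha]
    exact huv.trans_lt hlt
  refine ⟨⟨γ * c, γ * d + δ, mul_ne_zero hγ hc, ?_⟩, ?_, ?_⟩
  · simp only [AlgEquiv.mul_apply, e2, map_add, map_mul, algEquiv_apply_C, h2]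
    ring
  · rwa [d1]
  · rwa [d0, d1]

theorem IsStateH.mul {f h : MvPolynomial (Fin 3) k ≃ₐ[k] MvPolynomial (Fin 3) k}
    (hf : IsStateH f) (hK : IsK k h) (hH : ¬ IsH k h) : IsStateK (f * h) := by
  obtain ⟨⟨c, d, hc, h2⟩, hv0, huv⟩ := hf
  obtain ⟨a, b, a', b', γ, δ, P, Q, hD, hγ, hP, hQ, e0, e1, e2⟩ := hK
  have ha' : a' ≠ 0 := by
    rintro rfl
    simp only [zero_mul, sub_zero, mul_ne_zero_iff] at hD
    refine hH ⟨a, b', γ, δ, C b * X 1 + P, Q, hD.1, hD.2, hγ, ?_, hQ, ?_, ?_, e2⟩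
    · exact add_mem (mul_mem (C_mem_supported _ _) (X_mem_supported.2 (by simp)))
        (supported_mono (by simp) hP)
    · rw [e0, add_assoc]
    · simp [e1]
  have hu0 : 1 ≤ MonomialOrder.lex.degree (f (X 0)) 0 := by
    have := lex_lt_iff_fin_three.1 huv
    omega
  have d1 : MonomialOrder.lex.degree ((f * h) (X 1)) = MonomialOrder.lex.degree (f (X 0)) := by
    rw [AlgEquiv.mul_apply, e1, map_add, map_add, map_mul, map_mul, algEquiv_apply_C,
      algEquiv_apply_C, add_assoc, MonomialOrder.degree_add_of_lt, degree_C_mul_of_ne_zero _ ha']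
    rw [degree_C_mul_of_ne_zero _ ha']
    exact MonomialOrder.degree_add_le.trans_lt (sup_lt_iff.2
      ⟨(degree_C_mul_le _ _ _).trans_lt huv,
        degree_lt_of_mem_supported_two (supported_two_of_X_two h2 hQ) hu0⟩)
  refine ⟨⟨γ * c, γ * d + δ, mul_ne_zero hγ hc, ?_⟩, ?_, ?_⟩
  · simp only [AlgEquiv.mul_apply, e2, map_add, map_mul, algEquiv_apply_C, h2]
    ring
  · rwa [d1]
  · rw [d1, AlgEquiv.mul_apply, e0, map_add, map_add, map_mul, map_mul, algEquiv_apply_C,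
      algEquiv_apply_C]
    exact degree_add_le_of_le (degree_add_le_of_le (degree_C_mul_le _ _ _)
      ((degree_C_mul_le _ _ _).trans huv.le))
      (degree_lt_of_mem_supported_two (supported_two_of_X_two h2 hP) hu0).le

theorem IsStateH.not_isK {f : MvPolynomial (Fin 3) k ≃ₐ[k] MvPolynomial (Fin 3) k}
    (hf : IsStateH f) : ¬ IsK k f := by
  rintro ⟨a, b, a', b', γ, δ, P, Q, hD, hγ, hP, hQ, e0, e1, e2⟩
  obtain ⟨-, hv0, huv⟩ := hf
  refine huv.not_ge ?_
  have h0 : Finsupp.single 0 1 ≼[MonomialOrder.lex] MonomialOrder.lex.degree (f (X 1)) := by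
    rw [lex_le_iff_fin_three]
    simp
    omega
  refine le_trans ?_ h0
  rw [e0]
  refine degree_add_le_of_le (degree_add_le_of_le ((degree_C_mul_le _ _ _).trans ?_)
      ((degree_C_mul_le _ _ _).trans ?_)) (degree_lt_of_mem_supported_two hP (by simp)).le
  · rw [MonomialOrder.degree_X]
  · rw [MonomialOrder.degree_X, lex_le_iff_fin_three]
    simp

theorem StrongTitsAlternative.of_injective {G Q : Type*} [Group G] [Group Q] (f : G →* Q)
    (hf : Function.Injective f) (h : StrongTitsAlternative Q) : StrongTitsAlternative G := by
  refine .of_isSolvable_ker f ?_ h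
  rw [(MonoidHom.ker_eq_bot_iff f).2 hf]
  infer_instance

variable (k) in
theorem Cgroup_eq_sup : Cgroup k = subgroupK k ⊔ subgroupH k :=
  (Subgroup.closure_union (G := MvPolynomial (Fin 3) k ≃ₐ[k] MvPolynomial (Fin 3) k)
    {f | IsK k f} {f | IsH k f}).trans (congrArg₂ _ (Subgroup.closure_eq (subgroupK k))
      (Subgroup.closure_eq (subgroupH k)))

variable (k) in
theorem Cgroup_strongTitsAlternative_of_units_matrix
    (h : StrongTitsAlternative (Matrix (Fin 2) (Fin 2) k)ˣ) : StrongTitsAlternative (Cgroup k) := by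
  have hKC : subgroupK k ≤ Cgroup k := (Cgroup_eq_sup k).symm ▸ le_sup_left
  have hHC : subgroupH k ≤ Cgroup k := (Cgroup_eq_sup k).symm ▸ le_sup_right
  have hs : IsK k (renameEquiv k (Equiv.swap 0 1)) :=
    ⟨0, 1, 1, 0, 1, 0, 0, 0, by simp, by simp, zero_mem _, zero_mem _, by simp, by simp,
      by simp [Equiv.swap_apply_of_ne_of_ne]⟩
  have hac : (Subgroup.cosetGraph ((subgroupK k).subgroupOf (Cgroup k))
      ((subgroupH k).subgroupOf (Cgroup k))).IsAcyclic := by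
    refine Subgroup.cosetGraph_isAcyclic (P := fun f => IsStateK f.1) (Q := fun f => IsStateH f.1)
      (s := ⟨_, hKC hs⟩) hs ?_ (fun f η hf hη hη' => hf.mul hη hη')
      (fun f η hf hη hη' => hf.mul hη hη') (fun f hf => hf.not_isK)
    refine ⟨⟨1, 0, one_ne_zero, by simp [Equiv.swap_apply_of_ne_of_ne]⟩, ?_, ?_⟩
    · simp [MonomialOrder.degree_X]
    · simp [MonomialOrder.degree_X, lex_le_iff_fin_three]
  refine Subgroup.strongTitsAlternative_of_cosetGraph (ℓ := 6) ?_ hac ?_ ?_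
  · rw [← Subgroup.subgroupOf_sup hKC hHC, ← Cgroup_eq_sup, Subgroup.subgroupOf_self]
  · exact derivedSeries_eq_bot_of_injective (Subgroup.subgroupOfEquivOfLe hHC).injective
      (f := (Subgroup.subgroupOfEquivOfLe hHC).toMonoidHom) (derivedSeries_subgroupH k)
  · have hK := StrongTitsAlternative.of_isSolvable_ker (linearPart k).toHomUnits
      (isSolvable_ker_linearPart k) h
    exact StrongTitsAlternative.of_injective (Subgroup.subgroupOfEquivOfLe hKC).toMonoidHom
      (Subgroup.subgroupOfEquivOfLe hKC).injective hK

end LexDegree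

/-! ### Embeddings of countable fields into normed fields -/

section Embeddings

theorem nonempty_algHom_of_countable {R F L : Type*} [CommRing R] [Field F] [Field L]
    [Algebra R F] [Algebra R L] [FaithfulSMul R F] [FaithfulSMul R L] [Countable F]
    [Uncountable L] [IsAlgClosed L] : Nonempty (F →ₐ[R] L) := by
  have hRF := FaithfulSMul.algebraMap_injective R F
  have : Nontrivial R := by
    rw [← not_subsingleton_iff_nontrivial]
    intro h
    exact zero_ne_one (α := F) (by
      rw [← map_zero (algebraMap R F), ← map_one (algebraMap R F), Subsingleton.elim (0 : R) 1])
  have : Countable R := hRF.countable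
  obtain ⟨s, hs⟩ := exists_isTranscendenceBasis R F
  obtain ⟨t, ht⟩ := exists_isTranscendenceBasis R L
  have hinf : Infinite t := by
    by_contra h
    rw [not_infinite_iff_finite] at h
    have h1 := IsAlgClosed.cardinal_le_max_transcendence_basis _ ht
    have h2 : Cardinal.lift (Cardinal.mk L) ≤ Cardinal.aleph0 :=
      h1.trans (max_le (max_le (Cardinal.lift_le_aleph0.2 Cardinal.mk_le_aleph0)
        (Cardinal.lift_le_aleph0.2 Cardinal.mk_le_aleph0)) le_rfl)
    rw [Cardinal.lift_le_aleph0, Cardinal.mk_le_aleph0_iff] at h2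
    exact not_countable (α := L) h2
  obtain ⟨e, he⟩ := exists_injective_nat s
  let A := Algebra.adjoin R (Set.range ((↑) : s → F))
  have hind := ht.1.comp (fun i => Infinite.natEmbedding t (e i))
    ((Infinite.natEmbedding t).injective.comp he)
  let ψ : A →ₐ[R] L := (MvPolynomial.aeval (fun i => (Infinite.natEmbedding t (e i) : L))).comp
    hs.1.aevalEquiv.symm.toAlgHom
  have hψ : Function.Injective ψ :=
    Function.Injective.comp (g := MvPolynomial.aeval _) hind hs.1.aevalEquiv.symm.injective
  let _ : Algebra A L := ψ.toRingHom.toAlgebra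
  have : FaithfulSMul A L := (faithfulSMul_iff_algebraMap_injective A L).2 hψ
  have : Algebra.IsAlgebraic A F := hs.isAlgebraic
  let f : F →ₐ[A] L := IsAlgClosed.lift
  refine ⟨{ f.toRingHom with commutes' := fun r => ?_ }⟩
  change f (algebraMap A F (algebraMap R A r)) = _
  rw [f.commutes]
  exact ψ.commutes r

theorem exists_ringHom_of_transcendental {F L : Type*} [Field F] [CharZero F] [Field L] [CharZero L]
    [Countable F] [Uncountable L] [IsAlgClosed L] {x : F} {y : L} (hx : Transcendental ℚ x)
    (hy : Transcendental ℚ y) : ∃ φ : F →+* L, φ x = y := by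
  let _ : Algebra (Polynomial ℚ) F := (Polynomial.aeval x).toRingHom.toAlgebra
  let _ : Algebra (Polynomial ℚ) L := (Polynomial.aeval y).toRingHom.toAlgebra
  have : FaithfulSMul (Polynomial ℚ) F := (faithfulSMul_iff_algebraMap_injective _ _).2
    (transcendental_iff_injective.1 hx)
  have : FaithfulSMul (Polynomial ℚ) L := (faithfulSMul_iff_algebraMap_injective _ _).2
    (transcendental_iff_injective.1 hy)
  obtain ⟨φ⟩ := nonempty_algHom_of_countable (R := Polynomial ℚ) (F := F) (L := L)
  refine ⟨φ, ?_⟩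
  have h1 : algebraMap (Polynomial ℚ) F Polynomial.X = x := Polynomial.aeval_X x
  have h2 : algebraMap (Polynomial ℚ) L Polynomial.X = y := Polynomial.aeval_X y
  rw [← h1, ← h2]
  exact φ.commutes _

theorem exists_ringHom_of_isAlgebraic {F L : Type*} [Field F] [CharZero F] [Field L] [CharZero L]
    [Countable F] [Uncountable L] [IsAlgClosed L] {x : F} {y : L} (hx : IsAlgebraic ℚ x)
    (hy : (minpoly ℚ x).eval₂ (algebraMap ℚ L) y = 0) : ∃ φ : F →+* L, φ x = y := by
  have : Fact (Irreducible (minpoly ℚ x)) := ⟨minpoly.irreducible hx.isIntegral⟩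
  let _ : Algebra (AdjoinRoot (minpoly ℚ x)) F :=
    (AdjoinRoot.lift (algebraMap ℚ F) x (minpoly.aeval ℚ x)).toAlgebra
  let _ : Algebra (AdjoinRoot (minpoly ℚ x)) L :=
    (AdjoinRoot.lift (algebraMap ℚ L) y hy).toAlgebra
  obtain ⟨φ⟩ := nonempty_algHom_of_countable (R := AdjoinRoot (minpoly ℚ x)) (F := F) (L := L)
  refine ⟨φ, ?_⟩
  have h1 : algebraMap (AdjoinRoot (minpoly ℚ x)) F (AdjoinRoot.root _) = x :=
    AdjoinRoot.lift_root _
  have h2 : algebraMap (AdjoinRoot (minpoly ℚ x)) L (AdjoinRoot.root _) = y :=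
    AdjoinRoot.lift_root _
  exact (congrArg φ h1.symm).trans ((φ.commutes _).trans h2)

theorem norm_coeff_prod_X_sub_C_le_one {L : Type*} [NormedField L] [IsUltrametricDist L]
    (s : Multiset L) (hs : ∀ r ∈ s, ‖r‖ ≤ 1) (n : ℕ) :
    ‖((s.map fun r => Polynomial.X - Polynomial.C r).prod).coeff n‖ ≤ 1 := by
  induction s using Multiset.induction generalizing n with
  | empty =>
    rw [Multiset.map_zero, Multiset.prod_zero, Polynomial.coeff_one]
    split_ifs <;> simp
  | cons a s ih =>
    have ih' := ih fun r hr => hs r (Multiset.mem_cons_of_mem hr)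
    have ha := hs a (Multiset.mem_cons_self a s)
    rw [Multiset.map_cons, Multiset.prod_cons, sub_mul, Polynomial.coeff_sub, Polynomial.coeff_C_mul,
      sub_eq_add_neg]
    refine (IsUltrametricDist.norm_add_le_max _ _).trans (max_le ?_ ?_)
    · cases n with
      | zero => simp
      | succ n => simpa [Polynomial.coeff_X_mul] using ih' n
    · rw [norm_neg, norm_mul]
      exact mul_le_one₀ ha (norm_nonneg _) (ih' n)

theorem exists_root_one_lt_norm {L : Type*} [NormedField L] [IsUltrametricDist L] [IsAlgClosed L]
    {q : Polynomial L} (hq : q.Monic) {n : ℕ} (hn : 1 < ‖q.coeff n‖) :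
    ∃ r, q.eval r = 0 ∧ 1 < ‖r‖ := by
  by_contra! h
  have hs := (IsAlgClosed.splits q).eq_prod_roots_of_monic hq
  have := norm_coeff_prod_X_sub_C_le_one q.roots (fun r hr => h r (Polynomial.isRoot_of_mem_roots hr)) n
  rw [← hs] at this
  linarith

instance PadicAlgCl.uncountable (p : ℕ) [Fact p.Prime] : Uncountable (PadicAlgCl p) := by
  have : Uncountable ℚ_[p] := by
    rw [← Cardinal.aleph0_lt_mk_iff]
    exact Cardinal.aleph0_lt_continuum.trans_le
      (continuum_le_cardinal_of_nontriviallyNormedField ℚ_[p])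
  exact (algebraMap ℚ_[p] (PadicAlgCl p)).injective.uncountable

theorem exists_padic_norm_gt_one {q : ℚ} (hq : q.den ≠ 1) :
    ∃ (p : ℕ) (_ : Fact p.Prime), 1 < ‖(q : ℚ_[p])‖ := by
  obtain ⟨p, hp, hpd⟩ := Nat.exists_prime_and_dvd hq
  refine ⟨p, ⟨hp⟩, ?_⟩
  have : Fact p.Prime := ⟨hp⟩
  have hnum : ‖(q.num : ℚ_[p])‖ = 1 := by
    refine le_antisymm (Padic.norm_int_le_one _) (not_lt.1 fun h => ?_)
    rw [Padic.norm_intCast_lt_one_iff] at h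
    exact Nat.Prime.not_coprime_iff_dvd.2 ⟨p, hp, Int.natCast_dvd.1 h, hpd⟩ q.reduced
  have hden : ‖(q.den : ℚ_[p])‖ < 1 := Padic.norm_natCast_lt_one_iff.2 hpd
  have h : ‖(q : ℚ_[p])‖ * ‖(q.den : ℚ_[p])‖ = 1 := by
    rw [← norm_mul, ← hnum]
    exact congrArg norm (by exact_mod_cast Rat.mul_den_eq_num q)
  nlinarith [norm_nonneg (q : ℚ_[p]), norm_nonneg (q.den : ℚ_[p])]

/-- An element of a countable field of characteristic zero that is not a root of unity has norm
different from one under some embedding into a normed field. -/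
theorem exists_ringHom_norm_ne_one {F : Type*} [Field F] [CharZero F] [Countable F] {x : F}
    (hx : ∀ n, 0 < n → x ^ n ≠ 1) :
    ∃ (L : Type) (_ : NormedField L) (φ : F →+* L), ‖φ x‖ ≠ 1 := by
  have : Uncountable ℂ := by
    rw [← Cardinal.aleph0_lt_mk_iff, Cardinal.mk_complex]
    exact Cardinal.aleph0_lt_continuum
  by_cases halg : IsAlgebraic ℚ x
  · by_cases hC : ∃ μ : ℂ, (minpoly ℚ x).eval₂ (algebraMap ℚ ℂ) μ = 0 ∧ ‖μ‖ ≠ 1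
    · obtain ⟨μ, hμ, hμ1⟩ := hC
      obtain ⟨φ, hφ⟩ := exists_ringHom_of_isAlgebraic halg hμ
      exact ⟨ℂ, inferInstance, φ, hφ ▸ hμ1⟩
    · push Not at hC
      have hxint : ¬ IsIntegral ℤ x := by
        intro hxint
        let y : IntermediateField.adjoin ℚ {x} := IntermediateField.AdjoinSimple.gen ℚ x
        have : FiniteDimensional ℚ (IntermediateField.adjoin ℚ {x}) :=
          IntermediateField.adjoin.finiteDimensional halg.isIntegral
        have : NumberField (IntermediateField.adjoin ℚ {x}) := ⟨⟩
        have hy : IsIntegral ℤ y :=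
          (isIntegral_algebraMap_iff (algebraMap (IntermediateField.adjoin ℚ {x}) F).injective).1 hxint
        have hnorm : ∀ φ : IntermediateField.adjoin ℚ {x} →+* ℂ, ‖φ y‖ = 1 := fun φ => hC _ (by
          have h1 : Polynomial.aeval y (minpoly ℚ x) = 0 := by
            rw [← IntermediateField.minpoly_gen]
            exact minpoly.aeval _ _
          have h2 := congrArg φ h1
          rwa [map_zero, Polynomial.aeval_def, Polynomial.hom_eval₂,
            Subsingleton.elim (φ.comp _) (algebraMap ℚ ℂ)] at h2)
        obtain ⟨n, hn, h⟩ := NumberField.Embeddings.pow_eq_one_of_norm_eq_one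
          (IntermediateField.adjoin ℚ {x}) ℂ hy hnorm
        exact hx n hn (congrArg Subtype.val h)
      have hden : ∃ n, ((minpoly ℚ x).coeff n).den ≠ 1 := by
        by_contra! h
        apply hxint
        have hlift : minpoly ℚ x ∈ Polynomial.lifts (Int.castRingHom ℚ) := by
          rw [Polynomial.lifts_iff_coeff_lifts]
          intro n
          exact ⟨((minpoly ℚ x).coeff n).num, (Rat.den_eq_one_iff _).1 (h n)⟩
        obtain ⟨r, hr, -, hr1⟩ := Polynomial.lifts_and_degree_eq_and_monic hlift
          (minpoly.monic halg.isIntegral)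
        refine ⟨r, hr1, ?_⟩
        have h1 := minpoly.aeval ℚ x
        rw [← hr, Polynomial.aeval_def, Polynomial.eval₂_map] at h1
        rwa [Subsingleton.elim (algebraMap ℤ F) ((algebraMap ℚ F).comp (Int.castRingHom ℚ))]
      obtain ⟨n, hn⟩ := hden
      obtain ⟨p, hp, hpn⟩ := exists_padic_norm_gt_one hn
      obtain ⟨μ, hμ, hμ1⟩ := exists_root_one_lt_norm (L := PadicAlgCl p)
        (q := (minpoly ℚ x).map ((algebraMap ℚ_[p] (PadicAlgCl p)).comp (algebraMap ℚ ℚ_[p])))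
        ((minpoly.monic halg.isIntegral).map _) (n := n) (by
          rw [Polynomial.coeff_map, RingHom.comp_apply, PadicAlgCl.norm_extends]
          exact hpn)
      rw [Polynomial.eval_map, Subsingleton.elim (RingHom.comp _ _) (algebraMap ℚ (PadicAlgCl p))] at hμ
      obtain ⟨φ, hφ⟩ := exists_ringHom_of_isAlgebraic halg hμ
      exact ⟨PadicAlgCl p, inferInstance, φ, hφ ▸ hμ1.ne'⟩
  · have hl : Transcendental ℚ (algebraMap ℝ ℂ (liouvilleNumber (2 : ℕ))) := by
      rw [transcendental_algebraMap_iff (algebraMap ℝ ℂ).injective]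
      intro h
      exact transcendental_liouvilleNumber le_rfl ((IsFractionRing.isAlgebraic_iff ℤ ℚ ℝ).2 h)
    obtain ⟨μ, hμ, hμ1⟩ : ∃ μ : ℂ, Transcendental ℚ μ ∧ ‖μ‖ ≠ 1 := by
      by_cases h : ‖algebraMap ℝ ℂ (liouvilleNumber (2 : ℕ))‖ = 1
      · refine ⟨2 * algebraMap ℝ ℂ (liouvilleNumber (2 : ℕ)), fun h2 => hl ?_, ?_⟩
        · have h3 : IsAlgebraic ℚ ((2 : ℂ)⁻¹) := by
            simpa using isAlgebraic_algebraMap (R := ℚ) (A := ℂ) ((2 : ℚ)⁻¹)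
          simpa using h3.mul h2
        · rw [norm_mul, h]
          norm_num
      · exact ⟨_, hl, h⟩
    obtain ⟨φ, hφ⟩ := exists_ringHom_of_transcendental halg hμ
    exact ⟨ℂ, inferInstance, φ, hφ ▸ hμ1⟩

end Embeddings

/-! ### Ping-pong for `SL₂` over a normed field -/

section PingPong

open Matrix

theorem Matrix.SpecialLinearGroup.mul_apply_two {R : Type*} [CommRing R]
    (A B : SpecialLinearGroup (Fin 2) R) (i j : Fin 2) :
    (A * B) i j = A i 0 * B 0 j + A i 1 * B 1 j := by
  rw [SpecialLinearGroup.coe_mul, Matrix.mul_apply, Fin.sum_univ_two]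

theorem Matrix.SpecialLinearGroup.inv_apply_two {R : Type*} [CommRing R]
    (A : SpecialLinearGroup (Fin 2) R) :
    A⁻¹ 0 0 = A 1 1 ∧ A⁻¹ 0 1 = -A 0 1 ∧ A⁻¹ 1 0 = -A 1 0 ∧ A⁻¹ 1 1 = A 0 0 := by
  rw [SpecialLinearGroup.SL2_inv_expl]
  exact ⟨rfl, rfl, rfl, rfl⟩

theorem Matrix.SpecialLinearGroup.det_two {R : Type*} [CommRing R]
    (A : SpecialLinearGroup (Fin 2) R) : A 0 0 * A 1 1 - A 0 1 * A 1 0 = 1 := by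
  rw [← Matrix.det_fin_two, A.det_coe]

theorem norm_linear_le_of_lt {L : Type*} [NormedField L] {R : ℝ} (hR : 1 ≤ R) {α β γ δ s t : L}
    (hγ : ‖α‖ + ‖β‖ + ‖δ‖ ≤ R * ‖γ‖) (h : R * ‖t‖ < ‖s‖) :
    ‖α * s + β * t‖ ≤ R * ‖γ * s + δ * t‖ := by
  have h1 : ‖t‖ ≤ ‖s‖ := by nlinarith [norm_nonneg t]
  have h2 : ‖α * s + β * t‖ ≤ ‖α‖ * ‖s‖ + ‖β‖ * ‖s‖ := by
    refine (norm_add_le _ _).trans ?_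
    rw [norm_mul, norm_mul]
    gcongr
  have h3 : ‖γ‖ * ‖s‖ - ‖δ‖ * ‖t‖ ≤ ‖γ * s + δ * t‖ := by
    have := norm_sub_norm_le (γ * s) (-(δ * t))
    rwa [norm_neg, norm_mul, norm_mul, sub_neg_eq_add] at this
  have h4 : ‖δ‖ * (R * ‖t‖) ≤ ‖δ‖ * ‖s‖ := by gcongr
  have h5 := mul_le_mul_of_nonneg_right hγ (norm_nonneg s)
  have h6 := mul_le_mul_of_nonneg_left h3 (zero_le_one.trans hR)
  nlinarith

theorem Matrix.SpecialLinearGroup.diagonal_pow_apply {R : Type*} [CommRing R]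
    {A : SpecialLinearGroup (Fin 2) R} (h01 : A 0 1 = 0) (h10 : A 1 0 = 0) (n : ℕ) :
    (A ^ n) 0 0 = A 0 0 ^ n ∧ (A ^ n) 0 1 = 0 ∧ (A ^ n) 1 0 = 0 ∧ (A ^ n) 1 1 = A 1 1 ^ n := by
  induction n with
  | zero => simp
  | succ n ih =>
    obtain ⟨h1, h2, h3, h4⟩ := ih
    simp only [pow_succ _ n, SpecialLinearGroup.mul_apply_two, h1, h2, h3, h4, h01, h10]
    simp

theorem containsNonabelianFree_of_one_lt_norm {G L : Type*} [Group G] [NormedField L]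
    (ρ : G →* SpecialLinearGroup (Fin 2) L) {g h : G} (h01 : ρ g 0 1 = 0) (h10 : ρ g 1 0 = 0)
    (hg : 1 < ‖ρ g 0 0‖) (hh : ∀ i j, ρ h i j ≠ 0) : ContainsNonabelianFree G := by
  obtain ⟨R, hR, hRij⟩ : ∃ R : ℝ, 1 ≤ R ∧ ∀ i j,
      ‖ρ h 0 0‖ + ‖ρ h 0 1‖ + ‖ρ h 1 0‖ + ‖ρ h 1 1‖ ≤ R * ‖ρ h i j‖ := by
    have hfin : ∀ i j, ∀ᶠ R : ℝ in Filter.atTop,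
        ‖ρ h 0 0‖ + ‖ρ h 0 1‖ + ‖ρ h 1 0‖ + ‖ρ h 1 1‖ ≤ R * ‖ρ h i j‖ := fun i j =>
      (Filter.tendsto_id.atTop_mul_const (norm_pos_iff.2 (hh i j))).eventually_ge_atTop _
    exact ((Filter.eventually_ge_atTop 1).and
      (Filter.eventually_all.2 fun i => Filter.eventually_all.2 fun j => hfin i j)).exists
  obtain ⟨N, hN⟩ := pow_unbounded_of_one_lt R hg
  obtain ⟨e00, e01, e10, e11⟩ := SpecialLinearGroup.diagonal_pow_apply h01 h10 N
  rw [← map_pow] at e00 e01 e10 e11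
  set a := g ^ N with ha
  set μ := ρ a 0 0 with hμ
  rw [← norm_pow, ← e00] at hN
  have hμ1 : μ * ρ a 1 1 = 1 := by
    have := (ρ a).det_two
    rwa [e01, zero_mul, sub_zero] at this
  have hμn : ‖μ‖ * ‖ρ a 1 1‖ = 1 := by rw [← norm_mul, hμ1, norm_one]
  have hpos : 0 < ‖μ‖ := by linarith
  have hR0 : 0 < R := by linarith
  have hsq : R * R < ‖μ‖ * ‖μ‖ := by nlinarith
  have contract : ∀ {s t : L}, ‖t‖ ≤ R * ‖s‖ → (s ≠ 0 ∨ t ≠ 0) →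
      R * ‖ρ a 1 1 * t‖ < ‖μ * s‖ := by
    intro s t hst h0
    have hs : 0 < ‖s‖ := by
      refine norm_pos_iff.2 fun hs => ?_
      rw [hs, norm_zero, mul_zero, norm_le_zero_iff] at hst
      exact h0.elim (fun h => h hs) (fun h => h hst)
    rw [norm_mul, norm_mul]
    refine lt_of_mul_lt_mul_left (a := ‖μ‖) ?_ hpos.le
    calc ‖μ‖ * (R * (‖ρ a 1 1‖ * ‖t‖)) = R * ‖t‖ := by linear_combination R * ‖t‖ * hμn
      _ ≤ R * (R * ‖s‖) := by gcongr
      _ < ‖μ‖ * (‖μ‖ * ‖s‖) := by nlinarith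
  have col : ∀ s : SpecialLinearGroup (Fin 2) L, s 0 0 ≠ 0 ∨ s 1 0 ≠ 0 := by
    intro s
    by_contra! h0
    have := s.det_two
    simp [h0.1, h0.2] at this
  have apart : ∀ s t : SpecialLinearGroup (Fin 2) L, t = (ρ h)⁻¹ * s →
      (R * ‖s 1 0‖ < ‖s 0 0‖ ∨ R * ‖s 0 0‖ < ‖s 1 0‖) →
        ‖t 0 0‖ ≤ R * ‖t 1 0‖ ∧ ‖t 1 0‖ ≤ R * ‖t 0 0‖ := by
    rintro s t rfl hs
    obtain ⟨i00, i01, i10, i11⟩ := (ρ h).inv_apply_two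
    simp only [SpecialLinearGroup.mul_apply_two, i00, i01, i10, i11]
    have n00 := norm_nonneg (ρ h 0 0)
    have n01 := norm_nonneg (ρ h 0 1)
    have n10 := norm_nonneg (ρ h 1 0)
    have n11 := norm_nonneg (ρ h 1 1)
    have r00 := hRij 0 0
    have r01 := hRij 0 1
    have r10 := hRij 1 0
    have r11 := hRij 1 1
    obtain hs | hs := hs
    · constructor <;> refine norm_linear_le_of_lt hR ?_ hs <;> simp only [norm_neg] <;> linarith
    · rw [add_comm (_ * s 0 0), add_comm (_ * s 0 0)]
      constructor <;> refine norm_linear_le_of_lt hR ?_ hs <;> simp only [norm_neg] <;> linarith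
  let : MulAction G (SpecialLinearGroup (Fin 2) L) := MulAction.compHom _ ρ
  have smul_def : ∀ (x : G) (s : SpecialLinearGroup (Fin 2) L), x • s = ρ x * s := fun _ _ => rfl
  let w : Fin 2 → G := ![1, h]
  let X : Set (SpecialLinearGroup (Fin 2) L) := {s | R * ‖s 1 0‖ < ‖s 0 0‖}
  let Y : Set (SpecialLinearGroup (Fin 2) L) := {s | R * ‖s 0 0‖ < ‖s 1 0‖}
  have hXY : ∀ t, t ∈ X → t ∉ Y := by
    intro t (h1 : R * ‖t 1 0‖ < ‖t 0 0‖) (h2 : R * ‖t 0 0‖ < ‖t 1 0‖)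
    nlinarith [norm_nonneg (t 0 0), norm_nonneg (t 1 0)]
  have far : ∀ i j, i ≠ j → ∀ s, (ρ (w i))⁻¹ * s ∈ X ∪ Y → (ρ (w j))⁻¹ * s ∈ X ∪ Y → False := by
    have key : ∀ s, s ∈ X ∪ Y → (ρ h)⁻¹ * s ∈ X ∪ Y → False := fun s h1 h2 =>
      h2.elim (apart s _ rfl h1).1.not_gt (apart s _ rfl h1).2.not_gt
    have hw0 : ∀ s, (ρ (w 0))⁻¹ * s = s := by simp [w]
    intro i j hij s
    fin_cases i <;> fin_cases j
    · exact absurd rfl hij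
    · simp only [Fin.zero_eta, Fin.mk_one, hw0]
      exact key s
    · simp only [Fin.zero_eta, Fin.mk_one, hw0]
      exact fun h1 h2 => key s h2 h1
    · exact absurd rfl hij
  refine containsNonabelianFree_of_ping_pong (fun i => w i * a * (w i)⁻¹)
    (fun i => {s | (ρ (w i))⁻¹ * s ∈ X}) (fun i => {s | (ρ (w i))⁻¹ * s ∈ Y})
    (fun i => ⟨ρ (w i), ?_⟩) ?_ ?_ ?_ ?_ ?_
  · rw [Set.mem_ofPred_eq, inv_mul_cancel]
    simp [X]
  · exact fun i j hij => Set.disjoint_left.2 fun s h1 h2 => far i j hij s (.inl h1) (.inl h2)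
  · exact fun i j hij => Set.disjoint_left.2 fun s h1 h2 => far i j hij s (.inr h1) (.inr h2)
  · intro i j
    refine Set.disjoint_left.2 fun s h1 h2 => ?_
    by_cases hij : i = j
    · subst hij
      exact hXY _ h1 h2
    · exact far i j hij s (.inl h1) (.inr h2)
  · intro i y hy
    have : (ρ (w i))⁻¹ * (w i * a * (w i)⁻¹) • y = ρ a * ((ρ (w i))⁻¹ * y) := by
      simp [smul_def, mul_assoc]
    rw [Set.mem_ofPred_eq, this]
    change (ρ (w i))⁻¹ * y ∉ Y at hy
    generalize (ρ (w i))⁻¹ * y = s at hy ⊢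
    have := contract (not_lt.1 hy) (col s)
    simpa [X, SpecialLinearGroup.mul_apply_two, e01, e10] using this
  · intro i y hy
    have : (ρ (w i))⁻¹ * (w i * a * (w i)⁻¹)⁻¹ • y = (ρ a)⁻¹ * ((ρ (w i))⁻¹ * y) := by
      simp [smul_def, mul_assoc]
    rw [Set.mem_ofPred_eq, this]
    change (ρ (w i))⁻¹ * y ∉ X at hy
    generalize (ρ (w i))⁻¹ * y = s at hy ⊢
    have := contract (not_lt.1 hy) (col s).symm
    obtain ⟨i00, i01, i10, i11⟩ := (ρ a).inv_apply_two
    simpa [Y, SpecialLinearGroup.mul_apply_two, -SpecialLinearGroup.coe_inv, i00, i01, i10, i11,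
      e01, e10] using this

theorem containsNonabelianFree_of_norm_ne_one {G L : Type*} [Group G] [NormedField L]
    (ρ : G →* SpecialLinearGroup (Fin 2) L) {g h : G} (h01 : ρ g 0 1 = 0) (h10 : ρ g 1 0 = 0)
    (hg : ‖ρ g 0 0‖ ≠ 1) (hh : ∀ i j, ρ h i j ≠ 0) : ContainsNonabelianFree G := by
  obtain hg | hg := hg.lt_or_gt
  · obtain ⟨i00, i01, i10, -⟩ := (ρ g).inv_apply_two
    refine containsNonabelianFree_of_one_lt_norm ρ (g := g⁻¹) (h := h) ?_ ?_ ?_ hh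
    · rw [map_inv, i01, h01, neg_zero]
    · rw [map_inv, i10, h10, neg_zero]
    · rw [map_inv, i00]
      have hdet := (ρ g).det_two
      rw [h01, zero_mul, sub_zero] at hdet
      have hn := congrArg norm hdet
      rw [norm_mul, norm_one] at hn
      nlinarith [norm_nonneg (ρ g 0 0), norm_nonneg (ρ g 1 1)]
  · exact containsNonabelianFree_of_one_lt_norm ρ h01 h10 hg hh

theorem containsNonabelianFree_of_not_root_of_unity {G k : Type*} [Group G] [Field k] [CharZero k]
    (ρ : G →* SpecialLinearGroup (Fin 2) k) (hρ : Function.Injective ρ) {g h : G}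
    (h01 : ρ g 0 1 = 0) (h10 : ρ g 1 0 = 0) (hg : ∀ n, 0 < n → ρ g 0 0 ^ n ≠ 1)
    (hh : ∀ i j, ρ h i j ≠ 0) : ContainsNonabelianFree G := by
  let S : Set k := Set.range (fun i : Fin 2 × Fin 2 => ρ g i.1 i.2) ∪
    Set.range (fun i : Fin 2 × Fin 2 => ρ h i.1 i.2)
  have hS : S.Countable := (Set.countable_range _).union (Set.countable_range _)
  let F := Subfield.closure S
  have : Countable F := by
    rw [← Cardinal.mk_le_aleph0_iff]
    refine (Subfield.cardinalMk_closure_le_max S).trans (max_le ?_ le_rfl)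
    exact Cardinal.mk_le_aleph0_iff.2 hS
  let lift (x : G) (hx : ∀ i j, ρ x i j ∈ F) : SpecialLinearGroup (Fin 2) F :=
    ⟨Matrix.of fun i j => ⟨ρ x i j, hx i j⟩, by
      refine Subtype.ext ?_
      simpa [Matrix.det_fin_two] using (ρ x).det_two⟩
  have hlift : ∀ x hx, SpecialLinearGroup.map F.subtype (lift x hx) = ρ x := fun x hx => by
    ext i j
    rfl
  have hgF : ∀ i j, ρ g i j ∈ F := fun i j => Subfield.subset_closure (.inl ⟨(i, j), rfl⟩)
  have hhF : ∀ i j, ρ h i j ∈ F := fun i j => Subfield.subset_closure (.inr ⟨(i, j), rfl⟩)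
  have hne : ∀ n, 0 < n → (⟨ρ g 0 0, hgF 0 0⟩ : F) ^ n ≠ 1 := fun n hn h =>
    hg n hn (congrArg Subtype.val h)
  obtain ⟨L, _, φ, hφ⟩ := exists_ringHom_norm_ne_one hne
  let Λ := ρ.range.comap (SpecialLinearGroup.map F.subtype)
  have hmem : ∀ x hx, lift x hx ∈ Λ := fun x hx => ⟨x, (hlift x hx).symm⟩
  have key : ContainsNonabelianFree Λ := by
    refine containsNonabelianFree_of_norm_ne_one
      ((SpecialLinearGroup.map φ).comp Λ.subtype) (g := ⟨_, hmem g hgF⟩) (h := ⟨_, hmem h hhF⟩)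
      ?_ ?_ hφ ?_
    · exact (congrArg φ (Subtype.ext h01)).trans (map_zero φ)
    · exact (congrArg φ (Subtype.ext h10)).trans (map_zero φ)
    · exact fun i j h0 => hh i j (congrArg Subtype.val ((map_eq_zero φ).1 h0))
  have hinj : Function.Injective
      (SpecialLinearGroup.map (n := Fin 2) F.subtype : _ →* SpecialLinearGroup (Fin 2) k) := by
    intro x y hxy
    ext i j
    exact congrArg (fun A : SpecialLinearGroup (Fin 2) k => A i j) hxy
  refine ContainsNonabelianFree.of_injective (MonoidHom.ofInjective hρ).symm.toMonoidHom
    (MulEquiv.injective _) (key.of_injective ((SpecialLinearGroup.map F.subtype).subgroupComap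
      ρ.range) ?_)
  intro x y hxy
  exact Subtype.ext (hinj (congrArg Subtype.val hxy))

end PingPong

/-! ### Triangular subgroups of `SL₂` -/

section Triangular

open Matrix
open scoped Pointwise

variable {k : Type*} [Field k]

variable (k) in
/-- The upper triangular subgroup of `SL₂`. -/
def upperTriangular : Subgroup (SpecialLinearGroup (Fin 2) k) where
  carrier := {A | A 1 0 = 0}
  one_mem' := by simp
  mul_mem' {A B} hA hB := by
    have hA : A 1 0 = 0 := hA
    have hB : B 1 0 = 0 := hB
    change (A * B) 1 0 = 0
    rw [SpecialLinearGroup.mul_apply_two, hA, hB]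
    ring
  inv_mem' {A} hA := by
    change A⁻¹ 1 0 = 0
    rw [A.inv_apply_two.2.2.1, show A 1 0 = 0 from hA, neg_zero]

/-- The first diagonal entry of an upper triangular matrix. -/
def upperTriangularDiag : upperTriangular k →* k where
  toFun A := A.1 0 0
  map_one' := by simp
  map_mul' A B := by
    have hB : B.1 1 0 = 0 := B.2
    rw [Subgroup.coe_mul, SpecialLinearGroup.mul_apply_two, hB]
    ring

theorem isSolvable_upperTriangular : Group.IsSolvable (upperTriangular k) := by
  refine isSolvable_of_isSolvable_ker upperTriangularDiag.toHomUnits ?_ inferInstance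
  refine Group.isSolvable_of_comm fun A B => Subtype.ext (Subtype.ext ?_)
  have hdiag : ∀ A : (upperTriangularDiag (k := k)).toHomUnits.ker,
      A.1.1 0 0 = 1 ∧ A.1.1 1 0 = 0 ∧ A.1.1 1 1 = 1 := by
    intro A
    have h1 : A.1.1 0 0 = 1 := congrArg Units.val (MonoidHom.mem_ker.1 A.2)
    have h2 : A.1.1 1 0 = 0 := A.1.2
    have h3 := A.1.1.det_two
    rw [h1, h2, mul_zero, sub_zero, one_mul] at h3
    exact ⟨h1, h2, h3⟩
  obtain ⟨a1, a2, a3⟩ := hdiag A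
  obtain ⟨b1, b2, b3⟩ := hdiag B
  change A.1.1 * B.1.1 = B.1.1 * A.1.1
  ext i j
  rw [SpecialLinearGroup.mul_apply_two, SpecialLinearGroup.mul_apply_two]
  fin_cases i <;> fin_cases j <;> simp [a1, a2, a3, b1, b2, b3, add_comm]

/-- The Weyl element of `SL₂`. -/
def weylElement (k : Type*) [Field k] : SpecialLinearGroup (Fin 2) k :=
  ⟨!![0, -1; 1, 0], by simp⟩

theorem weylElement_conj_apply (A : SpecialLinearGroup (Fin 2) k) :
    (MulAut.conj (weylElement k) A) 1 0 = -A 0 1 := by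
  obtain ⟨i00, -, i10, -⟩ := (weylElement k).inv_apply_two
  rw [MulAut.conj_apply]
  simp only [SpecialLinearGroup.mul_apply_two, i00, i10]
  simp [weylElement]

theorem isSolvable_of_forall_apply_one_zero {G : Type*} [Group G]
    (ρ : G →* SpecialLinearGroup (Fin 2) k) (hρ : Function.Injective ρ)
    (h : ∀ g, ρ g 1 0 = 0) : Group.IsSolvable G :=
  have := isSolvable_upperTriangular (k := k)
  Group.isSolvable_of_isSolvable_injective (f := ρ.codRestrict (upperTriangular k) h)
    ((MonoidHom.injective_codRestrict _ _ h).2 hρ)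

theorem isSolvable_comap_upperTriangular {G : Type*} [Group G]
    (ρ : G →* SpecialLinearGroup (Fin 2) k) (hρ : Function.Injective ρ) :
    Group.IsSolvable ((upperTriangular k).comap ρ) :=
  isSolvable_of_forall_apply_one_zero (ρ.comp ((upperTriangular k).comap ρ).subtype)
    (hρ.comp (Subgroup.subtype_injective _)) fun g => g.2

/-- A linear group of degree two all of whose elements have a vanishing matrix entry is
virtually solvable. -/
theorem isVirtuallySolvable_of_forall_exists_apply_eq_zero {G : Type*} [Group G]
    (ρ : G →* SpecialLinearGroup (Fin 2) k) (hρ : Function.Injective ρ)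
    (h : ∀ g, ∃ i j, ρ g i j = 0) : IsVirtuallySolvable G := by
  let ρ' := (MulAut.conj (weylElement k)).toMonoidHom.comp ρ
  have hρ' : Function.Injective ρ' := (MulAut.conj (weylElement k)).injective.comp hρ
  let U := (upperTriangular k).comap ρ
  let V := (upperTriangular k).comap ρ'
  have hU : ∀ g, g ∈ U ↔ ρ g 1 0 = 0 := fun g => Iff.rfl
  have hV : ∀ g, g ∈ V ↔ ρ g 0 1 = 0 := fun g => by
    rw [← neg_eq_zero, ← weylElement_conj_apply]
    rfl
  obtain ⟨x, hx⟩ : ∃ x, ∀ g, ρ g 0 0 = 0 → ρ x 0 0 = 0 := by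
    by_cases h : ∃ x, ρ x 0 0 = 0
    · exact ⟨h.choose, fun _ _ => h.choose_spec⟩
    · exact ⟨1, fun g hg => absurd ⟨g, hg⟩ h⟩
  obtain ⟨y, hy⟩ : ∃ y, ∀ g, ρ g 1 1 = 0 → ρ y 1 1 = 0 := by
    by_cases h : ∃ x, ρ x 1 1 = 0
    · exact ⟨h.choose, fun _ _ => h.choose_spec⟩
    · exact ⟨1, fun g hg => absurd ⟨g, hg⟩ h⟩
  have hcover : ⋃ i ∈ (Finset.univ : Finset (Fin 2 × Fin 2)),
      (!![x, 1; 1, y] i.1 i.2) • ((!![U, V; U, V] i.1 i.2 : Subgroup G) : Set G) = Set.univ := by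
    refine Set.eq_univ_of_forall fun g => ?_
    obtain ⟨i, j, hij⟩ := h g
    refine Set.mem_iUnion₂.2 ⟨(i, j), Finset.mem_univ _, ?_⟩
    rw [mem_leftCoset_iff, SetLike.mem_coe]
    obtain ⟨-, -, x10, x11⟩ := (ρ x).inv_apply_two
    obtain ⟨y00, y01, -, -⟩ := (ρ y).inv_apply_two
    fin_cases i <;> fin_cases j
    · change x⁻¹ * g ∈ U
      have hij : ρ g 0 0 = 0 := hij
      rw [hU, map_mul, map_inv, SpecialLinearGroup.mul_apply_two, x10, x11, hij, hx g hij]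
      ring
    · change 1⁻¹ * g ∈ V
      rw [inv_one, one_mul, hV]
      exact hij
    · change 1⁻¹ * g ∈ U
      rw [inv_one, one_mul, hU]
      exact hij
    · change y⁻¹ * g ∈ V
      have hij : ρ g 1 1 = 0 := hij
      rw [hV, map_mul, map_inv, SpecialLinearGroup.mul_apply_two, y00, y01, hij, hy g hij]
      ring
  obtain ⟨⟨i, j⟩, -, hfin⟩ := Subgroup.exists_finiteIndex_of_leftCoset_cover hcover
  have solU : Group.IsSolvable U := isSolvable_comap_upperTriangular ρ hρ
  have solV : Group.IsSolvable V := isSolvable_comap_upperTriangular ρ' hρ'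
  fin_cases i <;> fin_cases j
  exacts [⟨U, hfin, solU⟩, ⟨V, hfin, solV⟩, ⟨U, hfin, solU⟩, ⟨V, hfin, solV⟩]

theorem exists_conj_apply_one_zero [IsAlgClosed k] [CharZero k]
    (A : SpecialLinearGroup (Fin 2) k) : ∃ x, (MulAut.conj x A) 1 0 = 0 := by
  by_cases hc : A 1 0 = 0
  · exact ⟨1, by simpa using hc⟩
  obtain ⟨r, hr⟩ := IsAlgClosed.exists_eq_mul_self ((A 0 0 + A 1 1) ^ 2 / 4 - 1)
  obtain ⟨l, hl⟩ : ∃ l, l ^ 2 - (A 0 0 + A 1 1) * l + 1 = 0 :=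
    ⟨(A 0 0 + A 1 1) / 2 + r, by linear_combination -hr⟩
  let x : SpecialLinearGroup (Fin 2) k :=
    ⟨!![0, (A 1 0)⁻¹; -A 1 0, l - A 1 1], by simp [hc]⟩
  obtain ⟨i00, -, i10, -⟩ := x.inv_apply_two
  refine ⟨x, ?_⟩
  rw [MulAut.conj_apply]
  simp only [SpecialLinearGroup.mul_apply_two, i00, i10]
  have hdet := A.det_two
  simp only [x, of_apply, cons_val', cons_val_zero, cons_val_one, cons_val_fin_one]
  linear_combination A 1 0 * hl + A 1 0 * hdet

/-- Over an algebraically closed field of characteristic zero every matrix in `SL₂` is conjugate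
to an upper triangular one, which can be taken diagonal if its eigenvalues are distinct. -/
theorem exists_conj_triangular [IsAlgClosed k] [CharZero k] (A : SpecialLinearGroup (Fin 2) k) :
    ∃ x, (MulAut.conj x A) 1 0 = 0 ∧
      ((MulAut.conj x A) 0 0 ≠ (MulAut.conj x A) 1 1 → (MulAut.conj x A) 0 1 = 0) := by
  obtain ⟨y, hy⟩ := exists_conj_apply_one_zero A
  generalize hB : MulAut.conj y A = B at hy
  by_cases hne : B 0 0 = B 1 1
  · exact ⟨y, by rw [hB]; exact ⟨hy, fun h => absurd hne h⟩⟩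
  let z : SpecialLinearGroup (Fin 2) k := ⟨!![1, B 0 1 / (B 0 0 - B 1 1); 0, 1], by simp⟩
  obtain ⟨i00, i01, i10, i11⟩ := z.inv_apply_two
  refine ⟨z * y, ?_⟩
  rw [map_mul, MulAut.mul_apply, hB, MulAut.conj_apply]
  simp only [SpecialLinearGroup.mul_apply_two, i00, i01, i10, i11]
  simp only [z, of_apply, cons_val', cons_val_zero, cons_val_one, cons_val_fin_one, hy]
  refine ⟨by ring, fun _ => ?_⟩
  have := sub_ne_zero.2 hne
  field_simp
  ring

end Triangular

/-! ### A trigonometric equation with roots of unity -/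

section RootsOfUnity

theorem pow_four_lt_two_pow {n : ℕ} (hn : 17 ≤ n) : n ^ 4 < 2 ^ n := by
  induction n, hn using Nat.le_induction with
  | base => norm_num
  | succ n hn ih =>
    have h1 : 17 * n ^ 3 ≤ n ^ 4 := by nlinarith [pow_pos (show 0 < n by lia) 3]
    have h2 : 17 * n ^ 2 ≤ n ^ 3 := by nlinarith [pow_pos (show 0 < n by lia) 2]
    have h3 : 17 * n ≤ n ^ 2 := by nlinarith
    rw [pow_succ 2 n]
    nlinarith

theorem le_of_two_pow_totient_le {n : ℕ} (hn : 0 < n)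
    (h : (2 : ℤ) ^ n.totient ≤ (Polynomial.cyclotomic n ℤ).eval 1 ^ 2) : n ≤ 16 := by
  by_cases hpp : ∃ p m : ℕ, p.Prime ∧ p ^ m = n
  · obtain ⟨p, m, hp, rfl⟩ := hpp
    obtain _ | m := m
    · simp
    have : Fact p.Prime := ⟨hp⟩
    rw [Polynomial.eval_one_cyclotomic_prime_pow, Nat.totient_prime_pow_succ hp] at h
    by_contra! h17
    have h1 := pow_four_lt_two_pow h17
    have h2 : p ^ (m + 1) ≤ 2 * (p ^ m * (p - 1)) := by
      rw [pow_succ, mul_left_comm]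
      exact Nat.mul_le_mul_left _ (by have := hp.two_le; lia)
    have h3 : 2 ^ (p ^ m * (p - 1)) ≤ p ^ 2 := by exact_mod_cast h
    have h4 : p ≤ p ^ (m + 1) := Nat.le_self_pow (by lia) p
    have h5 : 2 ^ (p ^ (m + 1)) ≤ (p ^ (m + 1)) ^ 4 := calc
      2 ^ (p ^ (m + 1)) ≤ 2 ^ (2 * (p ^ m * (p - 1))) := Nat.pow_le_pow_right (by lia) h2
      _ = (2 ^ (p ^ m * (p - 1))) ^ 2 := by rw [mul_comm, pow_mul]
      _ ≤ (p ^ 2) ^ 2 := Nat.pow_le_pow_left h3 2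
      _ = p ^ 4 := by ring
      _ ≤ (p ^ (m + 1)) ^ 4 := Nat.pow_le_pow_left h4 4
    exact absurd h1 h5.not_gt
  · rw [Polynomial.eval_one_cyclotomic_not_prime_pow (fun hp m hm => hpp ⟨_, m, hp, hm⟩)] at h
    have : 1 < (2 : ℤ) ^ n.totient :=
      one_lt_pow₀ (by norm_num) (Nat.totient_pos.2 hn).ne'
    linarith

theorem norm_eq_eval_cyclotomic_pow {F : Type*} [Field F] [NumberField F] {η : F} {n : ℕ}
    (hη : IsPrimitiveRoot η n) (hn : 2 < n) : ∃ r ≠ 0, Module.finrank ℚ F = n.totient * r ∧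
      Algebra.norm ℚ (η - 1) = (((Polynomial.cyclotomic n ℤ).eval 1 : ℤ) : ℚ) ^ r := by
  have : NeZero n := ⟨by lia⟩
  let E := IntermediateField.adjoin ℚ {η}
  have : IsCyclotomicExtension {n} ℚ E := hη.intermediateField_adjoin_isCyclotomicExtension ℚ
  have hgen : IsPrimitiveRoot (IntermediateField.AdjoinSimple.gen ℚ η : E) n :=
    IsPrimitiveRoot.of_map_of_injective (f := algebraMap E F) hη (algebraMap E F).injective
  refine ⟨Module.finrank E F, Module.finrank_pos.ne', ?_, ?_⟩
  · rw [← IsCyclotomicExtension.finrank E (Polynomial.cyclotomic.irreducible_rat (n := n) (by lia)),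
      Module.finrank_mul_finrank]
  · have h1 := hgen.sub_one_norm_eq_eval_cyclotomic hn
      (Polynomial.cyclotomic.irreducible_rat (n := n) (by lia))
    have h2 : η - 1 = algebraMap E F (IntermediateField.AdjoinSimple.gen ℚ η - 1) := by
      rw [map_sub, map_one]
      rfl
    rw [← Algebra.norm_norm (S := E), h2, Algebra.norm_algebraMap, map_pow, h1]

theorem prod_embeddings_norm {F : Type*} [Field F] [NumberField F] (x : F) :
    ∏ φ : F →ₐ[ℚ] ℂ, ‖φ x‖ = ‖((Algebra.norm ℚ x : ℚ) : ℂ)‖ := by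
  rw [← norm_prod, ← Algebra.norm_eq_prod_embeddings ℚ ℂ]
  rfl

theorem one_le_norm_of_isIntegral {F : Type*} [Field F] [NumberField F] {x : F}
    (hx : IsIntegral ℤ x) (h0 : x ≠ 0) : 1 ≤ ‖((Algebra.norm ℚ x : ℚ) : ℂ)‖ := by
  obtain ⟨m, hm⟩ := IsIntegrallyClosed.isIntegral_iff.1 (Algebra.isIntegral_norm ℚ hx)
  have hm0 : m ≠ 0 := by
    rintro rfl
    exact h0 (Algebra.norm_eq_zero_iff.1 (hm.symm.trans (map_zero _)))
  rw [← hm]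
  simpa using (by exact_mod_cast Int.one_le_abs hm0 : (1 : ℝ) ≤ |(m : ℝ)|)

theorem Complex.two_sub_sub_inv {z : ℂ} {n : ℕ} (hn : n ≠ 0) (hz : z ^ n = 1) :
    2 - z - z⁻¹ = ((‖z - 1‖ ^ 2 : ℝ) : ℂ) := by
  have h1 : ‖z‖ = 1 := norm_eq_one_of_pow_eq_one hz hn
  rw [Complex.inv_eq_conj h1, ofReal_pow, ← Complex.mul_conj', map_sub, map_one]
  have : z * (starRingEnd ℂ) z = 1 := by rw [Complex.mul_conj', h1]; simp
  linear_combination -this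

theorem orderOf_le_of_numberField {F : Type*} [Field F] [NumberField F] {a b e : F}
    (ha : IsOfFinOrder a) (hb : IsOfFinOrder b) (he : IsOfFinOrder e) (ha1 : a ≠ 1) (hb1 : b ≠ 1)
    (h : (2 - a - a⁻¹) + (2 - b - b⁻¹) = 2 - e - e⁻¹) : orderOf e ≤ 16 := by
  by_contra! hn
  obtain ⟨r, hr, hdeg, hnorm⟩ := norm_eq_eval_cyclotomic_pow (IsPrimitiveRoot.orderOf e) (by lia)
  have hxint : ∀ {x : F}, IsOfFinOrder x → IsIntegral ℤ (x - 1) := fun {x} hx => by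
    obtain ⟨n, hn, hx⟩ := isOfFinOrder_iff_pow_eq_one.1 hx
    exact (IsIntegral.of_pow hn (hx ▸ isIntegral_one)).sub isIntegral_one
  have hφ : ∀ φ : F →ₐ[ℚ] ℂ, 2 * (‖φ (a - 1)‖ * ‖φ (b - 1)‖) ≤ ‖φ (e - 1)‖ ^ 2 := by
    intro φ
    have hz : ∀ {x : F}, IsOfFinOrder x → φ (2 - x - x⁻¹) = ((‖φ (x - 1)‖ ^ 2 : ℝ) : ℂ) := by
      intro x hx
      obtain ⟨n, hn, hx⟩ := isOfFinOrder_iff_pow_eq_one.1 hx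
      have := Complex.two_sub_sub_inv hn.ne' (z := φ x) (by rw [← map_pow, hx, map_one])
      rw [map_sub, map_sub, map_inv₀, map_sub, map_one, ← this, map_ofNat]
    have := congrArg φ h
    rw [map_add, hz ha, hz hb, hz he] at this
    have : ‖φ (a - 1)‖ ^ 2 + ‖φ (b - 1)‖ ^ 2 = ‖φ (e - 1)‖ ^ 2 := by exact_mod_cast this
    nlinarith [sq_nonneg (‖φ (a - 1)‖ - ‖φ (b - 1)‖)]
  have hprod := Finset.prod_le_prod (s := Finset.univ)
    (fun φ _ => by positivity) fun (φ : F →ₐ[ℚ] ℂ) _ => hφ φ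
  rw [Finset.prod_mul_distrib, Finset.prod_mul_distrib, Finset.prod_pow, prod_embeddings_norm,
    prod_embeddings_norm, prod_embeddings_norm, Finset.prod_const, Finset.card_univ,
    AlgHom.card ℚ F ℂ, hdeg, hnorm] at hprod
  have h1 := one_le_norm_of_isIntegral (hxint ha) (sub_ne_zero.2 ha1)
  have h2 := one_le_norm_of_isIntegral (hxint hb) (sub_ne_zero.2 hb1)
  have h3 : ((2 : ℝ) ^ (orderOf e).totient) ^ r ≤
      ((((Polynomial.cyclotomic (orderOf e) ℤ).eval 1 : ℤ) : ℝ) ^ 2) ^ r := by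
    generalize (Polynomial.cyclotomic (orderOf e) ℤ).eval 1 = c at hprod ⊢
    have hc : ‖((((c : ℚ) ^ r : ℚ)) : ℂ)‖ ^ 2 = ((c : ℝ) ^ 2) ^ r := by
      rw [Rat.cast_pow, Rat.cast_intCast, norm_pow, Complex.norm_intCast, ← pow_mul, mul_comm,
        pow_mul, sq_abs]
    rw [hc, pow_mul] at hprod
    exact (le_mul_of_one_le_right (by positivity) (one_le_mul_of_one_le_of_one_le h1 h2)).trans
      hprod
  have h4 := (pow_le_pow_iff_left₀ (by positivity) (by positivity) hr).1 h3
  exact hn.not_ge (le_of_two_pow_totient_le (by lia) (by exact_mod_cast h4))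

/-- If the squared distances from `1` of three roots of unity `a`, `b`, `e` satisfy
`|1 - a|² + |1 - b|² = |1 - e|²` nontrivially, then the order of `e` is bounded. -/
theorem orderOf_le_of_add_eq {k : Type*} [Field k] [CharZero k] {a b e : k}
    (ha : IsOfFinOrder a) (hb : IsOfFinOrder b) (he : IsOfFinOrder e) (ha1 : a ≠ 1) (hb1 : b ≠ 1)
    (h : (2 - a - a⁻¹) + (2 - b - b⁻¹) = 2 - e - e⁻¹) : orderOf e ≤ 16 := by
  have hxint : ∀ {x : k}, IsOfFinOrder x → IsIntegral ℚ x := fun {x} hx => by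
    obtain ⟨n, hn, hx⟩ := isOfFinOrder_iff_pow_eq_one.1 hx
    exact IsIntegral.of_pow hn (hx ▸ isIntegral_one)
  let F := IntermediateField.adjoin ℚ {a, b, e}
  have : FiniteDimensional ℚ F := IntermediateField.finiteDimensional_adjoin (by
    rintro x (rfl | rfl | rfl)
    exacts [hxint ha, hxint hb, hxint he])
  have : NumberField F := ⟨⟩
  have hmem : ∀ x ∈ ({a, b, e} : Set k), x ∈ F := fun x hx =>
    IntermediateField.subset_adjoin ℚ _ hx
  have hfin : ∀ {x : F}, IsOfFinOrder (x : k) → IsOfFinOrder x := fun {x} hx => by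
    rw [isOfFinOrder_iff_pow_eq_one] at hx ⊢
    exact hx.imp fun n hn => ⟨hn.1, Subtype.ext hn.2⟩
  have key := orderOf_le_of_numberField (a := (⟨a, hmem a (by simp)⟩ : F))
    (b := ⟨b, hmem b (by simp)⟩) (e := ⟨e, hmem e (by simp)⟩) (hfin ha) (hfin hb) (hfin he)
    (fun h => ha1 (congrArg Subtype.val h)) (fun h => hb1 (congrArg Subtype.val h))
    (Subtype.ext h)
  rwa [← orderOf_injective (algebraMap F k).toMonoidHom (algebraMap F k).injective] at key

end RootsOfUnity

/-! ### The strong Tits alternative for linear groups of degree two -/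

section LinearGroups

open Matrix

variable {G k : Type*} [Group G] [Field k]

theorem Matrix.SpecialLinearGroup.trace_conj {R : Type*} [CommRing R]
    (x A : SpecialLinearGroup (Fin 2) R) :
    (MulAut.conj x A : Matrix (Fin 2) (Fin 2) R).trace = (A : Matrix (Fin 2) (Fin 2) R).trace := by
  rw [MulAut.conj_apply, mul_assoc, SpecialLinearGroup.coe_mul, Matrix.trace_mul_comm,
    ← SpecialLinearGroup.coe_mul, inv_mul_cancel_right]

/-- All eigenvalues of the matrices `ρ g` are roots of unity. -/
def HasTorsionEigenvalues (ρ : G →* SpecialLinearGroup (Fin 2) k) : Prop :=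
  ∀ g, ∃ z : k, IsOfFinOrder z ∧ (ρ g : Matrix (Fin 2) (Fin 2) k).trace = z + z⁻¹

theorem HasTorsionEigenvalues.conj {ρ : G →* SpecialLinearGroup (Fin 2) k}
    (h : HasTorsionEigenvalues ρ) (x : SpecialLinearGroup (Fin 2) k) :
    HasTorsionEigenvalues ((MulAut.conj x).toMonoidHom.comp ρ) := fun g => by
  obtain ⟨z, hz, ht⟩ := h g
  exact ⟨z, hz, (SpecialLinearGroup.trace_conj x (ρ g)).trans ht⟩

theorem Matrix.SpecialLinearGroup.inv_apply_zero_zero {A : SpecialLinearGroup (Fin 2) k}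
    (h : A 1 0 = 0) : A 1 1 = (A 0 0)⁻¹ := by
  have := A.det_two
  rw [h, mul_zero, sub_zero] at this
  exact eq_inv_of_mul_eq_one_right this

theorem HasTorsionEigenvalues.isOfFinOrder {ρ : G →* SpecialLinearGroup (Fin 2) k}
    (h : HasTorsionEigenvalues ρ) {g : G} (hg : ρ g 1 0 = 0) : IsOfFinOrder (ρ g 0 0) := by
  obtain ⟨z, hz, ht⟩ := h g
  have hdet := (ρ g).det_two
  rw [hg, mul_zero, sub_zero] at hdet
  rw [Matrix.trace_fin_two] at ht
  have hz0 : z ≠ 0 := by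
    rintro rfl
    obtain ⟨n, hn, h0⟩ := isOfFinOrder_iff_pow_eq_one.1 hz
    simp [zero_pow hn.ne'] at h0
  have : (ρ g 0 0 - z) * (ρ g 0 0 - z⁻¹) = 0 := by
    linear_combination ρ g 0 0 * ht - hdet + mul_inv_cancel₀ hz0
  obtain h1 | h1 := mul_eq_zero.1 this
  · rwa [sub_eq_zero.1 h1]
  · rw [sub_eq_zero.1 h1]
    obtain ⟨n, hn, h0⟩ := isOfFinOrder_iff_pow_eq_one.1 hz
    exact isOfFinOrder_iff_pow_eq_one.2 ⟨n, hn, by rw [inv_pow, h0, inv_one]⟩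

theorem titsDichotomy_of_not_isOfFinOrder [CharZero k] {ρ : G →* SpecialLinearGroup (Fin 2) k}
    (hρ : Function.Injective ρ) {g : G} (h01 : ρ g 0 1 = 0) (h10 : ρ g 1 0 = 0)
    (hg : ¬ IsOfFinOrder (ρ g 0 0)) : TitsDichotomy G := by
  by_cases hh : ∃ h, ∀ i j, ρ h i j ≠ 0
  · obtain ⟨h, hh⟩ := hh
    exact .inl (containsNonabelianFree_of_not_root_of_unity ρ hρ h01 h10
      (fun n hn h1 => hg (isOfFinOrder_iff_pow_eq_one.2 ⟨n, hn, h1⟩)) hh)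
  · push Not at hh
    exact .inr (isVirtuallySolvable_of_forall_exists_apply_eq_zero ρ hρ hh)

theorem titsDichotomy_or_hasTorsionEigenvalues [CharZero k] [IsAlgClosed k]
    {ρ : G →* SpecialLinearGroup (Fin 2) k} (hρ : Function.Injective ρ) :
    TitsDichotomy G ∨ HasTorsionEigenvalues ρ := by
  by_contra! h
  refine h.2 fun g => ?_
  obtain ⟨x, hx, hx'⟩ := exists_conj_triangular (ρ g)
  have h11 := SpecialLinearGroup.inv_apply_zero_zero hx
  refine ⟨_, ?_, by rw [← SpecialLinearGroup.trace_conj x, Matrix.trace_fin_two, h11]⟩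
  by_contra hfin
  refine h.1 (titsDichotomy_of_not_isOfFinOrder
    (ρ := (MulAut.conj x).toMonoidHom.comp ρ) ((MulAut.conj x).injective.comp hρ)
    (hx' fun heq => hfin ?_) hx hfin)
  refine isOfFinOrder_iff_pow_eq_one.2 ⟨2, by norm_num, ?_⟩
  have := (MulAut.conj x (ρ g)).det_two
  rw [hx, ← heq] at this
  linear_combination this

theorem eq_zero_of_forall_add_mul [CharZero k] {T s : k}
    (h : ∀ n : ℕ, ∃ z : k, IsOfFinOrder z ∧ T + n * s = z + z⁻¹) : s = 0 := by
  have halg : ∀ {z : k}, IsOfFinOrder z → z ∈ algebraicClosure ℚ k := fun {z} hz => by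
    obtain ⟨n, hn, hz⟩ := isOfFinOrder_iff_pow_eq_one.1 hz
    exact mem_algebraicClosure_iff.2
      (IsIntegral.of_pow (R := ℚ) hn (hz ▸ isIntegral_one)).isAlgebraic
  have hmem : ∀ n : ℕ, T + n * s ∈ algebraicClosure ℚ k := fun n => by
    obtain ⟨z, hz, hn⟩ := h n
    rw [hn]
    exact add_mem (halg hz) (inv_mem (halg hz))
  have hT : T ∈ algebraicClosure ℚ k := by simpa using hmem 0
  have hs : s ∈ algebraicClosure ℚ k := by simpa using sub_mem (hmem 1) hT
  have : Algebra.IsAlgebraic ℚ (algebraicClosure ℚ k) :=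
    ⟨fun x => (isAlgebraic_algebraMap_iff (algebraMap (algebraicClosure ℚ k) k).injective).1
      (mem_algebraicClosure_iff.1 x.2)⟩
  let φ : algebraicClosure ℚ k →ₐ[ℚ] ℂ := IsAlgClosed.lift
  have hbound : ∀ n : ℕ, ‖φ ⟨T, hT⟩ + n * φ ⟨s, hs⟩‖ ≤ 2 := fun n => by
    obtain ⟨z, hz, hn⟩ := h n
    have hz' : (⟨T, hT⟩ + n * ⟨s, hs⟩ : algebraicClosure ℚ k) =
        ⟨z, halg hz⟩ + ⟨z, halg hz⟩⁻¹ := Subtype.ext (by simpa using hn)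
    have hφ := congrArg φ hz'
    rw [map_add, map_mul, map_natCast, map_add, map_inv₀] at hφ
    obtain ⟨m, hm, hzm⟩ := isOfFinOrder_iff_pow_eq_one.1 hz
    have h1 : ‖φ ⟨z, halg hz⟩‖ = 1 := Complex.norm_eq_one_of_pow_eq_one (n := m) (by
      rw [← map_pow, ← map_one φ]
      exact congrArg φ (Subtype.ext hzm)) hm.ne'
    rw [hφ]
    refine (norm_add_le _ _).trans ?_
    rw [norm_inv, h1]
    norm_num
  have hbound' : ∀ n : ℕ, n * ‖φ ⟨s, hs⟩‖ ≤ 4 := fun n => by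
    have h0 := hbound 0
    have hn := hbound n
    have := norm_sub_le (φ ⟨T, hT⟩ + n * φ ⟨s, hs⟩) (φ ⟨T, hT⟩)
    rw [add_sub_cancel_left, norm_mul, Complex.norm_natCast] at this
    rw [Nat.cast_zero, zero_mul, add_zero] at h0
    linarith
  have hzero : φ ⟨s, hs⟩ = 0 := by
    by_contra h0
    obtain ⟨n, hn⟩ := exists_nat_gt (4 / ‖φ ⟨s, hs⟩‖)
    rw [div_lt_iff₀ (norm_pos_iff.2 h0)] at hn
    exact (hbound' n).not_gt hn
  exact congrArg Subtype.val ((map_eq_zero φ).1 hzero)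

theorem HasTorsionEigenvalues.isSolvable [CharZero k] {ρ : G →* SpecialLinearGroup (Fin 2) k}
    (h : HasTorsionEigenvalues ρ) (hρ : Function.Injective ρ) {u : G} (h10 : ρ u 1 0 = 0)
    (hu : ρ u 0 0 = ρ u 1 1) (h01 : ρ u 0 1 ≠ 0) : Group.IsSolvable G := by
  refine isSolvable_of_forall_apply_one_zero ρ hρ fun g => ?_
  have hdet := (ρ u).det_two
  rw [h10, mul_zero, sub_zero, ← hu] at hdet
  have hpow : ∀ n : ℕ, (ρ u ^ (2 * n)) 0 0 = 1 ∧ (ρ u ^ (2 * n)) 1 0 = 0 ∧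
      (ρ u ^ (2 * n)) 1 1 = 1 ∧ (ρ u ^ (2 * n)) 0 1 = n * (2 * ρ u 0 0 * ρ u 0 1) := by
    intro n
    induction n with
    | zero => simp
    | succ n ih =>
      obtain ⟨p00, p10, p11, p01⟩ := ih
      simp only [mul_add, mul_one, pow_add, pow_two, SpecialLinearGroup.mul_apply_two, p00, p10,
        p11, p01, h10, ← hu]
      refine ⟨?_, ?_, ?_, ?_⟩ <;> push_cast
      · linear_combination hdet
      · ring
      · linear_combination hdet
      · linear_combination n * (2 * ρ u 0 0 * ρ u 0 1) * hdet
  have hs : 2 * ρ u 0 0 * ρ u 0 1 * ρ g 1 0 = 0 := by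
    refine eq_zero_of_forall_add_mul (T := ρ g 0 0 + ρ g 1 1) fun n => ?_
    obtain ⟨z, hz, ht⟩ := h (u ^ (2 * n) * g)
    obtain ⟨p00, p10, p11, p01⟩ := hpow n
    rw [map_mul, map_pow, Matrix.trace_fin_two, SpecialLinearGroup.mul_apply_two,
      SpecialLinearGroup.mul_apply_two, p00, p10, p11, p01] at ht
    exact ⟨z, hz, by rw [← ht]; ring⟩
  have h00 : ρ u 0 0 ≠ 0 := fun h0 => by simp [h0] at hdet
  simpa [h00, h01] using hs

theorem HasTorsionEigenvalues.orderOf_le [CharZero k] {ρ : G →* SpecialLinearGroup (Fin 2) k}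
    (hρ : HasTorsionEigenvalues ρ) {g h : G} (h01 : ρ g 0 1 = 0) (h10 : ρ g 1 0 = 0)
    (hg : ρ g 0 0 ≠ ρ g 1 1) (hh : ∀ i j, ρ h i j ≠ 0) : orderOf (ρ g 0 0 ^ 2) ≤ 16 := by
  obtain ⟨a, ha, hat⟩ := hρ (g * h * g⁻¹ * h⁻¹)
  obtain ⟨b, hb, hbt⟩ := hρ (g * h * g * h⁻¹)
  have he := (hρ.isOfFinOrder h10).pow (n := 2)
  have h11 := SpecialLinearGroup.inv_apply_zero_zero h10
  obtain ⟨g00, g01, g10, g11⟩ := (ρ g).inv_apply_two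
  obtain ⟨i00, i01, i10, i11⟩ := (ρ h).inv_apply_two
  have hdet := (ρ h).det_two
  have hgdet := (ρ g).det_two
  rw [h10, mul_zero, sub_zero] at hgdet
  have hne : ρ g 0 0 ^ 2 + ρ g 1 1 ^ 2 - 2 ≠ 0 := by
    have : ρ g 0 0 ^ 2 + ρ g 1 1 ^ 2 - 2 = (ρ g 0 0 - ρ g 1 1) ^ 2 := by
      linear_combination 2 * hgdet
    rw [this]
    exact pow_ne_zero 2 (sub_ne_zero.2 hg)
  simp only [map_mul, map_inv, Matrix.trace_fin_two, SpecialLinearGroup.mul_apply_two, g00, g01,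
    g10, g11, i00, i01, i10, i11, h01, h10] at hat hbt
  have ha2 : 2 - a - a⁻¹ = ρ h 0 1 * ρ h 1 0 * (ρ g 0 0 ^ 2 + ρ g 1 1 ^ 2 - 2) := by
    linear_combination hat - 2 * hdet - 2 * ρ h 0 0 * ρ h 1 1 * hgdet
  have hb2 : 2 - b - b⁻¹ = -(ρ h 0 0 * ρ h 1 1) * (ρ g 0 0 ^ 2 + ρ g 1 1 ^ 2 - 2) := by
    linear_combination hbt - 2 * hdet + 2 * ρ h 0 1 * ρ h 1 0 * hgdet
  refine orderOf_le_of_add_eq ha hb he ?_ ?_ ?_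
  · rintro rfl
    rw [inv_one, show (2 : k) - 1 - 1 = 0 by norm_num, eq_comm] at ha2
    exact mul_ne_zero (mul_ne_zero (hh 0 1) (hh 1 0)) hne ha2
  · rintro rfl
    rw [inv_one, show (2 : k) - 1 - 1 = 0 by norm_num, eq_comm] at hb2
    exact mul_ne_zero (neg_ne_zero.2 (mul_ne_zero (hh 0 0) (hh 1 1))) hne hb2
  · rw [ha2, hb2, ← inv_pow, ← h11]
    linear_combination -(ρ g 0 0 ^ 2 + ρ g 1 1 ^ 2 - 2) * hdet

theorem finite_of_finite_trace {ρ : G →* SpecialLinearGroup (Fin 2) k}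
    (hρ : Function.Injective ρ) {g h : G} (h01 : ρ g 0 1 = 0) (h10 : ρ g 1 0 = 0)
    (hg : ρ g 0 0 ≠ ρ g 1 1) (hh : ∀ i j, ρ h i j ≠ 0)
    (hfin : (Set.range fun x => (ρ x : Matrix (Fin 2) (Fin 2) k).trace).Finite) : Finite G := by
  have hinj : Function.Injective fun x (i : Fin 2 × Fin 2) =>
      (⟨_, g ^ i.1.val * h ^ i.2.val * x, rfl⟩ :
        Set.range fun x => (ρ x : Matrix (Fin 2) (Fin 2) k).trace) := by
    intro x y hxy
    apply hρ
    have key := fun i => congrArg Subtype.val (congrFun hxy i)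
    have e00 := key (0, 0)
    have e10 := key (1, 0)
    have e01 := key (0, 1)
    have e11 := key (1, 1)
    simp only [Fin.val_zero, Fin.val_one, pow_zero, pow_one, one_mul, mul_one, map_mul,
      Matrix.trace_fin_two, SpecialLinearGroup.mul_apply_two, h01, h10] at e00 e10 e01 e11
    have hne := sub_ne_zero.2 hg
    have x00 : ρ x 0 0 = ρ y 0 0 := mul_left_cancel₀ hne (by
      linear_combination e10 - ρ g 1 1 * e00)
    have x11 : ρ x 1 1 = ρ y 1 1 := by linear_combination e00 - x00
    have x10 : ρ x 1 0 = ρ y 1 0 := mul_left_cancel₀ (mul_ne_zero hne (hh 0 1)) (by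
      linear_combination e11 - ρ g 1 1 * e01 - (ρ g 0 0 - ρ g 1 1) * ρ h 0 0 * x00)
    have x01 : ρ x 0 1 = ρ y 0 1 := mul_left_cancel₀ (hh 1 0) (by
      linear_combination e01 - ρ h 0 0 * x00 - ρ h 0 1 * x10 - ρ h 1 1 * x11)
    ext i j
    fin_cases i <;> fin_cases j
    exacts [x00, x01, x10, x11]
  have := hfin.to_subtype
  exact Finite.of_injective _ hinj

theorem titsDichotomy_of_specialLinearGroup [CharZero k] [IsAlgClosed k]
    (ρ : G →* SpecialLinearGroup (Fin 2) k) (hρ : Function.Injective ρ) : TitsDichotomy G := by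
  obtain h | h := titsDichotomy_or_hasTorsionEigenvalues hρ
  · exact h
  refine .inr ?_
  by_contra hns
  have hinj : ∀ x, Function.Injective ((MulAut.conj x).toMonoidHom.comp ρ) := fun x =>
    (MulAut.conj x).injective.comp hρ
  have hdiag : ∀ g, ∃ x, (MulAut.conj x (ρ g)) 1 0 = 0 ∧ (MulAut.conj x (ρ g)) 0 1 = 0 := by
    intro g
    obtain ⟨x, hx, hx'⟩ := exists_conj_triangular (ρ g)
    refine ⟨x, hx, ?_⟩
    by_contra h01
    by_cases heq : (MulAut.conj x (ρ g)) 0 0 = (MulAut.conj x (ρ g)) 1 1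
    · exact hns (.of_isSolvable ((h.conj x).isSolvable (hinj x) hx heq h01))
    · exact h01 (hx' heq)
  have hgen : ∀ x, ∃ y, ∀ i j, (MulAut.conj x (ρ y)) i j ≠ 0 := by
    intro x
    by_contra! hzero
    exact hns (isVirtuallySolvable_of_forall_exists_apply_eq_zero _ (hinj x) hzero)
  have htrace : ∀ g, ∃ z : k, z ^ (2 * Nat.factorial 16) = 1 ∧
      (ρ g : Matrix (Fin 2) (Fin 2) k).trace = z + z⁻¹ := by
    intro g
    obtain ⟨x, h10, h01⟩ := hdiag g
    have h11 := SpecialLinearGroup.inv_apply_zero_zero h10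
    refine ⟨_, ?_, by rw [← SpecialLinearGroup.trace_conj x, Matrix.trace_fin_two, h11]⟩
    rw [pow_mul]
    by_cases heq : (MulAut.conj x (ρ g)) 0 0 = (MulAut.conj x (ρ g)) 1 1
    · have hdet := (MulAut.conj x (ρ g)).det_two
      rw [h10, mul_zero, sub_zero, ← heq, ← pow_two] at hdet
      rw [hdet, one_pow]
    · obtain ⟨y, hy⟩ := hgen x
      have hle := (h.conj x).orderOf_le (g := g) (h := y) h01 h10 heq hy
      have hpos : 0 < orderOf ((MulAut.conj x (ρ g)) 0 0 ^ 2) :=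
        (((h.conj x).isOfFinOrder (g := g) h10).pow (n := 2)).orderOf_pos
      exact orderOf_dvd_iff_pow_eq_one.1 (Nat.dvd_factorial hpos hle)
  have hfin : (Set.range fun g => (ρ g : Matrix (Fin 2) (Fin 2) k).trace).Finite := by
    have hroots : {z : k | z ^ (2 * Nat.factorial 16) = 1}.Finite := by
      refine (Polynomial.nthRootsFinset (2 * Nat.factorial 16) (1 : k)).finite_toSet.subset
        fun z hz => ?_
      exact (Polynomial.mem_nthRootsFinset (by positivity) 1).2 hz
    refine (hroots.image fun z => z + z⁻¹).subset ?_
    rintro _ ⟨g, rfl⟩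
    obtain ⟨z, hz, ht⟩ := htrace g
    exact ⟨z, hz, ht.symm⟩
  obtain ⟨g, hg⟩ : ∃ g, ρ g 0 1 ≠ 0 := by
    by_contra! hzero
    exact hns (isVirtuallySolvable_of_forall_exists_apply_eq_zero ρ hρ fun g => ⟨0, 1, hzero g⟩)
  obtain ⟨x, h10, h01⟩ := hdiag g
  obtain ⟨y, hy⟩ := hgen x
  have hne : (MulAut.conj x (ρ g)) 0 0 ≠ (MulAut.conj x (ρ g)) 1 1 := by
    intro heq
    generalize hB : MulAut.conj x (ρ g) = B at h10 h01 heq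
    have hcomm : x * B = B * x := by
      ext i j
      rw [SpecialLinearGroup.mul_apply_two, SpecialLinearGroup.mul_apply_two]
      fin_cases i <;> fin_cases j <;> simp [h10, h01, heq, mul_comm]
    have hgB : ρ g = B := by
      rw [← mul_left_cancel_iff (a := x), hcomm, ← hB, MulAut.conj_apply, inv_mul_cancel_right]
    exact hg (hgB ▸ h01)
  have : Finite G := finite_of_finite_trace (hinj x) (g := g) (h := y) h01 h10 hne hy (by
    convert hfin using 3
    exact SpecialLinearGroup.trace_conj x _)
  exact hns .of_finite

theorem strongTitsAlternative_units_matrix (k : Type*) [Field k] [CharZero k] :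
    StrongTitsAlternative (Matrix (Fin 2) (Fin 2) k)ˣ := by
  let Ω := AlgebraicClosure k
  have hSL : StrongTitsAlternative (SpecialLinearGroup (Fin 2) Ω) := fun S =>
    titsDichotomy_of_specialLinearGroup S.subtype S.subtype_injective
  have hprod : StrongTitsAlternative (SpecialLinearGroup (Fin 2) Ω × Ωˣ) := by
    refine hSL.of_isSolvable_ker (MonoidHom.fst _ _) ?_
    refine Group.isSolvable_of_comm fun a b => Subtype.ext (Prod.ext ?_ (mul_comm _ _))
    have ha : a.1.1 = 1 := a.2
    have hb : b.1.1 = 1 := b.2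
    simp [ha, hb]
  let f : SpecialLinearGroup (Fin 2) Ω × Ωˣ →* (Matrix (Fin 2) (Fin 2) Ω)ˣ :=
    MonoidHom.noncommCoprod SpecialLinearGroup.toGL
      (Units.map (Matrix.scalar (Fin 2)).toMonoidHom) fun A c => Units.ext
        (Matrix.scalar_commute _ (Commute.all _) _).symm.eq
  have hGL : StrongTitsAlternative (Matrix (Fin 2) (Fin 2) Ω)ˣ := by
    refine hprod.of_surjective f ?_ ?_
    · intro B
      obtain ⟨c, hc⟩ := IsAlgClosed.exists_pow_nat_eq (B : Matrix (Fin 2) (Fin 2) Ω).det two_pos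
      have hdet : (B : Matrix (Fin 2) (Fin 2) Ω).det ≠ 0 :=
        ((Matrix.isUnit_iff_isUnit_det _).1 B.isUnit).ne_zero
      have hc0 : c ≠ 0 := by
        rintro rfl
        exact hdet (by rw [← hc]; simp)
      refine ⟨(⟨c⁻¹ • B, ?_⟩, Units.mk0 c hc0), Units.ext ?_⟩
      · rw [Matrix.det_smul, Fintype.card_fin, ← hc, ← mul_pow, inv_mul_cancel₀ hc0, one_pow]
      · ext i j
        change (c⁻¹ • (B : Matrix (Fin 2) (Fin 2) Ω) * Matrix.scalar (Fin 2) c) i j = B i j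
        simp only [Matrix.scalar_apply, Matrix.mul_diagonal, Matrix.smul_apply, smul_eq_mul]
        rw [mul_right_comm, inv_mul_cancel₀ hc0, one_mul]
    · rintro ⟨A, c⟩ h
      have hA : (c : Ω) • (A : Matrix (Fin 2) (Fin 2) Ω) = 1 := by
        have : (A : Matrix (Fin 2) (Fin 2) Ω) * Matrix.scalar (Fin 2) (c : Ω) = 1 :=
          congrArg Units.val h
        rw [← this]
        ext i j
        simp [mul_comm]
      have hc : (c : Ω) ^ 2 = 1 := by
        simpa using congrArg Matrix.det hA
      refine ⟨2, two_ne_zero, Prod.ext (Subtype.ext ?_) (Units.ext hc)⟩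
      have := congrArg (· ^ 2) hA
      simpa [smul_pow, hc] using this
  exact hGL.of_injective (Units.map (algebraMap k Ω).mapMatrix.toMonoidHom)
    (Units.map_injective (Matrix.map_injective (algebraMap k Ω).injective))

end LinearGroups

/-- `C = ⟨K ∪ H⟩`, for `k` of characteristic zero, satisfies the strong Tits
alternative. -/
theorem Cgroup_strongTitsAlternative (k : Type*) [Field k] [CharZero k] :
    StrongTitsAlternative ↥(Cgroup k) :=
  Cgroup_strongTitsAlternative_of_units_matrix k (strongTitsAlternative_units_matrix k)
end

section
/- Let k be a field. The set N of k-algebra automorphisms of k[x1,x2,x3] of the form (a x1 + P(x2,x3), x2, x3), with a ∈ k nonzero and P ∈ k[x2,x3], is a subgroup of the automorphism group of k[x1,x2,x3]; it is solvable of derived length at most 2, and it is a normal subgroup of B' = ⟨B ∪ H⟩. -/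
open MvPolynomial

/-- Membership in the subgroup `B`: automorphisms of the form
`(a x₁ + P(x₂,x₃), b x₂ + c x₃ + d, b' x₂ + c' x₃ + d')` with `a ≠ 0`, `bc' - b'c ≠ 0`. -/
def IsB (k : Type*) [Field k]
    (f : MvPolynomial (Fin 3) k ≃ₐ[k] MvPolynomial (Fin 3) k) : Prop :=
  ∃ (a b c d b' c' d' : k) (P : MvPolynomial (Fin 3) k),
    a ≠ 0 ∧ b * c' - b' * c ≠ 0 ∧ P ∈ supported k ({1, 2} : Set (Fin 3)) ∧
    f (X 0) = C a * X 0 + P ∧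
    f (X 1) = C b * X 1 + C c * X 2 + C d ∧
    f (X 2) = C b' * X 1 + C c' * X 2 + C d'

/-- The subgroup `B' = ⟨B ∪ H⟩`. -/
noncomputable def Bprime (k : Type*) [Field k] :
    Subgroup (MvPolynomial (Fin 3) k ≃ₐ[k] MvPolynomial (Fin 3) k) :=
  Subgroup.closure {f | IsB k f ∨ IsH k f}

/-- The set of automorphisms of the form `(a x₁ + P(x₂,x₃), x₂, x₃)` with `a ≠ 0`. -/
def NSet (k : Type*) [Field k] :
    Set (MvPolynomial (Fin 3) k ≃ₐ[k] MvPolynomial (Fin 3) k) :=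
  {f | ∃ (a : k) (P : MvPolynomial (Fin 3) k),
    a ≠ 0 ∧ P ∈ supported k ({1, 2} : Set (Fin 3)) ∧
    f (X 0) = C a * X 0 + P ∧ f (X 1) = X 1 ∧ f (X 2) = X 2}

section

variable {k : Type*} [Field k]

/-- The automorphisms `(a x₁ + P(x₂,x₃), g₂, g₃)` with `a ≠ 0` that preserve the
subalgebra `k[x₂,x₃]`. -/
noncomputable def triangularSubgroup (k : Type*) [Field k] :
    Subgroup (MvPolynomial (Fin 3) k ≃ₐ[k] MvPolynomial (Fin 3) k) where
  carrier := {f | (∀ p, f p ∈ supported k ({1, 2} : Set (Fin 3)) ↔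
      p ∈ supported k ({1, 2} : Set (Fin 3))) ∧
    ∃ (a : k) (P : MvPolynomial (Fin 3) k), a ≠ 0 ∧
      P ∈ supported k ({1, 2} : Set (Fin 3)) ∧ f (X 0) = C a * X 0 + P}
  one_mem' := ⟨fun _ => Iff.rfl, 1, 0, one_ne_zero, zero_mem _, by simp⟩
  mul_mem' := by
    rintro f g ⟨hf, a, P, ha, hP, hfX⟩ ⟨hg, b, Q, hb, hQ, hgX⟩
    refine ⟨fun p => (hf (g p)).trans (hg p), b * a, C b * P + f Q, mul_ne_zero hb ha,
      add_mem (mul_mem (Subalgebra.algebraMap_mem _ b) hP) ((hf Q).2 hQ), ?_⟩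
    have hC : f (C b) = C b := f.commutes b
    rw [AlgEquiv.mul_apply, hgX, map_add, map_mul, hC, hfX, C_mul]
    ring
  inv_mem' := by
    rintro f ⟨hf, a, P, ha, hP, hfX⟩
    have hinv : ∀ p, f (f⁻¹ p) = p := f.apply_symm_apply
    have hf' : ∀ p, f⁻¹ p ∈ supported k ({1, 2} : Set (Fin 3)) ↔
        p ∈ supported k ({1, 2} : Set (Fin 3)) := fun p => by
      rw [← hf (f⁻¹ p), hinv]
    refine ⟨hf', a⁻¹, -(C a⁻¹ * f⁻¹ P), inv_ne_zero ha,
      neg_mem (mul_mem (Subalgebra.algebraMap_mem _ a⁻¹) ((hf' P).2 hP)), ?_⟩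
    apply f.injective
    have hC : f (C a⁻¹) = C a⁻¹ := f.commutes _
    have hCC : (C a⁻¹ * C a : MvPolynomial (Fin 3) k) = 1 := by
      rw [← C_mul, inv_mul_cancel₀ ha, C_1]
    rw [hinv, map_add, map_neg, map_mul, map_mul, hinv, hC, hfX]
    linear_combination (-X 0) * hCC

lemma supported_pair_le {A : Subalgebra k (MvPolynomial (Fin 3) k)} (h₁ : X 1 ∈ A)
    (h₂ : X 2 ∈ A) : supported k ({1, 2} : Set (Fin 3)) ≤ A := by
  refine Algebra.adjoin_le ?_
  rintro _ ⟨i, rfl | rfl, rfl⟩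
  exacts [h₁, h₂]

lemma apply_mem_supported_pair_iff {f : MvPolynomial (Fin 3) k ≃ₐ[k] MvPolynomial (Fin 3) k}
    (h₁ : f (X 1) ∈ supported k ({1, 2} : Set (Fin 3)))
    (h₂ : f (X 2) ∈ supported k ({1, 2} : Set (Fin 3)))
    (h₁' : (X 1 : MvPolynomial (Fin 3) k) ∈ (supported k ({1, 2} : Set (Fin 3))).map f.toAlgHom)
    (h₂' : (X 2 : MvPolynomial (Fin 3) k) ∈ (supported k ({1, 2} : Set (Fin 3))).map f.toAlgHom)
    (p : MvPolynomial (Fin 3) k) :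
    f p ∈ supported k ({1, 2} : Set (Fin 3)) ↔ p ∈ supported k ({1, 2} : Set (Fin 3)) := by
  constructor
  · intro hp
    obtain ⟨q, hq, hqp⟩ := supported_pair_le h₁' h₂' hp
    rwa [← f.injective hqp]
  · intro hp
    exact supported_pair_le
      (A := (supported k ({1, 2} : Set (Fin 3))).comap f.toAlgHom) h₁ h₂ hp

lemma X_one_mem_supported_pair :
    (X 1 : MvPolynomial (Fin 3) k) ∈ supported k ({1, 2} : Set (Fin 3)) :=
  Algebra.subset_adjoin ⟨1, by simp, rfl⟩

lemma X_two_mem_supported_pair :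
    (X 2 : MvPolynomial (Fin 3) k) ∈ supported k ({1, 2} : Set (Fin 3)) :=
  Algebra.subset_adjoin ⟨2, by simp, rfl⟩

lemma mem_of_C_mul_mem {A : Subalgebra k (MvPolynomial (Fin 3) k)} {a : k} (ha : a ≠ 0)
    {p : MvPolynomial (Fin 3) k} (h : C a * p ∈ A) : p ∈ A := by
  have := mul_mem (Subalgebra.algebraMap_mem A a⁻¹) h
  rwa [algebraMap_eq, ← mul_assoc, ← C_mul, inv_mul_cancel₀ ha, C_1, one_mul] at this

lemma IsB.mem_triangularSubgroup {f : MvPolynomial (Fin 3) k ≃ₐ[k] MvPolynomial (Fin 3) k}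
    (hf : IsB k f) : f ∈ triangularSubgroup k := by
  obtain ⟨a, b, c, d, b', c', d', P, ha, hdet, hP, h0, h1, h2⟩ := hf
  have hC : ∀ (A : Subalgebra k (MvPolynomial (Fin 3) k)) (r : k), C r ∈ A :=
    fun A r => A.algebraMap_mem r
  have hX1 := X_one_mem_supported_pair (k := k)
  have hX2 := X_two_mem_supported_pair (k := k)
  have m1 : f (X 1) ∈ (supported k ({1, 2} : Set (Fin 3))).map f.toAlgHom :=
    ⟨_, hX1, rfl⟩
  have m2 : f (X 2) ∈ (supported k ({1, 2} : Set (Fin 3))).map f.toAlgHom :=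
    ⟨_, hX2, rfl⟩
  refine ⟨apply_mem_supported_pair_iff ?_ ?_ ?_ ?_, a, P, ha, hP, h0⟩
  · rw [h1]
    exact add_mem (add_mem (mul_mem (hC _ _) hX1) (mul_mem (hC _ _) hX2)) (hC _ _)
  · rw [h2]
    exact add_mem (add_mem (mul_mem (hC _ _) hX1) (mul_mem (hC _ _) hX2)) (hC _ _)
  · refine mem_of_C_mul_mem hdet ?_
    have : C (b * c' - b' * c) * X 1 = C c' * (f (X 1) - C d) - C c * (f (X 2) - C d') := by
      rw [h1, h2]
      simp only [C_sub, C_mul]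
      ring
    rw [this]
    exact sub_mem (mul_mem (hC _ _) (sub_mem m1 (hC _ _)))
      (mul_mem (hC _ _) (sub_mem m2 (hC _ _)))
  · refine mem_of_C_mul_mem hdet ?_
    have : C (b * c' - b' * c) * X 2 = C b * (f (X 2) - C d') - C b' * (f (X 1) - C d) := by
      rw [h1, h2]
      simp only [C_sub, C_mul]
      ring
    rw [this]
    exact sub_mem (mul_mem (hC _ _) (sub_mem m2 (hC _ _)))
      (mul_mem (hC _ _) (sub_mem m1 (hC _ _)))

lemma IsH.mem_triangularSubgroup {f : MvPolynomial (Fin 3) k ≃ₐ[k] MvPolynomial (Fin 3) k}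
    (hf : IsH k f) : f ∈ triangularSubgroup k := by
  obtain ⟨a, b, c, d, P, Q, ha, hb, hc, hP, hQ, h0, h1, h2⟩ := hf
  have hC : ∀ (A : Subalgebra k (MvPolynomial (Fin 3) k)) (r : k), C r ∈ A :=
    fun A r => A.algebraMap_mem r
  have hX1 := X_one_mem_supported_pair (k := k)
  have hX2 := X_two_mem_supported_pair (k := k)
  have m1 : f (X 1) ∈ (supported k ({1, 2} : Set (Fin 3))).map f.toAlgHom :=
    ⟨_, hX1, rfl⟩
  have m2 : f (X 2) ∈ (supported k ({1, 2} : Set (Fin 3))).map f.toAlgHom :=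
    ⟨_, hX2, rfl⟩
  have mX2 : (X 2 : MvPolynomial (Fin 3) k) ∈
      (supported k ({1, 2} : Set (Fin 3))).map f.toAlgHom := by
    refine mem_of_C_mul_mem hc ?_
    rw [eq_sub_of_add_eq h2.symm]
    exact sub_mem m2 (hC _ _)
  have mQ : Q ∈ (supported k ({1, 2} : Set (Fin 3))).map f.toAlgHom := by
    refine Algebra.adjoin_le ?_ hQ
    rintro _ ⟨i, rfl, rfl⟩
    exact mX2
  refine ⟨apply_mem_supported_pair_iff ?_ ?_ ?_ mX2, a, P, ha, hP, h0⟩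
  · rw [h1]
    exact add_mem (mul_mem (hC _ _) hX1) (supported_mono (by simp) hQ)
  · rw [h2]
    exact add_mem (mul_mem (hC _ _) hX2) (hC _ _)
  · refine mem_of_C_mul_mem hb ?_
    rw [eq_sub_of_add_eq h1.symm]
    exact sub_mem m1 mQ

lemma Bprime_le_triangularSubgroup : Bprime k ≤ triangularSubgroup k :=
  (Subgroup.closure_le _).2 fun _ hf =>
    hf.elim IsB.mem_triangularSubgroup IsH.mem_triangularSubgroup

/-- The automorphisms fixing `k[x₂,x₃]` pointwise. -/
noncomputable def pairFixingSubgroup (k : Type*) [Field k] :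
    Subgroup (MvPolynomial (Fin 3) k ≃ₐ[k] MvPolynomial (Fin 3) k) :=
  fixingSubgroup (MvPolynomial (Fin 3) k ≃ₐ[k] MvPolynomial (Fin 3) k)
    (supported k ({1, 2} : Set (Fin 3)) : Set (MvPolynomial (Fin 3) k))

lemma mem_pairFixingSubgroup {f : MvPolynomial (Fin 3) k ≃ₐ[k] MvPolynomial (Fin 3) k} :
    f ∈ pairFixingSubgroup k ↔ ∀ p ∈ supported k ({1, 2} : Set (Fin 3)), f p = p :=
  mem_fixingSubgroup_iff _

lemma mem_pairFixingSubgroup_iff_apply_X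
    {f : MvPolynomial (Fin 3) k ≃ₐ[k] MvPolynomial (Fin 3) k} :
    f ∈ pairFixingSubgroup k ↔ f (X 1) = X 1 ∧ f (X 2) = X 2 := by
  rw [mem_pairFixingSubgroup]
  refine ⟨fun h => ⟨h _ X_one_mem_supported_pair, h _ X_two_mem_supported_pair⟩, ?_⟩
  rintro ⟨h₁, h₂⟩ p hp
  exact supported_pair_le
    (A := AlgHom.equalizer f.toAlgHom (AlgHom.id k (MvPolynomial (Fin 3) k))) h₁ h₂ hp

lemma coe_triangularSubgroup_inf_pairFixingSubgroup :
    ((triangularSubgroup k ⊓ pairFixingSubgroup k :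
      Subgroup (MvPolynomial (Fin 3) k ≃ₐ[k] MvPolynomial (Fin 3) k)) : Set _) = NSet k := by
  ext f
  constructor
  · rintro ⟨⟨-, a, P, ha, hP, h0⟩, hfix⟩
    exact ⟨a, P, ha, hP, h0, mem_pairFixingSubgroup_iff_apply_X.1 hfix⟩
  · rintro ⟨a, P, ha, hP, h0, h1, h2⟩
    refine ⟨⟨apply_mem_supported_pair_iff ?_ ?_ ⟨X 1, X_one_mem_supported_pair, h1⟩
      ⟨X 2, X_two_mem_supported_pair, h2⟩, a, P, ha, hP, h0⟩,
      mem_pairFixingSubgroup_iff_apply_X.2 ⟨h1, h2⟩⟩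
    · rw [h1]
      exact X_one_mem_supported_pair
    · rw [h2]
      exact X_two_mem_supported_pair

lemma NSet_subset_Bprime : NSet k ⊆ Bprime k := by
  rintro f ⟨a, P, ha, hP, h0, h1, h2⟩
  exact Subgroup.subset_closure
    (Or.inl ⟨a, 1, 0, 0, 0, 1, 0, P, ha, by simp, hP, h0, by simp [h1], by simp [h2]⟩)

lemma conj_mem_pairFixingSubgroup {f g : MvPolynomial (Fin 3) k ≃ₐ[k] MvPolynomial (Fin 3) k}
    (hg : g ∈ triangularSubgroup k) (hf : f ∈ pairFixingSubgroup k) :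
    g * f * g⁻¹ ∈ pairFixingSubgroup k := by
  rw [mem_pairFixingSubgroup] at hf ⊢
  intro p hp
  rw [AlgEquiv.mul_apply, AlgEquiv.mul_apply, hf _ (((inv_mem hg).1 p).2 hp)]
  exact g.apply_symm_apply p

/-- The translations `(x₁ + P(x₂,x₃), x₂, x₃)`. -/
noncomputable def translationSubgroup (k : Type*) [Field k] :
    Subgroup (MvPolynomial (Fin 3) k ≃ₐ[k] MvPolynomial (Fin 3) k) where
  carrier := {f | f ∈ pairFixingSubgroup k ∧
    ∃ P ∈ supported k ({1, 2} : Set (Fin 3)), f (X 0) = X 0 + P}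
  one_mem' := ⟨one_mem _, 0, zero_mem _, by simp⟩
  mul_mem' := by
    rintro f g ⟨hf, P, hP, hfX⟩ ⟨hg, Q, hQ, hgX⟩
    refine ⟨mul_mem hf hg, P + Q, add_mem hP hQ, ?_⟩
    rw [AlgEquiv.mul_apply, hgX, map_add, hfX, mem_pairFixingSubgroup.1 hf Q hQ, add_assoc]
  inv_mem' := by
    rintro f ⟨hf, P, hP, hfX⟩
    refine ⟨inv_mem hf, -P, neg_mem hP, f.injective ?_⟩
    rw [map_add, map_neg, mem_pairFixingSubgroup.1 hf P hP, hfX, add_neg_cancel_right]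
    exact f.apply_symm_apply _

lemma commute_of_mem_translationSubgroup
    {f g : MvPolynomial (Fin 3) k ≃ₐ[k] MvPolynomial (Fin 3) k}
    (hf : f ∈ translationSubgroup k) (hg : g ∈ translationSubgroup k) : Commute f g := by
  obtain ⟨hf, P, hP, hfX⟩ := hf
  obtain ⟨hg, Q, hQ, hgX⟩ := hg
  have hfg := mem_pairFixingSubgroup_iff_apply_X.1 hf
  have hgf := mem_pairFixingSubgroup_iff_apply_X.1 hg
  rw [mem_pairFixingSubgroup] at hf hg
  apply AlgEquiv.coe_toAlgHom_injective
  refine MvPolynomial.algHom_ext fun i => ?_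
  fin_cases i
  · change f (g (X 0)) = g (f (X 0))
    rw [hgX, hfX, map_add, map_add, hfX, hgX, hf Q hQ, hg P hP, add_right_comm]
  · change f (g (X 1)) = g (f (X 1))
    rw [hfg.1, hgf.1, hfg.1]
  · change f (g (X 2)) = g (f (X 2))
    rw [hfg.2, hgf.2, hfg.2]

open scoped commutatorElement in
lemma commutatorElement_mem_translationSubgroup
    {f g : MvPolynomial (Fin 3) k ≃ₐ[k] MvPolynomial (Fin 3) k}
    (hft : f ∈ triangularSubgroup k) (hf : f ∈ pairFixingSubgroup k)
    (hgt : g ∈ triangularSubgroup k) (hg : g ∈ pairFixingSubgroup k) :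
    ⁅f, g⁆ ∈ translationSubgroup k := by
  obtain ⟨-, a, P, ha, hP, hfX⟩ := hft
  obtain ⟨-, b, Q, hb, hQ, hgX⟩ := hgt
  have hinv : ∀ {h : MvPolynomial (Fin 3) k ≃ₐ[k] MvPolynomial (Fin 3) k} {c : k}
      {R : MvPolynomial (Fin 3) k}, c ≠ 0 → R ∈ supported k ({1, 2} : Set (Fin 3)) →
      h ∈ pairFixingSubgroup k → h (X 0) = C c * X 0 + R →
      h⁻¹ (X 0) = C c⁻¹ * (X 0 - R) := by
    intro h c R hc hR hh hX
    apply h.injective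
    have hC : h (C c⁻¹) = C c⁻¹ := h.commutes _
    rw [map_mul, map_sub, hC, hX, mem_pairFixingSubgroup.1 hh R hR, add_sub_cancel_right,
      ← mul_assoc, ← C_mul, inv_mul_cancel₀ hc, C_1, one_mul]
    exact h.apply_symm_apply _
  have hC : ∀ (h : MvPolynomial (Fin 3) k ≃ₐ[k] MvPolynomial (Fin 3) k) (r : k),
    h (C r) = C r := fun h r => h.commutes r
  have hCm : ∀ r : k, C r ∈ supported k ({1, 2} : Set (Fin 3)) :=
    fun r => Subalgebra.algebraMap_mem _ r
  refine ⟨?_, C a⁻¹ * P + C b⁻¹ * (C a⁻¹ * (Q - P) - Q),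
    add_mem (mul_mem (hCm _) hP)
      (mul_mem (hCm _) (sub_mem (mul_mem (hCm _) (sub_mem hQ hP)) hQ)), ?_⟩
  · rw [commutatorElement_def]
    exact mul_mem (mul_mem (mul_mem hf hg) (inv_mem hf)) (inv_mem hg)
  · have hfa := hinv ha hP hf hfX
    have hgb := hinv hb hQ hg hgX
    have hf' := mem_pairFixingSubgroup.1 (inv_mem hf)
    rw [mem_pairFixingSubgroup] at hf hg
    have hCa : (C a⁻¹ * C a : MvPolynomial (Fin 3) k) = 1 := by
      rw [← C_mul, inv_mul_cancel₀ ha, C_1]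
    have hCb : (C b⁻¹ * C b : MvPolynomial (Fin 3) k) = 1 := by
      rw [← C_mul, inv_mul_cancel₀ hb, C_1]
    rw [commutatorElement_def, AlgEquiv.mul_apply, AlgEquiv.mul_apply, AlgEquiv.mul_apply, hgb]
    simp only [map_mul, map_sub, map_add, hC, hfa, hgX, hfX, hf' Q hQ, hf Q hQ, hf P hP,
      hg P hP, hg Q hQ]
    linear_combination (C a⁻¹ * (C a * X 0 + P)) * hCb + X 0 * hCa

end

/-- The set `N` of automorphisms `(a x₁ + P(x₂,x₃), x₂, x₃)` is a subgroup of the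
automorphism group of `k[x₁,x₂,x₃]`; it is solvable of derived length at most `2`, and
it is a normal subgroup of `B' = ⟨B ∪ H⟩`. -/
theorem NSet_subgroup_solvable_normal (k : Type*) [Field k] :
    ∃ N : Subgroup (MvPolynomial (Fin 3) k ≃ₐ[k] MvPolynomial (Fin 3) k),
      (N : Set (MvPolynomial (Fin 3) k ≃ₐ[k] MvPolynomial (Fin 3) k)) = NSet k ∧
      derivedSeries ↥N 2 = ⊥ ∧
      N ≤ Bprime k ∧
      ∀ g ∈ Bprime k, ∀ n ∈ N, g * n * g⁻¹ ∈ N := by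
  refine ⟨triangularSubgroup k ⊓ pairFixingSubgroup k,
    coe_triangularSubgroup_inf_pairFixingSubgroup, ?_, ?_, ?_⟩
  · have hle : derivedSeries ↥(triangularSubgroup k ⊓ pairFixingSubgroup k) 1 ≤
        (translationSubgroup k).subgroupOf _ := by
      rw [derivedSeries_succ, Subgroup.commutator_le]
      intro f _ g _
      exact commutatorElement_mem_translationSubgroup f.2.1 f.2.2 g.2.1 g.2.2
    rw [derivedSeries_succ, eq_bot_iff, Subgroup.commutator_le]
    intro f hf g hg
    rw [Subgroup.mem_bot, commutatorElement_eq_one_iff_commute]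
    exact Subtype.ext (commute_of_mem_translationSubgroup (hle hf) (hle hg))
  · rw [← SetLike.coe_subset_coe, coe_triangularSubgroup_inf_pairFixingSubgroup]
    exact NSet_subset_Bprime
  · intro g hg n hn
    have hg' : g ∈ triangularSubgroup k := Bprime_le_triangularSubgroup hg
    rw [Subgroup.mem_inf] at hn ⊢
    exact ⟨mul_mem (mul_mem hg' hn.1) (inv_mem hg'), conj_mem_pairFixingSubgroup hg' hn.2⟩
end
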